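/- arXiv:1602.03479 — 5 statements merged into one kernel-verified Lean document; each statement's English description precedes it below -/
import Mathlib

section
/- Let L be a finite-dimensional real Lie algebra whose Killing form is negative definite. Then every element x of L is a commutator: there exist a, b ∈ L such that x = ⁅a, b⁆. -/
section GotoAux

open scoped InnerProductSpace Topology

variable {E : Type*} [NormedAddCommGroup E] [InnerProductSpace ℝ E]

/-- Solutions of a linear ODE with skew coefficient have constant norm. -/
theorem goto_norm_const (A : E →L[ℝ] E) (hA : ∀ e, ⟪A e, e⟫_ℝ = 0) (v : ℝ → E)
    (hv : ∀ t, HasDerivAt v (A (v t)) t) (t : ℝ) : ‖v t‖ = ‖v 0‖ := by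
  have hd : ∀ t, HasDerivAt (fun t => ⟪v t, v t⟫_ℝ) 0 t := by
    intro t
    have h := (hv t).inner ℝ (hv t)
    have e : ⟪v t, A (v t)⟫_ℝ + ⟪A (v t), v t⟫_ℝ = 0 := by
      rw [real_inner_comm, hA]; simp
    rwa [e] at h
  have hc := is_const_of_deriv_eq_zero (fun t => (hd t).differentiableAt)
    (fun t => (hd t).deriv) t 0
  simp only [real_inner_self_eq_norm_sq] at hc
  exact (sq_eq_sq₀ (norm_nonneg _) (norm_nonneg _)).1 hc

/-- The flow of a continuous linear map. -/
theorem goto_flow [CompleteSpace E] (A : E →L[ℝ] E) (a : E) (t : ℝ) :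
    HasDerivAt (fun t : ℝ => NormedSpace.exp (t • A) a) (A (NormedSpace.exp (t • A) a)) t := by
  have h := hasDerivAt_exp_smul_const' (𝕂 := ℝ) A t
  have := h.clm_apply (hasDerivAt_const t a)
  simpa using this

/-- Second order necessary condition at a global minimum. -/
theorem goto_second (f f' : ℝ → ℝ) (c : ℝ) (hf : ∀ t, HasDerivAt f (f' t) t)
    (hf' : HasDerivAt f' c 0) (hmin : ∀ t, f 0 ≤ f t) : f' 0 = 0 ∧ 0 ≤ c := by
  have hloc : IsLocalMin f 0 := Filter.Eventually.of_forall hmin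
  have h0 : f' 0 = 0 := hloc.hasDerivAt_eq_zero (hf 0)
  refine ⟨h0, ?_⟩
  by_contra! hc
  have hd : deriv f = f' := funext fun t => (hf t).deriv
  have hmax : IsLocalMax f 0 := isLocalMax_of_deriv_deriv_neg
    (by rw [hd, hf'.deriv]; exact hc) (by rw [hd]; exact h0) (hf 0).continuousAt
  have he : f =ᶠ[𝓝 0] fun _ => f 0 := by
    filter_upwards [hmax] with t ht
    exact le_antisymm ht (hmin t)
  have h1 : deriv f =ᶠ[𝓝 0] deriv (fun _ => f 0) := he.deriv
  have h2 := h1.deriv_eq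
  rw [hd, hf'.deriv] at h2
  simp at h2
  linarith

/-- Main argument, phrased with an abstract bracket on a Euclidean space. -/
theorem goto_main [FiniteDimensional ℝ E] (br : E →L[ℝ] E →L[ℝ] E)
    (hself : ∀ a, br a a = 0)
    (hskew : ∀ a b, br a b = - br b a)
    (hjac : ∀ a b c, br a (br b c) = br (br a b) c + br b (br a c))
    (hinv : ∀ a b c, ⟪br a b, c⟫_ℝ = - ⟪b, br a c⟫_ℝ)
    (htr : ∀ a b, LinearMap.trace ℝ E ((br a : E →ₗ[ℝ] E) ∘ₗ (br b : E →ₗ[ℝ] E)) = - ⟪a, b⟫_ℝ)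
    (h : E) (hreg : ∀ a b, br h a = 0 → br h b = 0 → br a b = 0) (x : E) :
    ∃ a b, x = br a b := by
  have hcomp : CompleteSpace E := FiniteDimensional.complete ℝ E
  -- ranges and kernels
  have hortho : ∀ a y, (∀ k, br a k = 0 → ⟪k, y⟫_ℝ = 0) → ∃ m, br a m = y := by
    intro a y hy
    have h1 : (br a : E →L[ℝ] E).rangeᗮ ≤ (br a : E →L[ℝ] E).ker := by
      intro k hk
      rw [Submodule.mem_orthogonal] at hk
      have h2 : ∀ m, ⟪m, br a k⟫_ℝ = 0 := by
        intro m
        have h3 := hk (br a m) ⟨m, rfl⟩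
        rw [hinv] at h3
        linarith
      have := h2 (br a k)
      rw [inner_self_eq_zero] at this
      simpa using this
    have h2 : y ∈ (br a : E →L[ℝ] E).rangeᗮᗮ := by
      rw [Submodule.mem_orthogonal]
      intro k hk
      exact hy k (by simpa using h1 hk)
    rw [Submodule.orthogonal_orthogonal] at h2
    obtain ⟨m, hm⟩ := h2
    exact ⟨m, hm⟩
  have hsk0 : ∀ N e, ⟪br N e, e⟫_ℝ = 0 := by
    intro N e
    have h1 := hinv N e e
    rw [real_inner_comm (br N e) e] at h1
    linarith
  let T : Submodule ℝ E := (br h : E →L[ℝ] E).ker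
  have hT : ∀ a, a ∈ T ↔ br h a = 0 := fun a => by simp [T]
  let P : E →L[ℝ] E := T.starProjection
  have hPmem : ∀ e, P e ∈ T := fun e => Submodule.starProjection_apply_mem _ _
  have hPin : ∀ e k, k ∈ T → ⟪P e, k⟫_ℝ = ⟪e, k⟫_ℝ := by
    intro e k hk
    have h1 := T.starProjection_inner_eq_zero e k hk
    rw [inner_sub_left] at h1
    change ⟪T.starProjection e, k⟫_ℝ = _
    linarith
  let K : Set (E →L[ℝ] E) := {g | (∀ a b, g (br a b) = br (g a) (g b)) ∧ ∀ a, ‖g a‖ = ‖a‖}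
  have hKc : IsCompact K := by
    have : ProperSpace (E →L[ℝ] E) := FiniteDimensional.proper ℝ _
    apply Metric.isCompact_of_isClosed_isBounded
    · have hKe : K = (⋂ a, ⋂ b, {g : E →L[ℝ] E | g (br a b) = br (g a) (g b)}) ∩
          ⋂ a, {g : E →L[ℝ] E | ‖g a‖ = ‖a‖} := by
        ext g
        simp [K]
      rw [hKe]
      apply IsClosed.inter
      · refine isClosed_iInter fun a => isClosed_iInter fun b => isClosed_eq ?_ ?_ <;> fun_prop
      · refine isClosed_iInter fun a => isClosed_eq ?_ ?_ <;> fun_prop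
    · rw [isBounded_iff_forall_norm_le]
      refine ⟨1, fun g hg => g.opNorm_le_bound zero_le_one fun a => ?_⟩
      rw [hg.2 a, one_mul]
  have hK1 : (1 : E →L[ℝ] E) ∈ K := ⟨fun a b => by simp, fun a => by simp⟩
  have hKexp : ∀ N (t : ℝ), NormedSpace.exp (t • br N) ∈ K := by
    intro N t
    constructor
    · intro a b
      have h1 := goto_norm_const (br N) (hsk0 N)
        (fun t => NormedSpace.exp (t • br N) (br a b)
          - br (NormedSpace.exp (t • br N) a) (NormedSpace.exp (t • br N) b)) (by
            intro t
            have d1 := goto_flow (br N) (br a b) t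
            have d2 := goto_flow (br N) a t
            have d3 := goto_flow (br N) b t
            have d4 := (br.hasFDerivAt.comp_hasDerivAt t d2).clm_apply d3
            have d5 := d1.sub d4
            refine d5.congr_deriv ?_
            rw [map_sub, hjac]
            rfl) t
      simp only [zero_smul, NormedSpace.exp_zero, one_apply_eq_self, sub_self,
        norm_zero, norm_eq_zero] at h1
      exact sub_eq_zero.1 h1
    · intro a
      have h1 := goto_norm_const (br N) (hsk0 N) _ (goto_flow (br N) a) t
      simpa using h1
  obtain ⟨g, hgK, hgmin⟩ := hKc.exists_isMinOn ⟨1, hK1⟩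
    (f := fun g : E →L[ℝ] E => ⟪P (g x), g x⟫_ℝ) (by fun_prop)
  set y := g x with hy
  have hvar : ∀ N, 2 * ⟪P y, br N y⟫_ℝ = 0 ∧
      0 ≤ 2 * (⟪P (br N y), br N y⟫_ℝ + ⟪P y, br N (br N y)⟫_ℝ) := by
    intro N
    let u : ℝ → E := fun t => NormedSpace.exp (t • br N) y
    have hu : ∀ t, HasDerivAt u (br N (u t)) t := goto_flow (br N) y
    have hu0 : u 0 = y := by simp [u]
    have hPs : ∀ a b, ⟪P a, b⟫_ℝ = ⟪P b, a⟫_ℝ := by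
      intro a b
      rw [real_inner_comm, ← hPin b (P a) (hPmem a), real_inner_comm, hPin a _ (hPmem b),
        real_inner_comm]
    have hPu : ∀ t, HasDerivAt (fun t => P (u t)) (P (br N (u t))) t := fun t =>
      P.hasFDerivAt.comp_hasDerivAt t (hu t)
    have hNu : ∀ t, HasDerivAt (fun t => br N (u t)) (br N (br N (u t))) t := fun t =>
      (br N).hasFDerivAt.comp_hasDerivAt t (hu t)
    have := goto_second (fun t => ⟪P (u t), u t⟫_ℝ) (fun t => 2 * ⟪P (u t), br N (u t)⟫_ℝ)
      (2 * (⟪P (br N y), br N y⟫_ℝ + ⟪P y, br N (br N y)⟫_ℝ)) (by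
        intro t
        refine ((hPu t).inner ℝ (hu t)).congr_deriv ?_
        rw [hPs (br N (u t)) (u t)]; ring) (by
        refine (((hPu 0).inner ℝ (hNu 0)).const_mul 2).congr_deriv ?_
        rw [hu0]; ring) (by
        intro t
        have hk := hKexp N t
        have h2 : NormedSpace.exp (t • br N) * g ∈ K := by
          refine ⟨fun a b => ?_, fun a => ?_⟩
          · change NormedSpace.exp (t • br N) (g (br a b)) =
              br (NormedSpace.exp (t • br N) (g a)) (NormedSpace.exp (t • br N) (g b))
            rw [hgK.1, hk.1]
          · change ‖NormedSpace.exp (t • br N) (g a)‖ = ‖a‖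
            rw [hk.2, hgK.2]
        have h3 := isMinOn_iff.1 hgmin _ h2
        rw [hu0]
        exact h3)
    rwa [hu0] at this
  set z := P y with hz
  have hzT : z ∈ T := hPmem y
  -- first variation
  have hyz : br z y = 0 := by
    have h1 : ∀ N, ⟪br y z, N⟫_ℝ = 0 := by
      intro N
      have h1 := (hvar N).1
      rw [hskew N y, inner_neg_right] at h1
      rw [hinv]
      linarith
    have h2 := h1 (br y z)
    rw [inner_self_eq_zero] at h2
    rw [hskew, h2, neg_zero]
  have hzc : ∀ k ∈ T, br z k = 0 := fun k hk => hreg z k ((hT z).1 hzT) ((hT k).1 hk)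
  have hcomm : ∀ k, br z (br y k) = br y (br z k) := by
    intro k
    rw [hjac, hyz]; simp
  -- second variation
  have hsec : ∀ m, ⟪br z (br z m), br y (br z m)⟫_ℝ ≤ 0 := by
    intro m
    have h1 := (hvar (br z m)).2
    have h2 : P (br (br z m) y) = 0 := by
      have h3 := hPin (br (br z m) y) _ (hPmem (br (br z m) y))
      have h4 : ∀ k ∈ T, ⟪br (br z m) y, k⟫_ℝ = 0 := by
        intro k hk
        rw [hskew, inner_neg_left, hinv, hinv, hcomm, hzc k hk]
        simp
      rw [h4 _ (hPmem _), inner_self_eq_zero] at h3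
      exact h3
    rw [h2, inner_zero_left, zero_add] at h1
    have h5 := hinv (br z m) z (br (br z m) y)
    rw [hskew (br z m) z, hskew (br z m) y, inner_neg_neg] at h5
    rw [hskew (br z m) y] at h1
    linarith
  have hall : ∀ N, ⟪br z N, br y N⟫_ℝ ≤ 0 := by
    intro N
    let R : Submodule ℝ E := (br z : E →L[ℝ] E).ker
    set k := R.starProjection N with hk
    have hkR : br z k = 0 := by
      have : k ∈ R := Submodule.starProjection_apply_mem _ _
      simpa [R] using this
    obtain ⟨m, hm⟩ := hortho z (N - k) (by
      intro l hl
      rw [real_inner_comm]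
      exact R.starProjection_inner_eq_zero N l (by simpa [R] using hl))
    have hN : N = br z m + k := by rw [hm]; abel
    have h1 := hsec m
    rw [hN, map_add, map_add, hkR, add_zero, inner_add_right]
    rw [hinv z (br z m) (br y k), hcomm, hkR]
    simpa using h1
  have hz0 : z = 0 := by
    let b := stdOrthonormalBasis ℝ E
    have h1 := htr z y
    rw [LinearMap.trace_eq_sum_inner _ b] at h1
    have h2 : ⟪z, z⟫_ℝ = ⟪z, y⟫_ℝ := by
      rw [real_inner_comm y z]
      exact hPin y z hzT
    have h3 : ∑ i, ⟪b i, ((br z : E →ₗ[ℝ] E) ∘ₗ (br y : E →ₗ[ℝ] E)) (b i)⟫_ℝ ≥ 0 := by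
      apply Finset.sum_nonneg
      intro i _
      have h4 := hall (b i)
      rw [hinv] at h4
      simpa using h4
    have h5 : ⟪z, z⟫_ℝ ≤ 0 := by linarith
    exact inner_self_eq_zero.1 (le_antisymm h5 real_inner_self_nonneg)
  -- conclusion
  obtain ⟨c, hc⟩ := hortho h y (by
    intro k hk
    rw [real_inner_comm, ← hPin y k ((hT k).2 hk)]
    change ⟪z, k⟫_ℝ = 0
    rw [hz0, inner_zero_left])
  have hginj : Function.Injective g := by
    rw [injective_iff_map_eq_zero]
    intro a ha
    have := hgK.2 a
    rw [ha, norm_zero] at this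
    exact norm_eq_zero.1 this.symm
  have hgsurj : Function.Surjective g :=
    LinearMap.surjective_of_injective (f := (g : E →ₗ[ℝ] E)) hginj
  obtain ⟨a, ha⟩ := hgsurj h
  obtain ⟨b, hb⟩ := hgsurj c
  refine ⟨a, b, hginj ?_⟩
  rw [hgK.1, ha, hb, hc]

end GotoAux

/-- Existence of an element with abelian centralizer. -/
theorem goto_regular (L : Type*) [LieRing L] [LieAlgebra ℝ L] [FiniteDimensional ℝ L]
    [LieAlgebra.IsKilling ℝ L] :
    ∃ h : L, ∀ a b : L, ⁅h, a⁆ = 0 → ⁅h, b⁆ = 0 → ⁅a, b⁆ = 0 := by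
  obtain ⟨h, hh⟩ := LieAlgebra.exists_isCartanSubalgebra_engel ℝ L
  refine ⟨h, fun a b ha hb => ?_⟩
  have key : ∀ a : L, ⁅h, a⁆ = 0 → a ∈ LieSubalgebra.engel ℝ h := fun a ha =>
    (LieSubalgebra.mem_engel_iff ℝ h a).2 ⟨1, by simpa using ha⟩
  have := LieModule.IsTrivial.trivial (⟨a, key a ha⟩ : LieSubalgebra.engel ℝ h)
    (⟨b, key b hb⟩ : LieSubalgebra.engel ℝ h)
  simpa using congrArg Subtype.val this

/-- Goto's theorem, additive version: in a finite-dimensional real Lie algebra whose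
Killing form is negative definite, every element is a commutator. -/
theorem goto_additive (L : Type*) [LieRing L] [LieAlgebra ℝ L] [FiniteDimensional ℝ L]
    (hneg : ∀ x : L, x ≠ 0 → killingForm ℝ L x x < 0) :
    ∀ x : L, ∃ a b : L, x = ⁅a, b⁆ := by
  intro x
  have hKill : LieAlgebra.IsKilling ℝ L := by
    constructor
    rw [LieSubmodule.eq_bot_iff]
    intro a ha
    by_contra h0
    rw [LieIdeal.mem_killingCompl] at ha
    have := ha a (by simp)
    have h1 := hneg a h0
    linarith
  obtain ⟨h, hreg⟩ := goto_regular L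
  let core : InnerProductSpace.Core ℝ L :=
    { inner := fun a b => - killingForm ℝ L a b
      conj_inner_symm := fun a b => by
        simp [LieModule.traceForm_comm ℝ L L a b]
      re_inner_nonneg := fun a => by
        by_cases h0 : a = 0
        · simp [h0]
        · have := hneg a h0
          simp only [RCLike.re_to_real]
          linarith
      add_left := fun a b c => by simp [add_comm]
      smul_left := fun a b r => by simp
      definite := fun a ha => by
        by_contra h0
        have := hneg a h0
        linarith }
  let _ : NormedAddCommGroup L := core.toNormedAddCommGroup
  let _ : InnerProductSpace ℝ L := InnerProductSpace.ofCore core.toCore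
  have hin : ∀ a b : L, inner ℝ a b = - killingForm ℝ L a b := fun a b => rfl
  let br : L →L[ℝ] L →L[ℝ] L := LinearMap.toContinuousLinearMap
    ((LinearMap.toContinuousLinearMap : (L →ₗ[ℝ] L) ≃ₗ[ℝ] (L →L[ℝ] L)).toLinearMap ∘ₗ
      (LieAlgebra.ad ℝ L : L →ₗ[ℝ] (L →ₗ[ℝ] L)))
  have hbr : ∀ a b, br a b = ⁅a, b⁆ := fun a b => rfl
  have := goto_main br (fun a => by rw [hbr, lie_self])
    (fun a b => by rw [hbr, hbr, lie_skew])
    (fun a b c => by simp only [hbr]; exact leibniz_lie a b c)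
    (fun a b c => by
      simp only [hbr, hin]
      have := LieModule.traceForm_apply_lie_apply ℝ L L b a c
      rw [← lie_skew b a] at this
      simp only [map_neg, LinearMap.neg_apply] at this
      linarith)
    (fun a b => by
      rw [hin, neg_neg]
      rfl) h (by simpa only [hbr] using hreg) x
  simpa only [hbr] using this
end

section
/- Let L be a finite-dimensional real Lie algebra whose Killing form is negative definite, and let C be a Cartan subalgebra of L. Then there exists a regular element a of L such that C is contained in the image of ad(a), i.e. every c ∈ C can be written c = ⁅a, y⁆ for some y ∈ L. -/
set_option linter.unusedSectionVars false

namespace CartanApp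
open Module Filter Topology NormedSpace

section ops
variable {E : Type*} [NormedAddCommGroup E] [InnerProductSpace ℝ E] [FiniteDimensional ℝ E]

/-- kernel as a submodule -/
abbrev kr (T : E →L[ℝ] E) : Submodule ℝ E := LinearMap.ker T.toLinearMap

theorem mem_kr {T : E →L[ℝ] E} {x : E} : x ∈ kr T ↔ T x = 0 := Iff.rfl

/-- If `T` has kernel of dimension `≤ k`, some `B` of rank `≤ k` makes `T + B` invertible. -/
theorem exists_compl (T : E →L[ℝ] E) : ∃ B : E →L[ℝ] E,
    finrank ℝ (LinearMap.range B.toLinearMap) ≤ finrank ℝ (kr T) ∧ kr (T + B) = ⊥ := by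
  classical
  have hd : finrank ℝ (kr T) = finrank ℝ ((LinearMap.range T.toLinearMap)ᗮ : Submodule ℝ E) := by
    have h1 := LinearMap.finrank_range_add_finrank_ker T.toLinearMap
    have h2 := (LinearMap.range T.toLinearMap).finrank_add_finrank_orthogonal
    simp only [kr]
    omega
  let i : kr T ≃ₗ[ℝ] ((LinearMap.range T.toLinearMap)ᗮ : Submodule ℝ E) :=
    LinearEquiv.ofFinrankEq _ _ hd
  obtain ⟨p, hp⟩ := (kr T).subtype.exists_leftInverse_of_injective (Submodule.ker_subtype _)
  have hp' : ∀ x : kr T, p x = x := fun x => LinearMap.congr_fun hp x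
  let B : E →ₗ[ℝ] E := (LinearMap.range T.toLinearMap)ᗮ.subtype ∘ₗ i.toLinearMap ∘ₗ p
  refine ⟨LinearMap.toContinuousLinearMap B, ?_, ?_⟩
  · have : LinearMap.range B ≤ (LinearMap.range T.toLinearMap)ᗮ := by
      rintro _ ⟨x, rfl⟩
      exact (i (p x)).2
    rw [hd]
    exact Submodule.finrank_mono this
  · rw [eq_bot_iff]
    intro x hx
    have hx : T x + B x = 0 := hx
    have hB : B x ∈ (LinearMap.range T.toLinearMap)ᗮ := (i (p x)).2
    have hT : T x ∈ LinearMap.range T.toLinearMap := ⟨x, rfl⟩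
    have h0 : T x = 0 := by
      have h1 : inner ℝ (T x) (B x) = 0 := Submodule.inner_right_of_mem_orthogonal hT hB
      have h2 : B x = - T x := by rw [eq_neg_iff_add_eq_zero, add_comm]; exact hx
      rw [h2, inner_neg_right] at h1
      simpa using h1
    rw [h0, zero_add] at hx
    have h3 : i (p x) = 0 := Subtype.ext hx
    have h4 : p x = 0 := by simpa using h3
    have h5 := hp' ⟨x, h0⟩
    rw [h4] at h5
    exact congrArg Subtype.val h5.symm

theorem finrank_kr_le (T B : E →L[ℝ] E) (h : kr (T + B) = ⊥) :
    finrank ℝ (kr T) ≤ finrank ℝ (LinearMap.range B.toLinearMap) := by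
  let f : kr T →ₗ[ℝ] LinearMap.range B.toLinearMap := B.toLinearMap.rangeRestrict ∘ₗ (kr T).subtype
  refine LinearMap.finrank_le_finrank_of_injective (f := f) ?_
  rw [← LinearMap.ker_eq_bot, eq_bot_iff]
  rintro ⟨x, hx⟩ hfx
  have h1 : B x = 0 := congrArg Subtype.val (show f ⟨x, hx⟩ = 0 from hfx)
  have h2 : x ∈ kr (T + B) := by
    rw [mem_kr] at *
    simp [hx, h1]
  rw [h] at h2
  exact Subtype.ext h2

theorem kr_eq_bot_iff_det (T : E →L[ℝ] E) : kr T = ⊥ ↔ LinearMap.det T.toLinearMap ≠ 0 := by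
  rw [← isUnit_iff_ne_zero, ← LinearMap.isUnit_iff_isUnit_det, LinearMap.isUnit_iff_ker_eq_bot]

theorem analytic_det {T : ℝ → E →L[ℝ] E} (hT : ∀ t, AnalyticAt ℝ T t) :
    ∀ t, AnalyticAt ℝ (fun t => LinearMap.det (T t).toLinearMap) t := by
  intro t
  classical
  let b := Module.finBasis ℝ E
  have : (fun t => LinearMap.det (T t).toLinearMap) =
      fun t => (LinearMap.toMatrix b b (T t).toLinearMap).det := by
    ext t; rw [LinearMap.det_toMatrix]
  rw [this]
  simp only [Matrix.det_apply]
  refine Finset.analyticAt_fun_sum _ fun σ _ => ?_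
  have hc : ∀ i j, AnalyticAt ℝ (fun t => LinearMap.toMatrix b b (T t).toLinearMap i j) t := by
    intro i j
    let ℓ : (E →L[ℝ] E) →ₗ[ℝ] ℝ :=
      { toFun := fun S => LinearMap.toMatrix b b S.toLinearMap i j
        map_add' := by intro x y; simp [LinearMap.toMatrix_apply]
        map_smul' := by intro x y; simp [LinearMap.toMatrix_apply] }
    exact ((LinearMap.toContinuousLinearMap ℓ).analyticAt _).comp (hT t)
  simp only [Units.smul_def, zsmul_eq_mul]
  exact analyticAt_const.mul (Finset.analyticAt_fun_prod _ fun i _ => hc _ _)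

theorem frequently_ker {T : ℝ → E →L[ℝ] E} (hT : ∀ t, AnalyticAt ℝ T t) :
    ∃ᶠ t in 𝓝 (0 : ℝ), finrank ℝ (kr (T t)) ≤ finrank ℝ (kr (T 1)) := by
  obtain ⟨B, hB, hB1⟩ := exists_compl (T 1)
  have han := analytic_det (T := fun t => T t + B) (fun t => (hT t).add analyticAt_const)
  intro hev
  have h0 : ∀ᶠ t in 𝓝 (0 : ℝ), LinearMap.det (T t + B).toLinearMap = 0 := by
    filter_upwards [hev] with t ht
    by_contra hne
    exact ht ((finrank_kr_le _ B ((kr_eq_bot_iff_det _).2 hne)).trans hB)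
  have := AnalyticOnNhd.eqOn_zero_of_preconnected_of_eventuallyEq_zero
    (f := fun t => LinearMap.det (T t + B).toLinearMap) (U := Set.univ) (fun t _ => han t)
    isPreconnected_univ (Set.mem_univ 0) h0 (Set.mem_univ 1)
  exact (kr_eq_bot_iff_det _).1 hB1 this

/-- perturbation of the kernel -/
theorem ker_perturb (T : E →L[ℝ] E) (hT : ∀ x ∈ (kr T)ᗮ, T x ∈ (kr T)ᗮ) :
    ∃ δ > 0, ∀ S : E →L[ℝ] E, ‖S‖ < δ → (∀ x ∈ kr T, S x ∈ kr T) →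
      (∀ x ∈ (kr T)ᗮ, S x ∈ (kr T)ᗮ) → ∀ x, T x + S x = 0 → T x = 0 ∧ S x = 0 := by
  let f : ((kr T)ᗮ : Submodule ℝ E) →ₗ[ℝ] E := T.toLinearMap ∘ₗ (kr T)ᗮ.subtype
  have hf : LinearMap.ker f = ⊥ := by
    rw [eq_bot_iff]
    rintro ⟨x, hx⟩ hfx
    have h1 : x ∈ kr T := hfx
    have : x ∈ kr T ⊓ (kr T)ᗮ := ⟨h1, hx⟩
    rw [Submodule.inf_orthogonal_eq_bot] at this
    exact Subtype.ext this
  obtain ⟨K, hK, hA⟩ := f.exists_antilipschitzWith hf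
  have hK' : (0 : ℝ) < K := hK
  refine ⟨(K : ℝ)⁻¹, by positivity, ?_⟩
  intro S hS h1 h2 x hx
  obtain ⟨y, hy, z, hz, rfl⟩ := (kr T).exists_add_mem_mem_orthogonal x
  have hTy : T y = 0 := hy
  have hS1 := h1 y hy
  have hw : T z + S z = 0 := by
    have ha : T z + S z ∈ (kr T)ᗮ := Submodule.add_mem _ (hT z hz) (h2 z hz)
    have hb : T z + S z ∈ kr T := by
      have : T z + S z = - S y := by
        rw [eq_neg_iff_add_eq_zero, ← hx]; simp [hTy]; abel
      rw [this]; exact Submodule.neg_mem _ hS1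
    have : T z + S z ∈ kr T ⊓ (kr T)ᗮ := ⟨hb, ha⟩
    rw [Submodule.inf_orthogonal_eq_bot] at this
    exact this
  have hz0 : z = 0 := by
    by_contra hne
    have hzp : 0 < ‖z‖ := norm_pos_iff.2 hne
    have h3 : ‖z‖ ≤ K * ‖T z‖ := by
      have := hA.le_mul_dist ⟨z, hz⟩ 0
      simpa [f, dist_eq_norm] using this
    have h4 : ‖T z‖ = ‖S z‖ := by
      rw [eq_neg_of_add_eq_zero_left hw, norm_neg]
    have h5 : ‖S z‖ ≤ ‖S‖ * ‖z‖ := S.le_opNorm z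
    have h6 : K * ‖S‖ < 1 := by
      calc K * ‖S‖ < K * (K : ℝ)⁻¹ := by gcongr
        _ = 1 := by field_simp
    have : ‖z‖ ≤ (K * ‖S‖) * ‖z‖ := by
      calc ‖z‖ ≤ K * ‖T z‖ := h3
        _ ≤ K * (‖S‖ * ‖z‖) := by rw [h4]; gcongr
        _ = _ := by ring
    nlinarith
  subst hz0
  simp only [add_zero] at hx ⊢
  rw [hTy, zero_add] at hx
  exact ⟨hTy, hx⟩

noncomputable instance : NormedAlgebra ℚ (E →L[ℝ] E) := NormedAlgebra.restrictScalars ℚ ℝ _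

theorem hasDerivAt_expT (D : E →L[ℝ] E) (t : ℝ) :
    HasDerivAt (fun t : ℝ => exp (t • D)) (exp (t • D) * D) t := hasDerivAt_exp_smul_const D t

theorem hasDerivAt_expT' (D : E →L[ℝ] E) (t : ℝ) :
    HasDerivAt (fun t : ℝ => exp (t • D)) (D * exp (t • D)) t := hasDerivAt_exp_smul_const' D t

theorem exp_neg_mul (D : E →L[ℝ] E) : exp (-D) * exp D = 1 := by
  rw [← exp_add_of_commute (Commute.neg_left (Commute.refl D)), neg_add_cancel, exp_zero]

theorem exp_mul_neg (D : E →L[ℝ] E) : exp D * exp (-D) = 1 := by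
  simpa using exp_neg_mul (-D)

theorem exp_neg_app (D : E →L[ℝ] E) (x : E) : exp (-D) (exp D x) = x := by
  have := congrArg (fun S : E →L[ℝ] E => S x) (exp_neg_mul D)
  simpa using this

theorem exp_near (ε : ℝ) (hε : 0 < ε) : ∃ δ > 0, ∀ D : E →L[ℝ] E, ‖D‖ < δ → ‖exp D - 1‖ < ε := by
  have h : Continuous (fun D : E →L[ℝ] E => exp D) := exp_continuous
  have h2 := Metric.continuous_iff.1 h 0 ε hε
  obtain ⟨δ, hδ, h3⟩ := h2
  refine ⟨δ, hδ, fun D hD => ?_⟩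
  have := h3 D (by simpa [dist_eq_norm] using hD)
  simpa [dist_eq_norm, exp_zero] using this

theorem exp_fix : ∃ δ > 0, ∀ T : E →L[ℝ] E, ‖T‖ < δ → ∀ x, exp T x = x → T x = 0 := by
  obtain ⟨δ, hδ, h⟩ := exp_near (E := E) (1/2) (by norm_num)
  refine ⟨δ, hδ, fun T hT x hx => ?_⟩
  have hd : ∀ t ∈ Set.Icc (0:ℝ) 1, HasDerivWithinAt (fun t : ℝ => exp (t • T) x - t • T x)
      (exp (t • T) (T x) - T x) (Set.Icc 0 1) t := by
    intro t _
    refine HasDerivAt.hasDerivWithinAt ?_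
    refine HasDerivAt.sub ?_ ?_
    · exact ((hasDerivAt_expT T t).clm_apply (hasDerivAt_const t x)).congr_deriv (by simp)
    · simpa using (hasDerivAt_id t).smul_const (T x)
  have hb : ∀ t ∈ Set.Ico (0:ℝ) 1, ‖exp (t • T) (T x) - T x‖ ≤ 1/2 * ‖T x‖ := by
    intro t ht
    have h1 : ‖t • T‖ < δ := by
      rw [norm_smul, Real.norm_of_nonneg ht.1]
      nlinarith [norm_nonneg T, ht.2]
    have h2 := h _ h1
    have h3 : exp (t • T) (T x) - T x = (exp (t • T) - 1) (T x) := by simp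
    rw [h3]
    exact (ContinuousLinearMap.le_opNorm _ _).trans (by gcongr)
  have := norm_image_sub_le_of_norm_deriv_le_segment_01' hd hb
  simp [hx, exp_zero] at this
  by_contra hne
  have : 0 < ‖T x‖ := norm_pos_iff.2 hne
  linarith

/-- half-turn -/
theorem exp_half_turn (T : E →L[ℝ] E) (h : E) (k : ℝ) (hk : k ≠ 0)
    (hT : T (T h) = -(k ^ 2) • h) : exp ((Real.pi / k) • T) h = - h := by
  let f : ℝ → E := fun t => exp (t • (-T)) (Real.cos (k * t) • h + (Real.sin (k * t) / k) • T h)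
  have hd : ∀ t, HasDerivAt f 0 t := by
    intro t
    have hl : HasDerivAt (fun t => k * t) k t := by simpa using (hasDerivAt_id t).const_mul k
    have h1 : HasDerivAt (fun t => Real.cos (k * t) • h + (Real.sin (k * t) / k) • T h)
        ((-Real.sin (k * t) * k) • h + ((Real.cos (k * t) * k) / k) • T h) t :=
      (hl.cos.smul_const h).add ((hl.sin.div_const k).smul_const (T h))
    refine ((hasDerivAt_expT (-T) t).clm_apply h1).congr_deriv ?_
    have e0 : ∀ x, (exp (t • -T) * -T) x = - exp (t • -T) (T x) := by intro x; simp
    have e2 : Real.cos (k * t) * k / k = Real.cos (k * t) := by field_simp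
    simp only [map_add, map_smul, e0, hT, e2]
    rw [smul_smul, show Real.sin (k * t) / k * -k^2 = -Real.sin (k*t) * k by
      field_simp]
    module
  have hc : f (Real.pi / k) = f 0 :=
    is_const_of_deriv_eq_zero (fun t => (hd t).differentiableAt) (fun t => (hd t).deriv) _ _
  have e3 : k * (Real.pi / k) = Real.pi := by field_simp
  simp only [f, e3, Real.cos_pi, Real.sin_pi] at hc
  simp [exp_zero] at hc
  have := congrArg (fun z => exp ((Real.pi / k) • T) z) hc
  have e4 := exp_neg_app (-((Real.pi / k) • T)) h
  rw [neg_neg] at e4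
  simp only [map_neg] at this
  rw [e4] at this
  exact this.symm
end ops

section lie
variable {E : Type*} [NormedAddCommGroup E] [InnerProductSpace ℝ E] [FiniteDimensional ℝ E]

theorem mul_app (S T : E →L[ℝ] E) (x : E) : (S * T) x = S (T x) := rfl

/-- A compact semisimple Lie algebra structure on a Euclidean space, in unbundled form. -/
structure CLA (E : Type*) [NormedAddCommGroup E] [InnerProductSpace ℝ E]
    [FiniteDimensional ℝ E] where
  br : E →L[ℝ] E →L[ℝ] E
  self : ∀ x, br x x = 0
  jac : ∀ x y z, br x (br y z) = br (br x y) z + br y (br x z)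
  skew : ∀ x y z, inner ℝ (br x y) z = - inner ℝ y (br x z)
  der : ∀ D : E →L[ℝ] E, (∀ x y, D (br x y) = br (D x) y + br x (D y)) → ∃ z, D = br z
  inj : ∀ x, br x = 0 → x = 0
  r : ℕ
  hr : ∀ x, r ≤ finrank ℝ (kr (br x))
  hr' : ∃ x, finrank ℝ (kr (br x)) = r

namespace CLA
variable (G : CLA E)

theorem anti (x y : E) : G.br x y = - G.br y x := by
  have := G.self (x + y)
  simp only [map_add, _root_.add_apply, G.self] at this
  rw [eq_neg_iff_add_eq_zero]
  simpa [add_comm] using this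

/-- failure of `D` to be a derivation -/
noncomputable def gam (D : E →L[ℝ] E) : E →L[ℝ] E →L[ℝ] E :=
  (ContinuousLinearMap.compL ℝ E E E D).comp G.br - G.br.comp D -
    ((ContinuousLinearMap.compL ℝ E E E).flip D).comp G.br

theorem gam_apply (D : E →L[ℝ] E) (x y : E) :
    G.gam D x y = D (G.br x y) - G.br (D x) y - G.br x (D y) := by
  simp [gam]

theorem hasDerivAt_phi (D : E →L[ℝ] E) (x y : E) (t : ℝ) :
    HasDerivAt (fun t : ℝ => exp (t • (-D)) (G.br (exp (t • D) x) (exp (t • D) y)))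
      (- exp (t • (-D)) (G.gam D (exp (t • D) x) (exp (t • D) y))) t := by
  have hx : ∀ x : E, HasDerivAt (fun t : ℝ => exp (t • D) x) (D (exp (t • D) x)) t := fun x =>
    ((hasDerivAt_expT' D t).clm_apply (hasDerivAt_const t x)).congr_deriv (by simp)
  have hb : HasDerivAt (fun t : ℝ => G.br (exp (t • D) x)) (G.br (D (exp (t • D) x))) t :=
    (G.br.hasFDerivAt.comp_hasDerivAt t (hx x))
  refine ((hasDerivAt_expT (-D) t).clm_apply (hb.clm_apply (hx y))).congr_deriv ?_
  have e0 : ∀ x, (exp (t • -D) * -D) x = - exp (t • -D) (D x) := by intro x; simp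
  rw [e0, gam_apply]
  simp only [map_add, map_sub]
  abel

/-- automorphism -/
def IsAut (g : E →L[ℝ] E) : Prop := ∀ x y, g (G.br x y) = G.br (g x) (g y)

theorem isAut_exp_of_gam (D : E →L[ℝ] E) (h : G.gam D = 0) : G.IsAut (exp D) := by
  intro x y
  have hc : (fun t : ℝ => exp (t • (-D)) (G.br (exp (t • D) x) (exp (t • D) y))) 1 =
     (fun t : ℝ => exp (t • (-D)) (G.br (exp (t • D) x) (exp (t • D) y))) 0 :=
    is_const_of_deriv_eq_zero (fun t => (G.hasDerivAt_phi D x y t).differentiableAt)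
      (fun t => by rw [(G.hasDerivAt_phi D x y t).deriv, h]; simp) _ _
  simp [exp_zero] at hc
  have e4 := exp_neg_app (-D) (G.br (exp D x) (exp D y))
  rw [neg_neg, hc] at e4
  exact e4

theorem gam_br (z : E) : G.gam (G.br z) = 0 := by
  ext x y
  rw [gam_apply, G.jac]; simp

theorem isAut_exp (z : E) : G.IsAut (exp (G.br z)) := G.isAut_exp_of_gam _ (G.gam_br z)

theorem log_small : ∃ δ > 0, ∀ D : E →L[ℝ] E, ‖D‖ < δ → G.IsAut (exp D) → ∃ z, D = G.br z := by
  obtain ⟨δ, hδ, h⟩ := exp_near (E := E) (1/10) (by norm_num)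
  refine ⟨δ, hδ, fun D hD hg => ?_⟩
  apply G.der
  suffices hgam : G.gam D = 0 by
    intro x y
    have := G.gam_apply D x y
    rw [hgam] at this
    simp at this
    rw [eq_comm, sub_sub, sub_eq_zero] at this
    exact this
  have key : ∀ x y, ‖G.gam D x y‖ ≤ (1/2 * ‖G.gam D‖) * ‖x‖ * ‖y‖ := by
    intro x y
    have hd : ∀ t ∈ Set.Icc (0:ℝ) 1, HasDerivWithinAt
      (fun t : ℝ => exp (t • (-D)) (G.br (exp (t • D) x) (exp (t • D) y)) + t • G.gam D x y)
      (- exp (t • (-D)) (G.gam D (exp (t • D) x) (exp (t • D) y)) + G.gam D x y)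
      (Set.Icc 0 1) t := by
      intro t _
      refine HasDerivAt.hasDerivWithinAt ?_
      exact (G.hasDerivAt_phi D x y t).add
        (by simpa using (hasDerivAt_id t).smul_const (G.gam D x y))
    have hb : ∀ t ∈ Set.Ico (0:ℝ) 1,
        ‖- exp (t • (-D)) (G.gam D (exp (t • D) x) (exp (t • D) y)) + G.gam D x y‖ ≤
          (1/2 * ‖G.gam D‖) * ‖x‖ * ‖y‖ := by
      intro t ht
      have h1 : ‖t • D‖ < δ := by
        rw [norm_smul, Real.norm_of_nonneg ht.1]
        nlinarith [norm_nonneg D, ht.2]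
      have h1' : ‖t • (-D)‖ < δ := by rw [smul_neg, norm_neg]; exact h1
      have h2 := (h _ h1).le
      have h3 := (h _ h1').le
      set P := exp (t • D) with hP
      set Q := exp (t • (-D)) with hQ
      have a1 : ∀ v, ‖P v - v‖ ≤ 1/10 * ‖v‖ := fun v => by
        have : P v - v = (P - 1) v := by simp
        rw [this]; exact (ContinuousLinearMap.le_opNorm _ _).trans (by gcongr)
      have a2 : ∀ v, ‖Q v - v‖ ≤ 1/10 * ‖v‖ := fun v => by
        have : Q v - v = (Q - 1) v := by simp
        rw [this]; exact (ContinuousLinearMap.le_opNorm _ _).trans (by gcongr)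
      have a3 : ∀ v, ‖P v‖ ≤ 11/10 * ‖v‖ := fun v => by
        have := norm_add_le (P v - v) v
        rw [sub_add_cancel] at this
        linarith [a1 v]
      have b : ∀ u v, ‖G.gam D u v‖ ≤ ‖G.gam D‖ * ‖u‖ * ‖v‖ := fun u v =>
        ContinuousLinearMap.le_opNorm₂ _ _ _
      have e : - Q (G.gam D (P x) (P y)) + G.gam D x y =
          - (Q (G.gam D (P x) (P y)) - G.gam D (P x) (P y)) - (G.gam D (P x - x) (P y)
            + G.gam D x (P y - y)) := by
        simp only [map_sub, _root_.sub_apply]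
        abel
      rw [e]
      set N := ‖G.gam D‖
      have hN : 0 ≤ N := norm_nonneg (G.gam D)
      have c1 : ‖Q (G.gam D (P x) (P y)) - G.gam D (P x) (P y)‖ ≤
          1/10 * (N * (11/10 * ‖x‖) * (11/10 * ‖y‖)) :=
        (a2 _).trans (by gcongr; exact (b _ _).trans (by gcongr <;> apply a3))
      have c2 : ‖G.gam D (P x - x) (P y)‖ ≤ N * (1/10 * ‖x‖) * (11/10 * ‖y‖) :=
        (b _ _).trans (by gcongr; exacts [a1 x, a3 y])
      have c3 : ‖G.gam D x (P y - y)‖ ≤ N * ‖x‖ * (1/10 * ‖y‖) :=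
        (b _ _).trans (by gcongr; exact a1 y)
      refine (norm_sub_le _ _).trans ?_
      rw [norm_neg]
      refine (add_le_add c1 ((norm_add_le _ _).trans (add_le_add c2 c3))).trans ?_
      have : 0 ≤ N * ‖x‖ * ‖y‖ := by positivity
      nlinarith
    have := norm_image_sub_le_of_norm_deriv_le_segment_01' hd hb
    have e1 : exp (-D) (G.br (exp D x) (exp D y)) = G.br x y := by
      rw [← hg x y, exp_neg_app]
    simp [exp_zero] at this
    rw [e1] at this
    simpa using this
  have := ContinuousLinearMap.opNorm_le_bound₂ (G.gam D) (by positivity) key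
  have h0 : ‖G.gam D‖ = 0 := by linarith [norm_nonneg (G.gam D)]
  exact (norm_eq_zero (a := G.gam D)).1 h0

theorem near_one : ∀ᶠ g in 𝓝 (1 : E →L[ℝ] E), G.IsAut g → ∃ z, g = exp (G.br z) := by
  obtain ⟨δ, hδ, h⟩ := G.log_small
  have hs := (hasStrictFDerivAt_exp_zero (𝕂 := ℝ) (𝔸 := E →L[ℝ] E)).map_nhds_eq_of_surj
    (by rw [LinearMap.range_eq_top]; exact fun x => ⟨x, rfl⟩)
  rw [exp_zero] at hs
  rw [← hs, eventually_map]
  filter_upwards [Metric.ball_mem_nhds (0 : E →L[ℝ] E) hδ] with D hD hg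
  obtain ⟨z, hz⟩ := h D (by simpa using hD) hg
  exact ⟨z, by rw [hz]⟩

/-- inner automorphisms -/
def IsInner (g : E →L[ℝ] E) : Prop := ∃ xs : List E, g = (xs.map (fun x => exp (G.br x))).prod

theorem IsInner.one : G.IsInner 1 := ⟨[], rfl⟩

theorem IsInner.exp (x : E) : G.IsInner (exp (G.br x)) := ⟨[x], by simp⟩

variable {G} in
theorem IsInner.mul {g h : E →L[ℝ] E} (hg : G.IsInner g) (hh : G.IsInner h) :
    G.IsInner (g * h) := by
  obtain ⟨xs, rfl⟩ := hg
  obtain ⟨ys, rfl⟩ := hh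
  exact ⟨xs ++ ys, by simp⟩

theorem exp_isometry (x u v : E) :
    inner ℝ (NormedSpace.exp (G.br x) u) (NormedSpace.exp (G.br x) v) = inner ℝ u v := by
  have hx : ∀ u t, HasDerivAt (fun t : ℝ => NormedSpace.exp (t • G.br x) u)
      (G.br x (NormedSpace.exp (t • G.br x) u)) t := fun u t =>
    ((hasDerivAt_expT' (G.br x) t).clm_apply (hasDerivAt_const t u)).congr_deriv (by simp)
  have hd : ∀ t : ℝ, HasDerivAt (fun t : ℝ =>
      inner ℝ (NormedSpace.exp (t • G.br x) u) (NormedSpace.exp (t • G.br x) v)) 0 t := by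
    intro t
    refine ((hx u t).inner ℝ (hx v t)).congr_deriv ?_
    rw [G.skew]; simp
  have hc := is_const_of_deriv_eq_zero (fun t => (hd t).differentiableAt) (fun t => (hd t).deriv) 1 0
  simpa [exp_zero] using hc

variable {G} in
theorem IsInner.isAut {g : E →L[ℝ] E} (hg : G.IsInner g) : G.IsAut g := by
  obtain ⟨xs, rfl⟩ := hg
  induction xs with
  | nil => intro x y; simp
  | cons a xs ih =>
    intro x y
    simp only [List.map_cons, List.prod_cons, mul_app]
    rw [ih, G.isAut_exp]

variable {G} in
theorem IsInner.isom {g : E →L[ℝ] E} (hg : G.IsInner g) (u v : E) :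
    inner ℝ (g u) (g v) = inner ℝ u v := by
  obtain ⟨xs, rfl⟩ := hg
  induction xs with
  | nil => simp
  | cons a xs ih =>
    simp only [List.map_cons, List.prod_cons, mul_app]
    rw [G.exp_isometry, ih]

theorem exp_fix_of_ker (x v : E) (h : G.br x v = 0) : NormedSpace.exp (G.br x) v = v := by
  have hd : ∀ t : ℝ, HasDerivAt (fun t : ℝ => NormedSpace.exp (t • G.br x) v) 0 t := by
    intro t
    exact ((hasDerivAt_expT (G.br x) t).clm_apply (hasDerivAt_const t v)).congr_deriv (by simp [h])
  have hc := is_const_of_deriv_eq_zero (fun t => (hd t).differentiableAt) (fun t => (hd t).deriv) 1 0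
  simpa [exp_zero] using hc

variable {G} in
theorem IsInner.rank_le {g : E →L[ℝ] E} (hg : G.IsInner g) : G.r ≤ finrank ℝ (kr (g - 1)) := by
  obtain ⟨xs, rfl⟩ := hg
  let T : ℝ → E →L[ℝ] E := fun t => (xs.map (fun x => NormedSpace.exp (t • G.br x))).prod
  have han : ∀ t, AnalyticAt ℝ T t := by
    intro t
    simp only [T]
    clear T
    induction xs with
    | nil => exact analyticAt_const
    | cons a xs ih =>
      simp only [List.map_cons, List.prod_cons]
      refine AnalyticAt.mul ?_ ih
      exact (NormedSpace.exp_analytic (𝕂 := ℝ) _).comp (analyticAt_id.smul analyticAt_const)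
  have hin : ∀ t, G.IsInner (T t) := fun t => ⟨xs.map (fun x => t • x), by
    simp [T, Function.comp_def]⟩
  have hT0 : T 0 = 1 := by simp [T, exp_zero]
  have hf := frequently_ker (T := fun t => T t - 1) (fun t => (han t).sub analyticAt_const)
  have hcont : Tendsto T (𝓝 0) (𝓝 1) := by
    have := (han 0).continuousAt.tendsto
    rwa [hT0] at this
  obtain ⟨t, ht1, ht2⟩ := (hf.and_eventually (hcont.eventually G.near_one)).exists
  obtain ⟨z, hz⟩ := ht2 (hin t).isAut
  have h1 : T 1 = (xs.map (fun x => NormedSpace.exp (G.br x))).prod := by simp [T]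
  rw [← h1]
  refine le_trans ?_ ht1
  refine (G.hr z).trans (Submodule.finrank_mono ?_)
  intro v hv
  have hv : G.br z v = 0 := hv
  show (T t - 1) v = 0
  rw [hz]
  simp [G.exp_fix_of_ker z v hv]


theorem exists_small {F : Type*} [NormedAddCommGroup F] [NormedSpace ℝ F] (v : F) (δ : ℝ)
    (hδ : 0 < δ) : ∃ t : ℝ, 0 < t ∧ ‖t • v‖ < δ := by
  have hp : 0 < ‖v‖ + 1 := by positivity
  refine ⟨δ / (‖v‖ + 1), by positivity, ?_⟩
  rw [norm_smul, Real.norm_of_nonneg (by positivity), div_mul_eq_mul_div, div_lt_iff₀ hp]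
  nlinarith

/-- abelian subspaces -/
def Ab (A : Submodule ℝ E) : Prop := ∀ x ∈ A, ∀ y ∈ A, G.br x y = 0

theorem exists_max_ab (V A₀ : Submodule ℝ E) (h0 : A₀ ≤ V) (hA : G.Ab A₀) :
    ∃ A : Submodule ℝ E, A₀ ≤ A ∧ A ≤ V ∧ G.Ab A ∧
      ∀ x ∈ V, (∀ a ∈ A, G.br a x = 0) → x ∈ A := by
  obtain ⟨A, ⟨h1, h2, h3⟩, hmax⟩ := WellFounded.has_min
    (wellFounded_gt : WellFounded ((· > ·) : Submodule ℝ E → Submodule ℝ E → Prop))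
    {A | A₀ ≤ A ∧ A ≤ V ∧ G.Ab A} ⟨A₀, le_rfl, h0, hA⟩
  refine ⟨A, h1, h2, h3, fun x hx hc => ?_⟩
  by_contra hxA
  refine hmax (A ⊔ ℝ ∙ x) ⟨h1.trans le_sup_left, sup_le h2 ?_, ?_⟩ ?_
  · rwa [Submodule.span_singleton_le_iff_mem]
  · intro y hy z hz
    obtain ⟨a, ha, b, hb, rfl⟩ := Submodule.mem_sup.1 hy
    obtain ⟨a', ha', b', hb', rfl⟩ := Submodule.mem_sup.1 hz
    obtain ⟨s, rfl⟩ := Submodule.mem_span_singleton.1 hb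
    obtain ⟨s', rfl⟩ := Submodule.mem_span_singleton.1 hb'
    simp only [map_add, _root_.add_apply, map_smul, _root_.smul_apply]
    rw [h3 a ha a' ha', hc a ha, G.anti x a', hc a' ha', G.self]
    simp
  · refine lt_of_le_of_ne le_sup_left fun h => hxA ?_
    rw [h]
    exact Submodule.mem_sup_right (Submodule.mem_span_singleton_self x)

theorem skew_perp (b : E) (K : Submodule ℝ E) (h : ∀ k ∈ K, G.br b k ∈ K) :
    ∀ x ∈ Kᗮ, G.br b x ∈ Kᗮ := by
  intro x hx
  rw [Submodule.mem_orthogonal] at hx ⊢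
  intro u hu
  have := G.skew b u x
  rw [hx _ (h u hu)] at this
  linarith

theorem ker_comm (a b : E) (hab : G.br a b = 0) : ∀ k ∈ kr (G.br a), G.br b k ∈ kr (G.br a) := by
  intro k hk
  rw [mem_kr] at *
  rw [G.jac, hab, hk]; simp

theorem exists_generic (A : Submodule ℝ E) (hA : G.Ab A) :
    ∃ a ∈ A, ∀ x, G.br a x = 0 → ∀ b ∈ A, G.br b x = 0 := by
  obtain ⟨a, ha, hmin⟩ := WellFounded.has_min
    (measure (fun a : E => finrank ℝ (kr (G.br a)))).wf (A : Set E) ⟨0, A.zero_mem⟩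
  refine ⟨a, ha, fun x hx b hb => ?_⟩
  by_contra hbx
  obtain ⟨δ, hδ, h⟩ := ker_perturb (G.br a) (G.skew_perp a _ (G.ker_comm a a (G.self a)))
  obtain ⟨t, ht, htb⟩ := exists_small (G.br b) δ hδ
  have hkb : ∀ k ∈ kr (G.br a), G.br (t • b) k ∈ kr (G.br a) :=
    G.ker_comm a (t • b) (by rw [map_smul, hA a ha b hb, smul_zero])
  have h2 := h (G.br (t • b)) (by rwa [map_smul]) hkb (G.skew_perp _ _ hkb)
  refine hmin (a + t • b) (A.add_mem ha (A.smul_mem t hb)) ?_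
  refine Submodule.finrank_lt_finrank_of_lt (lt_of_le_of_ne ?_ ?_)
  · intro y hy
    rw [mem_kr, map_add, _root_.add_apply] at hy
    exact (h2 y hy).1
  · intro heq
    have hx' : x ∈ kr (G.br (a + t • b)) := by rw [heq]; exact hx
    rw [mem_kr, map_add, _root_.add_apply] at hx'
    have h3 := (h2 x hx').2
    rw [map_smul, _root_.smul_apply, smul_eq_zero] at h3
    exact h3.elim ht.ne' hbx

theorem perp_ker (a : E) : (kr (G.br a))ᗮ = LinearMap.range (G.br a).toLinearMap := by
  symm
  apply Submodule.eq_of_le_of_finrank_eq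
  · rintro _ ⟨y, rfl⟩
    rw [Submodule.mem_orthogonal]
    intro u hu
    have hu : G.br a u = 0 := hu
    have := G.skew a u y
    rw [hu, inner_zero_left] at this
    show inner ℝ u (G.br a y) = 0
    linarith
  · have h1 := LinearMap.finrank_range_add_finrank_ker (G.br a).toLinearMap
    have h2 := (kr (G.br a)).finrank_add_finrank_orthogonal
    simp only [kr] at *
    omega

theorem finrank_le_of_max (A : Submodule ℝ E) (hA : G.Ab A)
    (hmax : ∀ x, (∀ a ∈ A, G.br a x = 0) → x ∈ A) : finrank ℝ A ≤ G.r := by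
  obtain ⟨a, ha, hgen⟩ := G.exists_generic A hA
  obtain ⟨x0, hx0⟩ := G.hr'
  have : CompleteSpace E := FiniteDimensional.complete ℝ E
  have : CompleteSpace A := FiniteDimensional.complete ℝ A
  have hs : HasStrictFDerivAt (fun p : E × A => NormedSpace.exp (G.br p.1))
      ((1 : (E →L[ℝ] E) →L[ℝ] (E →L[ℝ] E)).comp (G.br.comp (ContinuousLinearMap.fst ℝ E A)))
      ((0 : E), (⟨a, ha⟩ : A)) := by
    have h1 : HasStrictFDerivAt (NormedSpace.exp : (E →L[ℝ] E) → (E →L[ℝ] E))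
      (1 : (E →L[ℝ] E) →L[ℝ] (E →L[ℝ] E)) ((G.br.comp (ContinuousLinearMap.fst ℝ E A))
        ((0 : E), (⟨a, ha⟩ : A))) := by
      simpa using hasStrictFDerivAt_exp_zero (𝕂 := ℝ) (𝔸 := E →L[ℝ] E)
    exact h1.comp _ (G.br.comp (ContinuousLinearMap.fst ℝ E A)).hasStrictFDerivAt
  have hs2 := hs.clm_apply (A.subtypeL.comp (ContinuousLinearMap.snd ℝ E A)).hasStrictFDerivAt
  have hmap := hs2.map_nhds_eq_of_surj (by
    rw [LinearMap.range_eq_top]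
    intro x
    obtain ⟨z, hz, w, hw, rfl⟩ := (kr (G.br a)).exists_add_mem_mem_orthogonal x
    rw [G.perp_ker] at hw
    obtain ⟨y, rfl⟩ := hw
    have hzA : z ∈ A := hmax z (hgen z hz)
    refine ⟨(-y, ⟨z, hzA⟩), ?_⟩
    have := G.anti a y
    simp [exp_zero, this])
  have hev : ∀ᶠ x in 𝓝 a, ∃ y : E, ∃ b ∈ A, x = NormedSpace.exp (G.br y) b := by
    have e : (fun p : E × A => NormedSpace.exp (G.br p.1)
        ((A.subtypeL.comp (ContinuousLinearMap.snd ℝ E A)) p)) ((0 : E), (⟨a, ha⟩ : A)) = a := by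
      simp [exp_zero]
    have hmap2 := hmap.trans (congrArg 𝓝 e)
    rw [← hmap2, eventually_map]
    exact Eventually.of_forall fun p => ⟨p.1, p.2, p.2.2, rfl⟩
  have hf := frequently_ker (T := fun t : ℝ => G.br (a + t • (x0 - a))) (fun t =>
    (G.br.analyticAt _).comp (analyticAt_const.add (analyticAt_id.smul analyticAt_const)))
  have hc : Tendsto (fun t : ℝ => a + t • (x0 - a)) (𝓝 0) (𝓝 a) := by
    have : Continuous (fun t : ℝ => a + t • (x0 - a)) := by fun_prop
    simpa using this.tendsto 0
  obtain ⟨t, ht1, y, b, hb, ht2⟩ := (hf.and_eventually (hc.eventually hev)).exists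
  have e1 : a + (1 : ℝ) • (x0 - a) = x0 := by simp
  rw [e1, hx0, ht2] at ht1
  refine le_trans ?_ ht1
  let f : A →ₗ[ℝ] kr (G.br (NormedSpace.exp (G.br y) b)) :=
    LinearMap.codRestrict _ ((NormedSpace.exp (G.br y)).toLinearMap ∘ₗ A.subtype) (by
      intro c
      show G.br (NormedSpace.exp (G.br y) b) (NormedSpace.exp (G.br y) c) = 0
      rw [← G.isAut_exp, hA b hb c c.2, map_zero])
  refine LinearMap.finrank_le_finrank_of_injective (f := f) ?_
  intro c d hcd
  have h1 : NormedSpace.exp (G.br y) c = NormedSpace.exp (G.br y) d := congrArg Subtype.val hcd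
  have h2 := congrArg (fun z => NormedSpace.exp (-G.br y) z) h1
  simp only [exp_neg_app] at h2
  exact Subtype.ext h2

variable {G} in
theorem IsInner.inj0 {g : E →L[ℝ] E} (hg : G.IsInner g) (x : E) (hx : g x = 0) : x = 0 := by
  have := hg.isom x x
  rw [hx] at this
  simpa [eq_comm] using this

variable {G} in
theorem IsInner.perp {g : E →L[ℝ] E} (hg : G.IsInner g) (K : Submodule ℝ E)
    (h : ∀ k ∈ K, g k ∈ K) : ∀ x ∈ Kᗮ, g x ∈ Kᗮ := by
  have hinj : Function.Injective g := by
    intro x y hxy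
    rw [← sub_eq_zero]
    exact hg.inj0 _ (by rw [map_sub, hxy, sub_self])
  have hm : K.map g.toLinearMap = K := by
    apply Submodule.eq_of_le_of_finrank_eq
    · rintro _ ⟨k, hk, rfl⟩
      exact h k hk
    · exact (Submodule.equivMapOfInjective g.toLinearMap hinj K).finrank_eq.symm
  intro x hx
  rw [Submodule.mem_orthogonal] at hx ⊢
  intro u hu
  rw [← hm] at hu
  obtain ⟨u', hu', rfl⟩ := hu
  show inner ℝ (g u') (g x) = 0
  rw [hg.isom]
  exact hx u' hu'

variable {G} in
theorem IsInner.exists_fixed {g : E →L[ℝ] E} (hg : G.IsInner g) :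
    ∃ a, finrank ℝ (kr (G.br a)) = G.r ∧ ∀ x, G.br a x = 0 → g x = x := by
  obtain ⟨A, -, hAV, hA, hmax⟩ := G.exists_max_ab (kr (g - 1)) ⊥ bot_le (by
    intro x hx y hy
    rw [Submodule.mem_bot] at hx
    simp [hx])
  have hmem : ∀ x, x ∈ kr (g - 1) ↔ g x = x := by
    intro x; rw [mem_kr]; simp [sub_eq_zero]
  obtain ⟨a, ha, hgen⟩ := G.exists_generic A hA
  obtain ⟨A', hAA', -, hA', hmax'⟩ := G.exists_max_ab ⊤ A le_top hA
  have hA'r := G.finrank_le_of_max A' hA' (fun x => hmax' x trivial)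
  have hga : g a = a := (hmem a).1 (hAV ha)
  obtain ⟨δ, hδ, hpert⟩ := ker_perturb (g - 1) (by
    intro x hx
    rw [Submodule.mem_orthogonal]
    intro u hu
    have hu := (hmem u).1 hu
    have h1 : inner ℝ u (g x) = inner ℝ u x := by
      conv_lhs => rw [← hu]
      exact hg.isom u x
    simp [inner_sub_right, h1])
  obtain ⟨δ₁, hδ₁, hexp⟩ := exp_near (E := E) (δ / (‖g‖ + 1)) (by positivity)
  obtain ⟨δ₂, hδ₂, hfix⟩ := exp_fix (E := E)
  obtain ⟨t, ht, hta⟩ := exists_small (G.br a) (min δ₁ δ₂) (lt_min hδ₁ hδ₂)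
  rw [← map_smul] at hta
  have hta1 := hta.trans_le (min_le_left _ _)
  have hta2 := hta.trans_le (min_le_right _ _)
  set h := NormedSpace.exp (G.br (t • a)) with hh
  have hhin : G.IsInner h := IsInner.exp G _
  have hcomm : Commute g h := by
    have : Commute g (G.br (t • a)) := by
      ext x
      simp only [mul_app]
      rw [hg.isAut, map_smul, hga]
    exact this.exp_right
  have hcomm' : ∀ x, g (h x) = h (g x) := fun x =>
    congrArg (fun S : E →L[ℝ] E => S x) hcomm.eq
  have hhk : ∀ k ∈ kr (g - 1), h k ∈ kr (g - 1) := by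
    intro k hk
    rw [hmem] at *
    rw [hcomm', hk]
  have hgk : ∀ k ∈ kr (g - 1), g k ∈ kr (g - 1) := by
    intro k hk
    rw [hmem] at *
    rw [hk, hk]
  have hS : ∀ x, (g * (h - 1)) x = g (h x) - g x := by intro x; simp
  have key := hpert (g * (h - 1)) (by
      have hn := hexp _ hta1
      have hgp : 0 < ‖g‖ + 1 := by positivity
      calc ‖g * (h - 1)‖ ≤ ‖g‖ * ‖h - 1‖ := norm_mul_le _ _
        _ ≤ (‖g‖ + 1) * ‖h - 1‖ := by gcongr; linarith
        _ < (‖g‖ + 1) * (δ / (‖g‖ + 1)) := by gcongr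
        _ = δ := by field_simp)
    (by
      intro x hx
      rw [hS]
      exact Submodule.sub_mem _ (hgk _ (hhk x hx)) (hgk x hx))
    (by
      intro x hx
      rw [hS]
      exact Submodule.sub_mem _ (hg.perp _ hgk _ (hhin.perp _ hhk x hx)) (hg.perp _ hgk x hx))
  have hle : kr (g * h - 1) ≤ A := by
    intro x hx
    have hx : g (h x) - x = 0 := hx
    obtain ⟨h1, h2⟩ := key x (by
      rw [hS]
      simp only [_root_.sub_apply, one_apply_eq_self]
      rw [← hx]; abel)
    rw [hS, ← map_sub] at h2
    have h3 : h x = x := sub_eq_zero.1 (hg.inj0 _ h2)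
    have h4 := hfix _ hta2 x h3
    rw [map_smul, _root_.smul_apply, smul_eq_zero] at h4
    exact hmax x h1 (hgen x (h4.resolve_left ht.ne'))
  have hrA : G.r ≤ finrank ℝ A := (hg.mul hhin).rank_le.trans (Submodule.finrank_mono hle)
  have hAeq : A = A' := Submodule.eq_of_le_of_finrank_le hAA' (hA'r.trans hrA)
  have hker : kr (G.br a) ≤ A := by
    intro x hx
    rw [hAeq]
    exact hmax' x trivial (fun b hb => hgen x hx b (by rwa [hAeq]))
  refine ⟨a, le_antisymm ?_ (G.hr a), fun x hx => (hmem x).1 (hAV (hker hx))⟩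
  exact (Submodule.finrank_mono hker).trans (by rw [hAeq]; exact hA'r)

/-- `h` is (dual to) a root whose reflection is realised by an inner automorphism. -/
def Refl (C : Submodule ℝ E) (h : E) : Prop := h ∈ C ∧ ∃ x, ∀ c ∈ C,
  NormedSpace.exp (G.br x) c = c - (2 * (inner ℝ h c / inner ℝ h h)) • h

theorem br_comm {C : Submodule ℝ E} (hC : G.Ab C) {c d : E} (hc : c ∈ C) (hd : d ∈ C) (x : E) :
    G.br c (G.br d x) = G.br d (G.br c x) := by
  rw [G.jac, hC c hc d hd]; simp

theorem refl_span (C : Submodule ℝ E) (hC : G.Ab C)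
    (hmax : ∀ x, (∀ a ∈ C, G.br a x = 0) → x ∈ C) (c : E) (hc : c ∈ C)
    (hperp : ∀ h, h ≠ 0 → G.Refl C h → inner ℝ h c = 0) : c = 0 := by
  apply G.inj
  let T : C × C → E →ₗ[ℝ] E := fun p => (G.br p.1).toLinearMap ∘ₗ (G.br p.2).toLinearMap
  have hTa : ∀ p x, T p x = G.br p.1 (G.br p.2 x) := fun p x => rfl
  have hsym : ∀ p, (T p).IsSymmetric := by
    intro p x y
    rw [hTa, hTa, G.skew, G.skew, neg_neg, G.br_comm hC p.2.2 p.1.2]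
  have hcm : Pairwise (Function.onFun Commute T) := by
    intro p q _
    apply LinearMap.ext
    intro x
    show T p (T q x) = T q (T p x)
    simp only [hTa]
    rw [G.br_comm hC p.2.2 q.1.2, G.br_comm hC p.2.2 q.2.2, G.br_comm hC p.1.2 q.1.2,
      G.br_comm hC p.1.2 q.2.2]
  have htop := LinearMap.IsSymmetric.iSup_iInf_eq_top_of_commute hsym hcm
  suffices hsuff : (⊤ : Submodule ℝ E) ≤ kr (G.br c) by
    ext x
    exact hsuff (show x ∈ ⊤ from trivial)
  rw [← htop]
  refine iSup_le fun χ u hu => ?_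
  rw [Submodule.mem_iInf] at hu
  have hu' : ∀ c (hc : c ∈ C) d (hd : d ∈ C), G.br c (G.br d u) = χ (⟨c, hc⟩, ⟨d, hd⟩) • u :=
    fun c hc d hd => Module.End.mem_eigenspace_iff.1 (hu (⟨c, hc⟩, ⟨d, hd⟩))
  by_cases hall : ∀ d ∈ C, G.br d u = 0
  · exact hall c hc
  push Not at hall
  obtain ⟨c0, hc0, hne⟩ := hall
  set v := G.br c0 u with hv
  set m := χ (⟨c0, hc0⟩, ⟨c0, hc0⟩) with hm
  have hvv : 0 < inner ℝ v v := by
    rw [real_inner_self_eq_norm_sq]; positivity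
  have hm1 : m * inner ℝ u u = - inner ℝ v v := by
    have h1 := G.skew c0 v u
    rw [hv, hu' c0 hc0 c0 hc0, ← hm, inner_smul_left] at h1
    simpa using h1
  have hm0 : m ≠ 0 := by
    intro h0
    rw [h0, zero_mul] at hm1
    linarith
  have hpex : ∀ d ∈ C, ∃ p : ℝ, G.br d u = p • v ∧ G.br d v = (p * m) • u := by
    intro d hd
    refine ⟨χ (⟨c0, hc0⟩, ⟨d, hd⟩) / m, ?_, ?_⟩
    · have h1 : G.br c0 (G.br c0 (G.br d u)) = χ (⟨c0, hc0⟩, ⟨d, hd⟩) • v := by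
        rw [hu' c0 hc0 d hd, map_smul]
      rw [G.br_comm hC hc0 hd, G.br_comm hC hc0 hd, hu' c0 hc0 c0 hc0, map_smul, ← hm] at h1
      rw [div_eq_inv_mul, mul_smul, ← h1, smul_smul, inv_mul_cancel₀ hm0, one_smul]
    · rw [hv, G.br_comm hC hd hc0, hu' c0 hc0 d hd, div_mul_cancel₀ _ hm0]
  set h := G.br u v with hh
  have hin : ∀ d p, G.br d u = p • v → inner ℝ h d = p * inner ℝ v v := by
    intro d p hp
    have h1 : inner ℝ (G.br d u) v = p * inner ℝ v v := by
      rw [hp, inner_smul_left]; simp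
    rw [← h1, G.anti d u, inner_neg_left, G.skew u d v, neg_neg, real_inner_comm]
  have hhC : h ∈ C := by
    apply hmax
    intro d hd
    obtain ⟨p, hp1, hp2⟩ := hpex d hd
    rw [hh, G.jac, hp1, hp2]
    simp [G.self]
  have hh0 : h ≠ 0 := by
    intro h0
    have := hin c0 1 (by rw [one_smul])
    rw [h0, inner_zero_left] at this
    linarith
  have hhh : 0 < inner ℝ h h := by
    rw [real_inner_self_eq_norm_sq]; positivity
  have huc : ∀ d ∈ C, G.br u d = -(inner ℝ h d / inner ℝ v v) • v := by
    intro d hd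
    obtain ⟨p, hp1, hp2⟩ := hpex d hd
    rw [G.anti, hp1, hin d p hp1, mul_div_cancel_right₀ _ hvv.ne', neg_smul]
  let k := Real.sqrt (inner ℝ h h / inner ℝ v v)
  have hk2 : k ^ 2 = inner ℝ h h / inner ℝ v v := Real.sq_sqrt (by positivity)
  have hk : k ≠ 0 := (Real.sqrt_pos.2 (by positivity)).ne'
  have hturn : NormedSpace.exp ((Real.pi / k) • G.br u) h = - h := by
    apply exp_half_turn _ _ _ hk
    rw [huc h hhC, map_smul, ← hh, hk2]
  have hrefl : G.Refl C h := by
    refine ⟨hhC, (Real.pi / k) • u, fun d hd => ?_⟩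
    set β := inner ℝ h d / inner ℝ h h with hβ
    have hperp2 : inner ℝ h (d - β • h) = 0 := by
      rw [inner_sub_right, inner_smul_right, hβ, div_mul_cancel₀ _ hhh.ne', sub_self]
    have hfix : NormedSpace.exp (G.br ((Real.pi / k) • u)) (d - β • h) = d - β • h := by
      apply G.exp_fix_of_ker
      rw [map_smul, _root_.smul_apply, huc _ (C.sub_mem hd (C.smul_mem _ hhC)), hperp2]
      simp
    rw [map_smul] at hfix ⊢
    have e : d = (d - β • h) + β • h := by abel
    conv_lhs => rw [e]
    rw [map_add, hfix, map_smul, hturn]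
    module
  obtain ⟨p, hp1, hp2⟩ := hpex c hc
  have h1 := hin c p hp1
  rw [hperp h hh0 hrefl] at h1
  have hp : p = 0 := by
    rcases mul_eq_zero.1 h1.symm with h | h
    · exact h
    · exact absurd h hvv.ne'
  rw [mem_kr, hp1, hp, zero_smul]

theorem exists_coxeter (C : Submodule ℝ E) (hC : G.Ab C)
    (hmax : ∀ x, (∀ a ∈ C, G.br a x = 0) → x ∈ C) :
    ∃ g, G.IsInner g ∧ (∀ c ∈ C, g c ∈ C) ∧ ∀ c ∈ C, g c = c → c = 0 := by
  obtain ⟨W, ⟨hWC, g, hg, hgW⟩, hWmax⟩ := WellFounded.has_min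
    (wellFounded_gt : WellFounded ((· > ·) : Submodule ℝ E → Submodule ℝ E → Prop))
    {W | W ≤ C ∧ ∃ g, G.IsInner g ∧ ∀ c ∈ C, g c - c ∈ W ∧ (g c = c → c ∈ Wᗮ)}
    ⟨⊥, bot_le, 1, IsInner.one G, fun c _ => by simp⟩
  have hgC : ∀ c ∈ C, g c ∈ C := by
    intro c hc
    have := C.add_mem (hWC (hgW c hc).1) hc
    rwa [sub_add_cancel] at this
  refine ⟨g, hg, hgC, fun c hc hgc => ?_⟩
  refine G.refl_span C hC hmax c hc fun h hh0 hh => ?_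
  suffices hW : h ∈ W from (Submodule.mem_orthogonal _ _).1 ((hgW c hc).2 hgc) h hW
  by_contra hhW
  obtain ⟨hhC, x, hx⟩ := hh
  have hhh : inner ℝ h h ≠ 0 := by simpa using hh0
  refine hWmax (W ⊔ ℝ ∙ h) ⟨sup_le hWC ?_, NormedSpace.exp (G.br x) * g,
    (IsInner.exp G x).mul hg, ?_⟩ ?_
  · rwa [Submodule.span_singleton_le_iff_mem]
  · intro d hd
    rw [mul_app, hx _ (hgC d hd)]
    set β := 2 * (inner ℝ h (g d) / inner ℝ h h) with hβ
    have hw := (hgW d hd).1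
    have e : g d - β • h - d = (g d - d) + (-β) • h := by module
    constructor
    · rw [e]
      exact Submodule.add_mem_sup hw (Submodule.smul_mem _ _ (Submodule.mem_span_singleton_self h))
    · intro heq
      have h1 : g d - d = β • h := by
        rw [sub_eq_iff_eq_add] at heq ⊢
        rw [heq, add_comm]
      have hβ0 : β = 0 := by
        by_contra hne
        apply hhW
        have : h = β⁻¹ • (g d - d) := by rw [h1, smul_smul, inv_mul_cancel₀ hne, one_smul]
        rw [this]
        exact W.smul_mem _ hw
      rw [hβ0, zero_smul, sub_eq_zero] at h1
      have h2 := (hgW d hd).2 h1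
      rw [← Submodule.inf_orthogonal]
      refine ⟨h2, ?_⟩
      rw [SetLike.mem_coe, Submodule.mem_orthogonal_singleton_iff_inner_right]
      rw [h1] at hβ
      rw [hβ0] at hβ
      have : inner ℝ h d / inner ℝ h h = 0 := by linarith
      exact (div_eq_zero_iff.1 this).resolve_right hhh
  · refine lt_of_le_of_ne le_sup_left fun h' => hhW ?_
    rw [h']
    exact Submodule.mem_sup_right (Submodule.mem_span_singleton_self h)

theorem main (C : Submodule ℝ E) (hC : G.Ab C)
    (hmax : ∀ x, (∀ a ∈ C, G.br a x = 0) → x ∈ C) :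
    ∃ a, finrank ℝ (kr (G.br a)) = G.r ∧ ∀ c ∈ C, ∃ y, c = G.br a y := by
  obtain ⟨g, hg, hgC, hfix⟩ := G.exists_coxeter C hC hmax
  obtain ⟨a, har, ha⟩ := hg.exists_fixed
  refine ⟨a, har, fun c hc => ?_⟩
  have hc' : c ∈ (kr (G.br a))ᗮ := by
    rw [Submodule.mem_orthogonal]
    intro x hx
    have hgx := ha x hx
    obtain ⟨p, hp, q, hq, rfl⟩ := C.exists_add_mem_mem_orthogonal x
    have hgq := hg.perp C hgC q hq
    have h1 : g p - p = q - g q := by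
      rw [map_add] at hgx
      rw [sub_eq_sub_iff_add_eq_add, hgx, add_comm]
    have h2 : g p - p ∈ C ⊓ Cᗮ :=
      ⟨C.sub_mem (hgC p hp) hp, by rw [h1]; exact Submodule.sub_mem _ hq hgq⟩
    rw [Submodule.inf_orthogonal_eq_bot] at h2
    have h3 : p = 0 := hfix p hp (sub_eq_zero.1 h2)
    rw [h3, zero_add, real_inner_comm]
    exact (Submodule.mem_orthogonal _ _).1 hq c hc
  rw [G.perp_ker] at hc'
  obtain ⟨y, hy⟩ := hc'
  exact ⟨y, hy.symm⟩

end CLA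
end lie
end CartanApp

theorem CartanApp.engel_ker (L : Type*) [LieRing L] [LieAlgebra ℝ L] [FiniteDimensional ℝ L]
    (hneg : ∀ x : L, x ≠ 0 → killingForm ℝ L x x < 0) (x : L) :
    (LieSubalgebra.engel ℝ x).toSubmodule = LinearMap.ker (LieAlgebra.ad ℝ L x) := by
  have hsk : ∀ x y z : L, killingForm ℝ L ⁅x, y⁆ z = - killingForm ℝ L y ⁅x, z⁆ := by
    intro x y z
    rw [← lie_skew, map_neg, LinearMap.neg_apply]
    exact congrArg Neg.neg (LieModule.traceForm_apply_lie_apply ℝ L L y x z)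
  have h2 : ∀ y : L, ⁅x, ⁅x, y⁆⁆ = 0 → ⁅x, y⁆ = 0 := by
    intro y hy
    by_contra hne
    have h1 := hneg _ hne
    rw [hsk, hy, map_zero, neg_zero] at h1
    exact lt_irrefl _ h1
  have h3 : ∀ (n : ℕ) (y : L), ((LieAlgebra.ad ℝ L x) ^ n) y = 0 → ⁅x, y⁆ = 0 := by
    intro n
    induction n with
    | zero => intro y hy; have : y = 0 := by simpa using hy
              simp [this]
    | succ n ih =>
      intro y hy
      rw [pow_succ] at hy
      exact h2 y (ih _ hy)
  ext y
  rw [LieSubalgebra.mem_toSubmodule, LieSubalgebra.mem_engel_iff, LinearMap.mem_ker]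
  constructor
  · rintro ⟨n, hn⟩
    exact h3 n y hn
  · intro h
    exact ⟨1, by simpa using h⟩

/-- In a compact semisimple real Lie algebra, for every Cartan subalgebra `C` there is a
regular element `a` with `C ⊆ [a, L]`. -/
theorem cartan_subset_ad_range (L : Type*) [LieRing L] [LieAlgebra ℝ L] [FiniteDimensional ℝ L]
    (hneg : ∀ x : L, x ≠ 0 → killingForm ℝ L x x < 0)
    (C : LieSubalgebra ℝ L) (hC : C.IsCartanSubalgebra) :
    ∃ a : L, LieAlgebra.IsRegular ℝ a ∧ ∀ c ∈ C, ∃ y : L, c = ⁅a, y⁆ := by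
  have hsk : ∀ x y z : L, killingForm ℝ L ⁅x, y⁆ z = - killingForm ℝ L y ⁅x, z⁆ := by
    intro x y z
    rw [← lie_skew, map_neg, LinearMap.neg_apply]
    exact congrArg Neg.neg (LieModule.traceForm_apply_lie_apply ℝ L L y x z)
  have hpos : ∀ x : L, 0 ≤ - killingForm ℝ L x x := by
    intro x
    by_cases hx : x = 0
    · simp [hx]
    · linarith [hneg x hx]
  have hdef : ∀ x : L, - killingForm ℝ L x x = 0 → x = 0 := by
    intro x hx
    by_contra hne
    linarith [hneg x hne]
  have hcomm : ∀ x y : L, killingForm ℝ L x y = killingForm ℝ L y x := fun x y =>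
    LieModule.traceForm_comm ℝ L L x y
  have : LieAlgebra.IsKilling ℝ L := by
    refine ⟨?_⟩
    rw [eq_bot_iff]
    intro x hx
    rw [LieIdeal.mem_killingCompl] at hx
    have h1 := hx x trivial
    exact hdef x (by rw [h1, neg_zero])
  have : C.IsCartanSubalgebra := hC
  have hreg : ∀ x : L, Module.finrank ℝ (LieSubalgebra.engel ℝ x) =
      Module.finrank ℝ (LinearMap.ker (LieAlgebra.ad ℝ L x)) := by
    intro x
    rw [← CartanApp.engel_ker L hneg x]
    rfl
  let adL : L →ₗ[ℝ] L →ₗ[ℝ] L :=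
    LinearMap.mk₂ ℝ (fun x y => ⁅x, y⁆) add_lie smul_lie lie_add lie_smul
  have hreg2 : ∀ x : L, Module.finrank ℝ (LieSubalgebra.engel ℝ x) =
      Module.finrank ℝ (LinearMap.ker (adL x)) := hreg
  have hker0 : ∀ x : L, (∀ y, adL x y = 0) → killingForm ℝ L x x = 0 := by
    intro x hx
    have : LieAlgebra.ad ℝ L x = 0 := by
      ext y
      exact hx y
    rw [killingForm_apply_apply, this]
    simp
  have hLad : ∀ z x : L, LieDerivation.ad ℝ L z x = adL z x := fun z x => by
    show _ = ⁅z, x⁆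
    simp
  let core : InnerProductSpace.Core ℝ L :=
    { inner := fun x y => - killingForm ℝ L x y
      conj_inner_symm := fun x y => by
        show - killingForm ℝ L y x = - killingForm ℝ L x y
        rw [hcomm]
      re_inner_nonneg := fun x => hpos x
      add_left := fun x y z => by
        show - killingForm ℝ L (x + y) z = - killingForm ℝ L x z + - killingForm ℝ L y z
        rw [map_add, LinearMap.add_apply, neg_add]
      smul_left := fun x y r => by
        show - killingForm ℝ L (r • x) y = r * - killingForm ℝ L x y
        rw [map_smul, LinearMap.smul_apply, smul_eq_mul, mul_neg]
      definite := fun x hx => hdef x hx }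
  letI : NormedAddCommGroup L := core.toNormedAddCommGroup
  letI : InnerProductSpace ℝ L := InnerProductSpace.ofCore core.toCore
  have hinner : ∀ x y : L, inner ℝ x y = - killingForm ℝ L x y := fun x y => rfl
  let br : L →L[ℝ] L →L[ℝ] L := LinearMap.toContinuousLinearMap
    ((LinearMap.toContinuousLinearMap : (L →ₗ[ℝ] L) ≃ₗ[ℝ] (L →L[ℝ] L)).toLinearMap ∘ₗ
      adL)
  have hbr : ∀ x y, br x y = ⁅x, y⁆ := fun x y => rfl
  have hkr : ∀ x, CartanApp.kr (br x) = LinearMap.ker (adL x) := fun x => rfl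
  let G : CartanApp.CLA L :=
    { br := br
      self := fun x => by rw [hbr, lie_self]
      jac := fun x y z => by simp only [hbr]; exact leibniz_lie x y z
      skew := fun x y z => by rw [hbr, hbr, hinner, hinner, hsk]
      der := fun D hD => by
        let D' : LieDerivation ℝ L L :=
          { toLinearMap := D.toLinearMap
            leibniz' := fun a b => by
              have := hD a b
              simp only [hbr] at this
              show D ⁅a, b⁆ = ⁅a, D b⁆ - ⁅b, D a⁆
              rw [this, ← lie_skew b (D a)]
              abel }
        obtain ⟨z, hz⟩ := LieDerivation.IsKilling.exists_eq_ad D'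
        refine ⟨z, ?_⟩
        ext x
        have := congrArg (fun F : LieDerivation ℝ L L => F x) hz
        refine Eq.trans this.symm ?_
        exact hLad z x
      inj := fun x hx => by
        apply hdef
        rw [hker0 x (fun y => congrArg (fun S : L →L[ℝ] L => S y) hx), neg_zero]
      r := LieAlgebra.rank ℝ L
      hr := fun x => by
        rw [hkr, ← hreg2]
        exact LieAlgebra.rank_le_finrank_engel ℝ x
      hr' := by
        obtain ⟨x, hx⟩ := LieAlgebra.exists_isRegular ℝ L
        refine ⟨x, ?_⟩
        rw [hkr, ← hreg2]
        exact (LieAlgebra.isRegular_iff_finrank_engel_eq_rank ℝ x).1 hx }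
  have hab : ∀ x ∈ C, ∀ y ∈ C, ⁅x, y⁆ = 0 := by
    intro x hx y hy
    have h1 : ⁅(⟨x, hx⟩ : C), (⟨y, hy⟩ : C)⁆ = 0 := trivial_lie_zero _ _ _ _
    exact congrArg Subtype.val h1
  obtain ⟨a, ha, h⟩ := G.main C.toSubmodule hab (by
    intro x hx
    have hn : x ∈ C.normalizer := by
      rw [LieSubalgebra.mem_normalizer_iff]
      intro y hy
      have h1 : ⁅y, x⁆ = 0 := hx y hy
      rw [← lie_skew, h1, neg_zero]
      exact C.zero_mem
    rw [hC.self_normalizing] at hn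
    exact hn)
  refine ⟨a, ?_, h⟩
  rw [LieAlgebra.isRegular_iff_finrank_engel_eq_rank, hreg]
  exact ha
end

section
/- Let L be a finite-dimensional real Lie algebra whose Killing form is negative definite. Then every element x of L can be written as x = ⁅a, b⁆ where a ∈ L can be chosen to be a regular element of L. -/
open Module

section Abs
variable {E : Type*} [NormedAddCommGroup E] [InnerProductSpace ℝ E]

lemma norm_const_of_skew_ode (D : E →L[ℝ] E) (hD : ∀ u, (inner ℝ (D u) u) = 0) (w : ℝ → E)
    (hw : ∀ s, HasDerivAt w (D (w s)) s) (s : ℝ) : ‖w s‖ = ‖w 0‖ := by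
  have h : ∀ s, HasDerivAt (fun s => (inner ℝ (w s) (w s))) 0 s := by
    intro s
    have := (hw s).inner ℝ (hw s)
    rw [real_inner_comm, hD, add_zero] at this
    exact this
  have h2 := is_const_of_deriv_eq_zero (fun s => (h s).differentiableAt)
    (fun s => (h s).deriv) s 0
  simp only [real_inner_self_eq_norm_sq] at h2
  exact (pow_left_inj₀ (norm_nonneg _) (norm_nonneg _) two_ne_zero).1 h2

variable [FiniteDimensional ℝ E]

lemma hasDerivAt_exp_apply (D : E →L[ℝ] E) (u : E) (s : ℝ) :
    HasDerivAt (fun s : ℝ => NormedSpace.exp (s • D) u) (D (NormedSpace.exp (s • D) u)) s := by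
  have : CompleteSpace E := FiniteDimensional.complete ℝ E
  have h := hasDerivAt_exp_smul_const' (𝕂 := ℝ) D s
  have := h.clm_apply (hasDerivAt_const s u)
  simpa using this

/-- bracket-preserving isometries -/
def autSet (B : E →L[ℝ] E →L[ℝ] E) : Set (E →L[ℝ] E) :=
  {g | (∀ u v, g (B u v) = B (g u) (g v)) ∧ ∀ u, ‖g u‖ = ‖u‖}

lemma isCompact_autSet (B : E →L[ℝ] E →L[ℝ] E) : IsCompact (autSet B) := by
  have : ProperSpace (E →L[ℝ] E) := FiniteDimensional.proper ℝ _
  apply Metric.isCompact_of_isClosed_isBounded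
  · have : autSet B = (⋂ u, ⋂ v, {g | g (B u v) = B (g u) (g v)}) ∩ ⋂ u, {g | ‖g u‖ = ‖u‖} := by
      ext; simp [autSet]
    rw [this]
    refine IsClosed.inter ?_ ?_
    · refine isClosed_iInter fun u => isClosed_iInter fun v => isClosed_eq (by fun_prop) (by fun_prop)
    · exact isClosed_iInter fun u => isClosed_eq (by fun_prop) (by fun_prop)
  · rw [isBounded_iff_forall_norm_le]
    refine ⟨1, fun g hg => ?_⟩
    refine ContinuousLinearMap.opNorm_le_bound _ zero_le_one fun u => ?_
    rw [hg.2, one_mul]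

lemma exp_mem_autSet (B : E →L[ℝ] E →L[ℝ] E)
    (hskew : ∀ u v, (inner ℝ (B u v) v) = 0)
    (hjac : ∀ u v w, B u (B v w) = B (B u v) w + B v (B u w)) (z : E) (s : ℝ) :
    NormedSpace.exp (s • B z) ∈ autSet B := by
  constructor
  · intro u v
    have h : ∀ s, HasDerivAt (fun s : ℝ => NormedSpace.exp (s • B z) (B u v)
        - B (NormedSpace.exp (s • B z) u) (NormedSpace.exp (s • B z) v))
        (B z (NormedSpace.exp (s • B z) (B u v)
        - B (NormedSpace.exp (s • B z) u) (NormedSpace.exp (s • B z) v))) s := by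
      intro s
      have h1 := hasDerivAt_exp_apply (B z) (B u v) s
      have h2 := (B.hasFDerivAt.comp_hasDerivAt s (hasDerivAt_exp_apply (B z) u s)).clm_apply
        (hasDerivAt_exp_apply (B z) v s)
      have h3 := h1.sub h2
      convert! h3 using 1
      rw [map_sub, hjac]
      simp
    have := norm_const_of_skew_ode (B z) (hskew z) _ h s
    simp only [zero_smul, NormedSpace.exp_zero, one_apply_eq_self, sub_self,
      norm_zero, norm_eq_zero] at this
    exact sub_eq_zero.1 this
  · intro u
    have := norm_const_of_skew_ode (B z) (hskew z) _ (hasDerivAt_exp_apply (B z) u) s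
    simpa using this

lemma second_deriv_nonneg (f f' : ℝ → ℝ) (c : ℝ) (h1 : ∀ s, HasDerivAt f (f' s) s)
    (h2 : HasDerivAt f' c 0) (hmin : ∀ s, f 0 ≤ f s) : f' 0 = 0 ∧ 0 ≤ c := by
  have hlm : IsLocalMin f 0 := Filter.Eventually.of_forall hmin
  have h0 : f' 0 = 0 := hlm.hasDerivAt_eq_zero (h1 0)
  refine ⟨h0, ?_⟩
  by_contra hc
  push Not at hc
  have hd : deriv f = f' := funext fun s => (h1 s).deriv
  have hmax : IsLocalMax f 0 := by
    apply isLocalMax_of_deriv_deriv_neg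
    · rw [hd, h2.deriv]; exact hc
    · rw [hd, h0]
    · exact (h1 0).continuousAt
  have he : f =ᶠ[nhds 0] fun _ => f 0 := by
    filter_upwards [hmax] with s hs using le_antisymm hs (hmin s)
  have h3 := he.deriv.deriv_eq
  rw [hd, h2.deriv] at h3
  simp at h3
  linarith

lemma exists_aut_orthogonal (B : E →L[ℝ] E →L[ℝ] E)
    (hanti : ∀ u v, B u v = - B v u)
    (hskew : ∀ u v w, (inner ℝ (B u v) w) = - (inner ℝ v (B u w)))
    (hjac : ∀ u v w, B u (B v w) = B (B u v) w + B v (B u w))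
    (htr : ∀ p q, LinearMap.trace ℝ E ((B p : E →ₗ[ℝ] E) ∘ₗ (B q : E →ₗ[ℝ] E)) = - (inner ℝ p q))
    (t : Submodule ℝ E) (ht : ∀ h ∈ t, ∀ k ∈ t, B h k = 0) (x : E) :
    ∃ g ∈ autSet B, ∀ h ∈ t, (inner ℝ (g x) h) = 0 := by
  have hskew0 : ∀ u v, (inner ℝ (B u v) v) = 0 := by
    intro u v
    have := hskew u v v
    rw [real_inner_comm v (B u v)] at this
    have h2 := real_inner_comm v (B u v)
    linarith
  set P : E →L[ℝ] E := t.starProjection with hP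
  obtain ⟨g, hg, hmin⟩ := (isCompact_autSet B).exists_isMinOn
    (f := fun g => (inner ℝ (P (g x)) (P (g x)))) ⟨1, by simp [autSet]⟩ (by fun_prop)
  set y := g x with hy
  set p := P y with hp
  have hPt : ∀ v, P v ∈ t := fun v => Submodule.starProjection_apply_mem t v
  have hPs : ∀ u v, (inner ℝ (P u) v) = (inner ℝ u (P v)) := fun u v => Submodule.inner_starProjection_left_eq_right t u v
  have hPid : ∀ v ∈ t, P v = v := fun v hv => Submodule.starProjection_eq_self_iff.2 hv
  have hpt : p ∈ t := hPt y
  have var : ∀ z, (inner ℝ (P (B z y)) p) = 0 ∧ 0 ≤ (inner ℝ (P (B z y)) (P (B z y))) + (inner ℝ (P (B z (B z y))) p) := by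
    intro z
    set F : ℝ → E := fun s => NormedSpace.exp (s • B z) y
    have hF : ∀ s, HasDerivAt F (B z (F s)) s := hasDerivAt_exp_apply (B z) y
    have hF0 : F 0 = y := by simp [F]
    have hPF : ∀ s, HasDerivAt (fun s => P (F s)) (P (B z (F s))) s := fun s =>
      P.hasFDerivAt.comp_hasDerivAt s (hF s)
    have hPBF : ∀ s, HasDerivAt (fun s => P (B z (F s))) (P (B z (B z (F s)))) s := fun s =>
      (P.comp (B z)).hasFDerivAt.comp_hasDerivAt s (hF s)
    have h1 : ∀ s, HasDerivAt (fun s => (inner ℝ (P (F s)) (P (F s)))) (2 * (inner ℝ (P (B z (F s))) (P (F s)))) s := by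
      intro s
      convert! (hPF s).inner ℝ (hPF s) using 1
      rw [real_inner_comm]; ring
    have h2 := ((hPBF 0).inner ℝ (hPF 0)).const_mul 2
    have := second_deriv_nonneg _ _ _ h1 h2 (by
      intro s
      have hmem : (NormedSpace.exp (s • B z)) * g ∈ autSet B := by
        have he := exp_mem_autSet B hskew0 hjac z s
        refine ⟨fun u v => ?_, fun u => ?_⟩
        · simp [hg.1, he.1]
        · simp [hg.2, he.2]
      have := hmin hmem
      rw [hF0]
      exact this)
    rw [hF0] at this
    obtain ⟨a, b⟩ := this
    refine ⟨by linarith, by linarith⟩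
  -- y commutes with p
  have hpy : B p y = 0 := by
    have h : ∀ z, (inner ℝ (B p y) z) = 0 := by
      intro z
      have := (var z).1
      rw [hPs, hPid p hpt, hanti, inner_neg_left, hskew, hanti y p] at this
      rw [real_inner_comm]
      simpa using this
    simpa using h (B p y)
  -- Q ≤ 0 on the orthogonal of the kernel
  set K : Submodule ℝ E := LinearMap.ker (B p : E →ₗ[ℝ] E) with hK
  have memK : ∀ u, u ∈ K ↔ B p u = 0 := fun u => by simp [hK]
  have hQ1 : ∀ z ∈ Kᗮ, (inner ℝ (B p z) (B y z)) ≤ 0 := by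
    intro z hz
    have hzero : P (B z y) = 0 := by
      have h : ∀ k ∈ t, (inner ℝ (B z y) k) = 0 := by
        intro k hk
        rw [hanti, inner_neg_left, hskew, neg_neg]
        have : B y k ∈ K := by
          rw [memK, hjac, hpy, ht p hpt k hk]; simp
        exact (Submodule.mem_orthogonal' _ _).1 hz _ this
      have := h _ (hPt (B z y))
      rw [← hPid _ (hPt (B z y)), ← hPs] at this
      simpa using this
    have := (var z).2
    rw [hzero, inner_zero_left, zero_add, hPs, hPid p hpt, hskew, hanti z y, hanti z p] at this
    rw [real_inner_comm]
    simpa using this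
  have hQ : ∀ z, (inner ℝ (B p z) (B y z)) ≤ 0 := by
    intro z
    obtain ⟨k, hk, w, hw, rfl⟩ := K.exists_add_mem_mem_orthogonal z
    have h1 := hQ1 w hw
    have hk' := (memK k).1 hk
    have h2 : (inner ℝ (B p w) (B y k)) = 0 := by
      rw [hskew, hjac, hpy, hk']; simp
    rw [map_add, map_add, hk', zero_add, inner_add_right, h2, zero_add]
    exact h1
  have hsum : (inner ℝ p y) ≤ 0 := by
    have h1 := htr p y
    rw [LinearMap.trace_eq_sum_inner _ (stdOrthonormalBasis ℝ E)] at h1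
    rw [← neg_neg (inner ℝ p y), ← h1, neg_nonpos]
    refine Finset.sum_nonneg fun i _ => ?_
    have := hQ (stdOrthonormalBasis ℝ E i)
    rw [hskew] at this
    simpa using this
  have hp0 : p = 0 := by
    have : (inner ℝ p p) = (inner ℝ p y) := by rw [hp, hPs, hPid _ (hPt y), real_inner_comm]
    rw [← this, real_inner_self_eq_norm_sq] at hsum
    exact norm_eq_zero.1 (pow_eq_zero_iff two_ne_zero |>.1 (le_antisymm hsum (sq_nonneg _)))
  refine ⟨g, hg, fun h hh => ?_⟩
  rw [← hPid h hh, ← hPs]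
  change (inner ℝ p h) = 0
  rw [hp0, inner_zero_left]

lemma exists_aut_eq_bracket (B₀ : E →ₗ[ℝ] E →ₗ[ℝ] E)
    (hanti : ∀ u v, B₀ u v = - B₀ v u)
    (hskew : ∀ u v w, (inner ℝ (B₀ u v) w) = - (inner ℝ v (B₀ u w)))
    (hjac : ∀ u v w, B₀ u (B₀ v w) = B₀ (B₀ u v) w + B₀ v (B₀ u w))
    (htr : ∀ p q, LinearMap.trace ℝ E (B₀ p ∘ₗ B₀ q) = - (inner ℝ p q))
    (a : E) (ht : ∀ h, B₀ a h = 0 → ∀ k, B₀ a k = 0 → B₀ h k = 0) (x : E) :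
    ∃ g : E ≃ₗ[ℝ] E, (∀ u v, g (B₀ u v) = B₀ (g u) (g v)) ∧ ∃ b, g x = B₀ a b := by
  let B : E →L[ℝ] E →L[ℝ] E :=
    LinearMap.toContinuousLinearMap
      ((LinearMap.toContinuousLinearMap : (E →ₗ[ℝ] E) ≃ₗ[ℝ] (E →L[ℝ] E)).toLinearMap ∘ₗ B₀)
  have hB : ∀ u v, B u v = B₀ u v := fun u v => rfl
  obtain ⟨g, hg, hgx⟩ := exists_aut_orthogonal B hanti hskew hjac htr
    (LinearMap.ker (B₀ a)) (fun h hh k hk => ht h (by simpa using hh) k (by simpa using hk)) x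
  have hinj : Function.Injective (g : E →ₗ[ℝ] E) := by
    rw [← LinearMap.ker_eq_bot, LinearMap.ker_eq_bot']
    intro u hu
    have := hg.2 u
    rw [show g u = 0 from hu, norm_zero] at this
    exact norm_eq_zero.1 this.symm
  refine ⟨LinearEquiv.ofInjectiveEndo (g : E →ₗ[ℝ] E) hinj, fun u v => hg.1 u v, ?_⟩
  have hmem : g x ∈ LinearMap.range (B₀ a) := by
    rw [← Submodule.orthogonal_orthogonal (LinearMap.range (B₀ a)), Submodule.mem_orthogonal']
    intro v hv
    apply hgx
    rw [LinearMap.mem_ker]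
    have := (Submodule.mem_orthogonal' _ _).1 hv (B₀ a (B₀ a v)) ⟨_, rfl⟩
    have h2 := hskew a v (B₀ a v)
    rw [this, neg_zero] at h2
    exact inner_self_eq_zero.1 h2
  obtain ⟨b, hb⟩ := hmem
  exact ⟨b, hb.symm⟩

end Abs

section LieAlg
variable {L : Type*} [LieRing L] [LieAlgebra ℝ L] [FiniteDimensional ℝ L]

lemma lie_eq_zero_of_pow (hneg : ∀ x : L, x ≠ 0 → killingForm ℝ L x x < 0) (h : L) (n : ℕ) :
    ∀ k, ((LieAlgebra.ad ℝ L h) ^ n) k = 0 → ⁅h, k⁆ = 0 := by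
  induction n with
  | zero => intro k hk; simp at hk; simp [hk]
  | succ n ih =>
    intro k hk
    rw [pow_succ, Module.End.mul_apply] at hk
    have h1 := ih _ hk
    rw [LieAlgebra.ad_apply] at h1
    by_contra hne
    have h2 := hneg _ hne
    have h3 := LieModule.traceForm_apply_lie_apply' ℝ L L h k ⁅h, k⁆
    rw [h1, map_zero, neg_zero] at h3
    exact absurd h3 h2.ne

lemma engel_abelian (hneg : ∀ x : L, x ≠ 0 → killingForm ℝ L x x < 0) (x : L)
    (hx : LieAlgebra.IsRegular ℝ x) (h k : L) (hh : ⁅x, h⁆ = 0) (hk : ⁅x, k⁆ = 0) :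
    ⁅h, k⁆ = 0 := by
  have mem : ∀ u : L, ⁅x, u⁆ = 0 → u ∈ LieSubalgebra.engel ℝ x := fun u hu => by
    rw [LieSubalgebra.mem_engel_iff]; exact ⟨1, by simpa using hu⟩
  set Ex : {LieSubalgebra.engel ℝ z | z ∈ LieSubalgebra.engel ℝ x} :=
    ⟨LieSubalgebra.engel ℝ x, x, LieSubalgebra.self_mem_engel _ _, rfl⟩
  have hbot : IsBot Ex := by
    apply LieAlgebra.engel_isBot_of_isMin
      (Cardinal.natCast_le_aleph0.trans <| Cardinal.infinite_iff.mp inferInstance)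
      (LieSubalgebra.engel ℝ x) Ex le_rfl
    rintro ⟨_, y, hy, rfl⟩ hyx
    suffices finrank ℝ (LieSubalgebra.engel ℝ x) ≤ finrank ℝ (LieSubalgebra.engel ℝ y) by
      suffices LieSubalgebra.engel ℝ y = LieSubalgebra.engel ℝ x from this.ge
      apply LieSubalgebra.toSubmodule_injective
      exact Submodule.eq_of_le_of_finrank_le hyx this
    rw [(LieAlgebra.isRegular_iff_finrank_engel_eq_rank ℝ x).mp hx]
    apply LieAlgebra.rank_le_finrank_engel
  have hle : LieSubalgebra.engel ℝ x ≤ LieSubalgebra.engel ℝ h :=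
    @hbot ⟨LieSubalgebra.engel ℝ h, h, mem h hh, rfl⟩
  obtain ⟨n, hn⟩ := (LieSubalgebra.mem_engel_iff ℝ h k).1 (hle (mem k hk))
  exact lie_eq_zero_of_pow hneg h n k hn

/-- minus the Killing form as an inner product -/
@[reducible] noncomputable def killingCore (hneg : ∀ x : L, x ≠ 0 → killingForm ℝ L x x < 0) :
    InnerProductSpace.Core ℝ L where
  inner x y := - killingForm ℝ L x y
  conj_inner_symm x y := by
    simp only [conj_trivial]; rw [LieModule.traceForm_comm]
  re_inner_nonneg x := by
    by_cases hx : x = 0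
    · simp [hx]
    · have := hneg x hx
      simp only [RCLike.re_to_real]; linarith
  add_left x y z := by simp [add_comm]
  smul_left x y r := by simp
  definite x hx := by
    by_contra h
    have := hneg x h
    linarith

/-- the bracket as a bilinear map -/
noncomputable def lieBilin : L →ₗ[ℝ] L →ₗ[ℝ] L :=
  LinearMap.mk₂ ℝ (fun u v => ⁅u, v⁆) add_lie smul_lie lie_add (fun c u v => lie_smul c u v)

lemma exists_lie_aut (hneg : ∀ x : L, x ≠ 0 → killingForm ℝ L x x < 0) (a : L)
    (ha : LieAlgebra.IsRegular ℝ a) (x : L) :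
    ∃ g : L ≃ₗ[ℝ] L, (∀ u v, g ⁅u, v⁆ = ⁅g u, g v⁆) ∧ ∃ b, g x = ⁅a, b⁆ := by
  let c := killingCore hneg
  let i1 : NormedAddCommGroup L := c.toNormedAddCommGroup
  let i2 : InnerProductSpace ℝ L := InnerProductSpace.ofCore c.toCore
  exact exists_aut_eq_bracket (E := L) lieBilin
    (fun u v => (lie_skew u v).symm)
    (fun u v w => by
      have := LieModule.traceForm_apply_lie_apply' ℝ L L u v w
      exact congrArg Neg.neg this)
    (fun u v w => leibniz_lie u v w)
    (fun p q => by
      have := killingForm_apply_apply ℝ L p q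
      exact this.symm.trans (neg_neg _).symm)
    a (fun h hh k hk => engel_abelian hneg a ha h k hh hk) x
end LieAlg

/-- Every element of a compact semisimple real Lie algebra is a commutator `⁅a, b⁆`
where `a` may be chosen regular. -/
theorem commutator_with_regular (L : Type*) [LieRing L] [LieAlgebra ℝ L] [FiniteDimensional ℝ L]
    (hneg : ∀ x : L, x ≠ 0 → killingForm ℝ L x x < 0) :
    ∀ x : L, ∃ a b : L, LieAlgebra.IsRegular ℝ a ∧ x = ⁅a, b⁆ := by
  intro x
  obtain ⟨a, ha⟩ := LieAlgebra.exists_isRegular ℝ L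
  obtain ⟨g, hg, b, hb⟩ := exists_lie_aut hneg a ha x
  refine ⟨g.symm a, g.symm b, ?_, ?_⟩
  · rw [LieAlgebra.isRegular_def] at ha ⊢
    have : LieAlgebra.ad ℝ L a = g.conj (LieAlgebra.ad ℝ L (g.symm a)) := by
      ext v
      simp [LinearEquiv.conj_apply, hg]
    rwa [this, LinearEquiv.charpoly_conj] at ha
  · apply g.injective
    rw [hg, hb]; simp
end

section
/- Let L be a finite-dimensional real Lie algebra whose Killing form κ is negative definite, and let C be any Cartan subalgebra of L. Then there exists a Cartan subalgebra C′ of L orthogonal to C, i.e. κ(c, c′) = 0 for all c ∈ C and all c′ ∈ C′. -/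
namespace OrthCartan
open NormedSpace Module
set_option linter.unusedSectionVars false

section analysis
variable {V : Type*} [NormedAddCommGroup V] [InnerProductSpace ℝ V] [FiniteDimensional ℝ V]

/-- derivative of `exp (t D) x`. -/
lemma hasDerivAt_expv (D : V →L[ℝ] V) (x : V) (t : ℝ) :
    HasDerivAt (fun s : ℝ => exp (s • D) x) (D (exp (t • D) x)) t := by
  have h := hasDerivAt_exp_smul_const' (𝕂 := ℝ) D t
  have h2 := h.clm_apply (hasDerivAt_const t x)
  simpa using h2

lemma exp_neg_apply (D : V →L[ℝ] V) (x : V) : exp (-D) (exp D x) = x := by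
  have h : exp (-D) * exp D = 1 := by
    let _ : NormedAlgebra ℚ (V →L[ℝ] V) := NormedAlgebra.restrictScalars ℚ ℝ _
    rw [← exp_add_of_commute (Commute.neg_left (Commute.refl D))]; simp
  have := congrArg (fun T : V →L[ℝ] V => T x) h
  simpa using this

lemma exp_neg_apply' (D : V →L[ℝ] V) (x : V) : exp D (exp (-D) x) = x := by
  have := exp_neg_apply (-D) x
  simpa using this

/-- exp commutes with D on vectors -/
lemma exp_comm_apply (D T : V →L[ℝ] V) (h : ∀ x, D (T x) = T (D x)) (x : V) :
    exp D (T x) = T (exp D x) := by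
  have hc : Commute D T := by ext y; simp [h]
  have h := (hc.exp_left).eq
  have := congrArg (fun T : V →L[ℝ] V => T x) h
  simpa using this

lemma exp_apply_of_eq_zero (D : V →L[ℝ] V) (x : V) (h : D x = 0) : exp D x = x := by
  have hd : ∀ t : ℝ, HasDerivAt (fun s : ℝ => exp (s • D) x) 0 t := by
    intro t
    have h1 := hasDerivAt_expv D x t
    have h2 : D (exp (t • D) x) = 0 := by
      rw [← exp_comm_apply (t • D) D (by simp) x, h, map_zero]
    rwa [h2] at h1
  have := is_const_of_deriv_eq_zero (fun t => (hd t).differentiableAt) (fun t => (hd t).deriv) 1 0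
  simpa using this

/-- uniqueness of solutions of linear ODE -/
lemma ode_unique (D : V →L[ℝ] V) (g : ℝ → V) (hg : ∀ t, HasDerivAt g (D (g t)) t) (t : ℝ) :
    g t = exp (t • D) (g 0) := by
  have hd : ∀ t : ℝ, HasDerivAt (fun s : ℝ => exp (s • (-D)) (g s)) 0 t := by
    intro t
    have h := (hasDerivAt_exp_smul_const' (𝕂 := ℝ) (-D) t).clm_apply (hg t)
    convert h using 1
    have := exp_comm_apply (t • (-D)) D (by simp) (g t)
    simp only [mul_apply_eq_comp, neg_apply]
    rw [this]; simp
  have := is_const_of_deriv_eq_zero (fun t => (hd t).differentiableAt) (fun t => (hd t).deriv) t 0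
  simp only [zero_smul, exp_zero, one_apply_eq_self] at this
  rw [← this, smul_neg, exp_neg_apply']

/-- a derivation exponentiates to an automorphism. -/
lemma exp_der (b : V →L[ℝ] V →L[ℝ] V) (D : V →L[ℝ] V)
    (hD : ∀ x y, D (b x y) = b (D x) y + b x (D y)) (x y : V) :
    exp D (b x y) = b (exp D x) (exp D y) := by
  have := ode_unique D (fun t => b (exp (t • D) x) (exp (t • D) y)) (by
    intro t
    have h1 := (b.hasFDerivAt.comp_hasDerivAt t (hasDerivAt_expv D x t)).clm_apply
      (hasDerivAt_expv D y t)
    refine h1.congr_deriv ?_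
    simp [hD]) 1
  simpa using this.symm

lemma exp_skew (D : V →L[ℝ] V) (hD : ∀ x y, inner ℝ (D x) y = - inner ℝ x (D y)) (x y : V) :
    inner ℝ (exp D x) (exp D y) = inner ℝ x y := by
  have hd : ∀ t : ℝ, HasDerivAt (fun s : ℝ => inner ℝ (exp (s • D) x) (exp (s • D) y)) 0 t := by
    intro t
    have h1 := (hasDerivAt_expv D x t).inner ℝ (hasDerivAt_expv D y t)
    refine h1.congr_deriv ?_
    simp [hD]
  have := is_const_of_deriv_eq_zero (fun t => (hd t).differentiableAt) (fun t => (hd t).deriv) 1 0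
  simpa using this

lemma exists_small (δ : ℝ) (hδ : 0 < δ) : ∃ ε > 0, ∀ Y : V →L[ℝ] V, ‖Y‖ < ε →
    ∀ t ∈ Set.Icc (0:ℝ) 1, ‖exp (t • Y) - 1‖ ≤ δ := by
  have hc : Continuous (exp : (V →L[ℝ] V) → (V →L[ℝ] V)) := by
    let _ : NormedAlgebra ℚ (V →L[ℝ] V) := NormedAlgebra.restrictScalars ℚ ℝ _
    exact exp_continuous
  obtain ⟨ε, hε, h⟩ := Metric.continuous_iff.1 hc 0 δ hδ
  refine ⟨ε, hε, fun Y hY t ht => ?_⟩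
  have := h (t • Y) (by
    rw [dist_zero_right, norm_smul, Real.norm_of_nonneg ht.1]
    nlinarith [norm_nonneg Y, ht.2])
  rw [dist_eq_norm, exp_zero] at this
  exact this.le

/-- mean value: derivative close to `w` and same endpoints -/
lemma mv (g g' : ℝ → V) (hg : ∀ t, HasDerivAt g (g' t) t) (w : V) (K : ℝ)
    (hK : ∀ t ∈ Set.Icc (0:ℝ) 1, ‖g' t - w‖ ≤ K) (h01 : g 1 = g 0) : ‖w‖ ≤ K := by
  have := norm_image_sub_le_of_norm_deriv_le_segment_01' (f := fun t => g t - t • w)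
    (f' := fun t => g' t - w) (C := K) (fun t ht => by
      have h2 := (hg t).sub ((hasDerivAt_id t).smul_const w)
      simp only [one_smul] at h2
      exact h2.hasDerivWithinAt) (fun t ht => hK t ⟨ht.1, ht.2.le⟩)
  simpa [h01] using this

lemma exp_fix_small : ∃ ε > 0, ∀ Y : V →L[ℝ] V, ‖Y‖ < ε → ∀ v, exp Y v = v → Y v = 0 := by
  obtain ⟨ε, hε, h⟩ := exists_small (V := V) (1/2) (by norm_num)
  refine ⟨ε, hε, fun Y hY v hv => ?_⟩
  have := mv (fun t => exp (t • Y) v) (fun t => Y (exp (t • Y) v)) (hasDerivAt_expv Y v) (Y v)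
    (1/2 * ‖Y v‖) (by
      intro t ht
      rw [← exp_comm_apply (t • Y) Y (by simp) v]
      have := (exp (t • Y) - 1).le_of_opNorm_le (h Y hY t ht) (Y v)
      simpa using this) (by simpa using hv)
  have h0 : ‖Y v‖ = 0 := by linarith [norm_nonneg (Y v)]
  simpa using h0

lemma log_der (b : V →L[ℝ] V →L[ℝ] V) : ∃ ε > 0, ∀ D : V →L[ℝ] V, ‖D‖ < ε →
    (∀ x y, exp D (b x y) = b (exp D x) (exp D y)) →
    ∀ x y, D (b x y) = b (D x) y + b x (D y) := by
  obtain ⟨ε, hε, h⟩ := exists_small (V := V) (1/10) (by norm_num)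
  refine ⟨ε, hε, fun D hD hb => ?_⟩
  -- the defect
  let w : V →L[ℝ] V →L[ℝ] V := (ContinuousLinearMap.compL ℝ V V V D).comp b - b.comp D -
    ((ContinuousLinearMap.compL ℝ V V V).flip D).comp b
  have hw : ∀ x y, w x y = D (b x y) - b (D x) y - b x (D y) := fun x y => by simp [w]
  suffices h0 : w = 0 by
    intro x y
    have := hw x y
    rw [h0] at this
    simp only [zero_apply] at this
    rw [sub_sub] at this
    exact (sub_eq_zero.1 this.symm)
  have key : ∀ x y, ‖w x y‖ ≤ 1/2 * ‖w‖ * ‖x‖ * ‖y‖ := by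
    intro x y
    refine mv (fun t => exp (t • D) (b (exp (t • (-D)) x) (exp (t • (-D)) y)))
      (fun t => exp (t • D) (w (exp (t • (-D)) x) (exp (t • (-D)) y))) ?_ _ _ ?_ ?_
    · intro t
      have h1 := (b.hasFDerivAt.comp_hasDerivAt t (hasDerivAt_expv (-D) x t)).clm_apply
        (hasDerivAt_expv (-D) y t)
      have h2 := (hasDerivAt_exp_smul_const (𝕂 := ℝ) D t).clm_apply h1
      refine h2.congr_deriv ?_
      rw [hw]
      simp [← sub_eq_add_neg, sub_sub, add_comm]
      abel
    · intro t ht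
      have e1 := h D hD t ht
      have e2 := h (-D) (by simpa using hD) t ht
      set E := exp (t • D)
      set F := exp (t • (-D))
      have a1 : ∀ z, ‖E z - z‖ ≤ 1/10 * ‖z‖ := fun z => by
        simpa using (E - 1).le_of_opNorm_le e1 z
      have a2 : ∀ z, ‖F z - z‖ ≤ 1/10 * ‖z‖ := fun z => by
        simpa using (F - 1).le_of_opNorm_le e2 z
      have a3 : ∀ z, ‖F z‖ ≤ 11/10 * ‖z‖ := fun z => by
        have := norm_add_le (F z - z) z
        rw [sub_add_cancel] at this
        linarith [a2 z]
      have b1 : ‖w (F x) (F y)‖ ≤ ‖w‖ * (11/10 * ‖x‖) * (11/10 * ‖y‖) :=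
        (w.le_opNorm₂ _ _).trans (by gcongr <;> apply a3)
      have b2 : ‖w (F x - x) (F y)‖ ≤ ‖w‖ * (1/10 * ‖x‖) * (11/10 * ‖y‖) :=
        (w.le_opNorm₂ _ _).trans (by gcongr <;> first | apply a3 | apply a2)
      have b3 : ‖w x (F y - y)‖ ≤ ‖w‖ * (‖x‖) * (1/10 * ‖y‖) :=
        (w.le_opNorm₂ _ _).trans (by gcongr; apply a2)
      have b4 := a1 (w (F x) (F y))
      have e : E (w (F x) (F y)) - w x y = (E (w (F x) (F y)) - w (F x) (F y)) +
          w (F x - x) (F y) + w x (F y - y) := by simp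
      rw [e]
      have := norm_add₃_le (a := E (w (F x) (F y)) - w (F x) (F y)) (b := w (F x - x) (F y))
        (c := w x (F y - y))
      have p : 0 ≤ ‖w‖ * ‖x‖ * ‖y‖ := by positivity
      nlinarith
    · simp [hb, exp_neg_apply']
  have hn : ‖w‖ ≤ 1/2 * ‖w‖ := w.opNorm_le_bound₂ (by positivity) key
  have : ‖w‖ = 0 := by linarith [norm_nonneg w]
  exact (norm_eq_zero (a := w)).1 this

/-- perturbation of kernels -/
lemma ker_perturb (S : V →L[ℝ] V) (hS : ∀ v, S (S v) = 0 → S v = 0) :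
    ∃ c > 0, ∀ U : V →L[ℝ] V, ‖U‖ < c → (∀ v, U (S v) = S (U v)) →
      ∀ v, S v + U v = 0 → S v = 0 := by
  let R : LinearMap.range (S : V →ₗ[ℝ] V) →ₗ[ℝ] V := (S : V →ₗ[ℝ] V).domRestrict _
  have hR : LinearMap.ker R = ⊥ := by
    rw [LinearMap.ker_eq_bot']
    rintro ⟨_, v, rfl⟩ h
    have := hS v (by simpa [R] using h)
    simpa using this
  obtain ⟨K, hK, hl⟩ := R.exists_antilipschitzWith hR
  refine ⟨(K : ℝ)⁻¹, by positivity, fun U hU hc v hv => ?_⟩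
  by_contra hne
  have h1 := hl.le_mul_dist ⟨S v, v, rfl⟩ 0
  simp only [map_zero, dist_zero_right, R, LinearMap.domRestrict_apply] at h1
  have h1 : ‖S v‖ ≤ K * ‖S (S v)‖ := h1
  have h2 : S (S v) = - U (S v) := by
    rw [hc, ← map_neg, eq_neg_of_add_eq_zero_left hv]
  rw [h2, norm_neg] at h1
  have h3 := U.le_opNorm (S v)
  have h4 : 0 < ‖S v‖ := norm_pos_iff.2 hne
  have hK' : (0:ℝ) < K := hK
  have h5 : K * (‖U‖ * ‖S v‖) < K * ((K:ℝ)⁻¹ * ‖S v‖) := by gcongr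
  rw [← mul_assoc (K:ℝ) (K:ℝ)⁻¹, mul_inv_cancel₀ hK'.ne', one_mul] at h5
  have h6 : (K:ℝ) * ‖U (S v)‖ ≤ K * (‖U‖ * ‖S v‖) := by gcongr
  linarith

/-- Rotation formula at half turn. -/
lemma half_turn (T : V →L[ℝ] V) (h : V) (w : ℝ) (hw : 0 < w) (hT : T (T h) = -(w^2) • h) :
    exp ((Real.pi / w) • T) h = - h := by
  have := ode_unique T (fun s => Real.cos (s * w) • h + (Real.sin (s * w) / w) • T h) (by
    intro s
    have hl : HasDerivAt (fun s : ℝ => s * w) w s := by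
      simpa using (hasDerivAt_id s).mul_const w
    have h1 := (hl.cos.smul_const h).add ((hl.sin.div_const w).smul_const (T h))
    refine h1.congr_deriv ?_
    simp only [map_add, map_smul, hT, smul_smul]
    rw [add_comm]
    congr 2 <;> field_simp) (Real.pi / w)
  simp only [zero_mul, Real.cos_zero, Real.sin_zero, zero_div, zero_smul, add_zero, one_smul] at this
  rw [← this, div_mul_cancel₀ _ hw.ne']
  simp

/-- dimension of kernel along analytic families -/
lemma ker_analytic (F : ℝ → V →L[ℝ] V) (hF : ∀ t, AnalyticAt ℝ F t) (r : ℕ)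
    (h0 : ∀ᶠ t in nhds (0:ℝ), r ≤ finrank ℝ (LinearMap.ker (F t : V →ₗ[ℝ] V))) (t : ℝ)
    (hS : ∀ v, F t (F t v) = 0 → F t v = 0) :
    r ≤ finrank ℝ (LinearMap.ker (F t : V →ₗ[ℝ] V)) := by
  let b := Module.finBasis ℝ (Module.End ℝ V)
  let φ : Module.End ℝ V →ₗ[ℝ] Module.End ℝ V := LinearMap.id
  have hz : ∀ j < r, ∀ s : ℝ, (F s : V →ₗ[ℝ] V).charpoly.coeff j = 0 := by
    intro j hj
    have ha : AnalyticOnNhd ℝ (fun s : ℝ => (F s : V →ₗ[ℝ] V).charpoly.coeff j) Set.univ := by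
      have e : (fun s : ℝ => (F s : V →ₗ[ℝ] V).charpoly.coeff j) = fun s =>
          MvPolynomial.aeval (b.repr (F s : V →ₗ[ℝ] V)) ((LinearMap.polyCharpoly φ b).coeff j) := by
        funext s
        have := LinearMap.polyCharpoly_coeff_eval φ b (F s : V →ₗ[ℝ] V) j
        simp only [φ, LinearMap.id_apply] at this
        rw [← this, MvPolynomial.aeval_eq_eval]
      rw [e]
      apply AnalyticOnNhd.aeval_mvPolynomial
      intro i s _
      let ℓ : (V →L[ℝ] V) →ₗ[ℝ] ℝ := (b.coord i) ∘ₗ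
        (ContinuousLinearMap.coeLM ℝ)
      have := (ℓ.toContinuousLinearMap.analyticAt (F s)).comp (hF s)
      exact this
    have := ha.eq_of_eventuallyEq (g := fun _ => 0) analyticOnNhd_const (z₀ := 0) (by
      filter_upwards [h0] with s hs
      have h1 := LinearMap.finrank_maxGenEigenspace_zero_eq (F s : V →ₗ[ℝ] V)
      apply Polynomial.coeff_eq_zero_of_lt_natTrailingDegree
      rw [← h1]
      refine lt_of_lt_of_le hj (hs.trans (Submodule.finrank_mono ?_))
      intro v hv
      rw [Module.End.mem_maxGenEigenspace]
      exact ⟨1, by simpa using hv⟩)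
    intro s
    exact congrFun this s
  have h1 := LinearMap.finrank_maxGenEigenspace_zero_eq (F t : V →ₗ[ℝ] V)
  have h2 : r ≤ (F t : V →ₗ[ℝ] V).charpoly.natTrailingDegree := by
    apply Polynomial.le_natTrailingDegree (LinearMap.charpoly_monic _).ne_zero
    intro j hj; exact hz j hj t
  rw [← h1] at h2
  refine h2.trans (Submodule.finrank_mono ?_)
  intro v hv
  rw [Module.End.mem_maxGenEigenspace] at hv
  obtain ⟨k, hk⟩ := hv
  simp only [zero_smul, sub_zero] at hk
  induction k with
  | zero => simp at hk; simp [hk]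
  | succ n ih =>
    cases n with
    | zero => simpa using hk
    | succ n =>
      apply ih
      rw [pow_succ', pow_succ'] at hk
      rw [pow_succ']
      exact hS _ hk

end analysis
end OrthCartan
namespace OrthCartan
open NormedSpace Module
set_option linter.unusedSectionVars false

/-- Compact semisimple Lie bracket on a Euclidean space. -/
structure CLie (V : Type*) [NormedAddCommGroup V] [InnerProductSpace ℝ V] where
  br : V →L[ℝ] V →L[ℝ] V
  self : ∀ x, br x x = 0
  jac : ∀ x y z, br x (br y z) = br (br x y) z + br y (br x z)
  inv : ∀ x y z, inner ℝ (br x y) z = - inner ℝ y (br x z)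
  inn : ∀ D : V →L[ℝ] V, (∀ x y, D (br x y) = br (D x) y + br x (D y)) → ∃ z, br z = D
  cent : ∀ x, br x = 0 → x = 0

namespace CLie
variable {V : Type*} [NormedAddCommGroup V] [InnerProductSpace ℝ V] [FiniteDimensional ℝ V]
variable (S : CLie V)

lemma skew (x y : V) : S.br x y = - S.br y x := by
  have := S.self (x + y)
  simp only [map_add, add_apply, S.self, zero_add, add_zero] at this
  exact eq_neg_of_add_eq_zero_left (by rw [add_comm]; exact this)

lemma zero_comm {x y : V} (h : S.br x y = 0) : S.br y x = 0 := by
  rw [S.skew, h, neg_zero]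

/-- commuting elements have commuting `ad`. -/
lemma comm_ad {x y : V} (h : S.br x y = 0) (z : V) : S.br x (S.br y z) = S.br y (S.br x z) := by
  rw [S.jac, h]; simp

lemma sq_zero {x v : V} (h : S.br x (S.br x v) = 0) : S.br x v = 0 := by
  have := S.inv x v (S.br x v)
  rw [h, inner_zero_right, neg_zero] at this
  exact inner_self_eq_zero.1 this

/-- orthogonal automorphism -/
def IsAut (φ : V →L[ℝ] V) : Prop :=
  (∀ x y, φ (S.br x y) = S.br (φ x) (φ y)) ∧ ∀ x y, inner ℝ (φ x) (φ y) = inner ℝ x y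

variable {S}
lemma IsAut.one : S.IsAut 1 := ⟨fun _ _ => rfl, fun _ _ => rfl⟩

lemma IsAut.mul {φ ψ : V →L[ℝ] V} (h : S.IsAut φ) (k : S.IsAut ψ) : S.IsAut (φ * ψ) :=
  ⟨fun x y => by simp [k.1, h.1], fun x y => by simp [k.2, h.2]⟩

lemma IsAut.inj {φ : V →L[ℝ] V} (h : S.IsAut φ) : Function.Injective φ := by
  intro x y hxy
  have := h.2 (x - y) (x - y)
  rw [map_sub, hxy, sub_self, inner_zero_left] at this
  exact sub_eq_zero.1 (inner_self_eq_zero.1 this.symm)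

lemma IsAut.surj {φ : V →L[ℝ] V} (h : S.IsAut φ) : Function.Surjective φ :=
  (LinearMap.injective_iff_surjective (f := (φ : V →ₗ[ℝ] V))).1 h.inj

lemma IsAut.semisimple {φ : V →L[ℝ] V} (h : S.IsAut φ) (v : V)
    (hv : (φ - 1) ((φ - 1) v) = 0) : (φ - 1) v = 0 := by
  set u := (φ - 1) v with hu
  have h1 : φ u = u := by simpa [sub_eq_zero] using hv
  have h2 : φ v = v + u := by simp [hu]
  have h3 := h.2 u v
  rw [h1, h2, inner_add_right] at h3
  exact (inner_self_eq_zero (𝕜 := ℝ)).1 (by linarith)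

lemma isAut_exp (x : V) : S.IsAut (exp (S.br x)) :=
  ⟨exp_der S.br _ (S.jac x), exp_skew _ (S.inv x)⟩

variable (S)
lemma isCompact_aut : IsCompact {φ : V →L[ℝ] V | S.IsAut φ} := by
  have : ProperSpace (V →L[ℝ] V) := FiniteDimensional.proper ℝ _
  apply Metric.isCompact_of_isClosed_isBounded
  · simp only [IsAut, Set.ofPred_and, Set.ofPred_forall]
    refine IsClosed.inter ?_ ?_ <;> refine isClosed_iInter fun x => isClosed_iInter fun y =>
      isClosed_eq (by fun_prop) (by fun_prop)
  · refine (Metric.isBounded_closedBall (x := (0 : V →L[ℝ] V)) (r := 1)).subset ?_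
    intro φ hφ
    rw [mem_closedBall_zero_iff]
    refine φ.opNorm_le_bound zero_le_one fun x => ?_
    have := hφ.2 x x
    rw [real_inner_self_eq_norm_sq, real_inner_self_eq_norm_sq] at this
    rw [one_mul]
    exact (pow_le_pow_iff_left₀ (norm_nonneg _) (norm_nonneg _) two_ne_zero).1 this.le

/-- abelian subspace -/
def Ab (T : Submodule ℝ V) : Prop := ∀ x ∈ T, ∀ y ∈ T, S.br x y = 0

/-- self-centralizing subspace -/
def Max (T : Submodule ℝ V) : Prop := S.Ab T ∧ ∀ z, (∀ a ∈ T, S.br a z = 0) → z ∈ T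

variable {S}
lemma Ab.generic {T : Submodule ℝ V} (hT : S.Ab T) :
    ∃ m ∈ T, ∀ z, S.br m z = 0 → ∀ a ∈ T, S.br a z = 0 := by
  let f : T → ℕ := fun m => finrank ℝ (LinearMap.ker (S.br m : V →ₗ[ℝ] V))
  obtain ⟨m, hm⟩ : ∃ m : T, ∀ m', f m ≤ f m' := by
    have := Function.argmin_le f
    exact ⟨Function.argmin f, fun m' => this m'⟩
  refine ⟨m, m.2, fun z hz a ha => ?_⟩
  obtain ⟨c, hc, h⟩ := ker_perturb (S.br m) (fun v hv => S.sq_zero hv)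
  obtain ⟨s, hs, hsc⟩ : ∃ s : ℝ, 0 < s ∧ s * ‖S.br a‖ < c := by
    refine ⟨c / (2 * (‖S.br a‖ + 1)), by positivity, ?_⟩
    rw [div_mul_eq_mul_div, div_lt_iff₀ (by positivity)]
    nlinarith [norm_nonneg (S.br a)]
  have hcomm := S.comm_ad (hT a ha m m.2)
  have hk : LinearMap.ker (S.br (m + s • a) : V →ₗ[ℝ] V) ≤
      LinearMap.ker (S.br m : V →ₗ[ℝ] V) := by
    intro v hv
    refine h (s • S.br a) (by rw [norm_smul, Real.norm_of_nonneg hs.le]; exact hsc)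
      (fun v => by simp [hcomm]) v ?_
    simpa using hv
  have heq := Submodule.eq_of_le_of_finrank_le hk (hm ⟨m + s • a, T.add_mem m.2 (T.smul_mem _ ha)⟩)
  have : z ∈ LinearMap.ker (S.br (m + s • a) : V →ₗ[ℝ] V) := by
    rw [heq]; exact hz
  have h2 : S.br m z + s • S.br a z = 0 := by simpa using this
  rw [hz, zero_add] at h2
  exact (smul_eq_zero.1 h2).resolve_left hs.ne'

lemma Ab.exists_max {T M : Submodule ℝ V} (hT : S.Ab T) (hM : T ≤ M) :
    ∃ A, S.Ab A ∧ T ≤ A ∧ A ≤ M ∧ ∀ z ∈ M, (∀ a ∈ A, S.br a z = 0) → z ∈ A := by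
  let P : Set (Submodule ℝ V) := {A | S.Ab A ∧ T ≤ A ∧ A ≤ M}
  obtain ⟨A, hA, hmax⟩ := (wellFounded_gt (α := Submodule ℝ V)).has_min P ⟨T, hT, le_rfl, hM⟩
  refine ⟨A, hA.1, hA.2.1, hA.2.2, fun z hz hc => ?_⟩
  by_contra hzA
  refine hmax (A ⊔ Submodule.span ℝ {z}) ⟨?_, hA.2.1.trans le_sup_left,
    sup_le hA.2.2 (by simpa using hz)⟩ ?_
  · intro x hx y hy
    obtain ⟨a, ha, b, hb, rfl⟩ := Submodule.mem_sup.1 hx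
    obtain ⟨a', ha', b', hb', rfl⟩ := Submodule.mem_sup.1 hy
    obtain ⟨r, rfl⟩ := Submodule.mem_span_singleton.1 hb
    obtain ⟨r', rfl⟩ := Submodule.mem_span_singleton.1 hb'
    simp [hA.1 a ha a' ha', hc a ha, S.zero_comm (hc a' ha'), S.self]
  · refine lt_of_le_of_ne le_sup_left fun h => hzA ?_
    rw [h]
    exact Submodule.mem_sup_right (Submodule.mem_span_singleton_self z)

lemma Ab.exists_Max {T : Submodule ℝ V} (hT : S.Ab T) : ∃ A, S.Max A ∧ T ≤ A := by
  obtain ⟨A, h1, h2, -, h3⟩ := hT.exists_max (M := ⊤) le_top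
  exact ⟨A, ⟨h1, fun z hz => h3 z trivial hz⟩, h2⟩

/-- Argument of Hunt. -/
lemma Max.finrank_le {A B : Submodule ℝ V} (hA : S.Max A) (hB : S.Max B) :
    finrank ℝ B ≤ finrank ℝ A := by
  obtain ⟨x, hx, hx'⟩ := hA.1.generic
  obtain ⟨y, hy, hy'⟩ := hB.1.generic
  obtain ⟨φ, hφ, hmax⟩ := S.isCompact_aut.exists_isMaxOn ⟨1, IsAut.one⟩
    (f := fun φ : V →L[ℝ] V => inner ℝ (φ x) y) (by fun_prop)
  have hφ : S.IsAut φ := hφ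
  have h0 : S.br y (φ x) = 0 := by
    have key : ∀ m, inner ℝ (S.br m (φ x)) y = 0 := by
      intro m
      have hd := (hasDerivAt_expv (S.br m) (φ x) 0).inner ℝ (hasDerivAt_const 0 y)
      have hl : IsLocalMax (fun t : ℝ => inner ℝ (exp (t • S.br m) (φ x)) y) 0 := by
        refine Filter.Eventually.of_forall fun t => ?_
        have h2 := (isAut_exp (S := S) (t • m)).mul hφ
        have := hmax h2
        simpa using this
      have := hl.hasDerivAt_eq_zero hd
      simpa using this
    have h2 := key (S.br y (φ x))
    have : S.br (S.br y (φ x)) (φ x) = - S.br (φ x) (S.br y (φ x)) := S.skew _ _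
    rw [this, inner_neg_left, S.inv, neg_neg, S.skew (φ x) y, inner_neg_right, neg_eq_zero] at h2
    exact inner_self_eq_zero.1 h2
  have hxB : φ x ∈ B := hB.2 _ (hy' _ h0)
  have : B ≤ A.map (φ : V →ₗ[ℝ] V) := by
    intro b hb
    obtain ⟨z, rfl⟩ := hφ.surj b
    refine ⟨z, hA.2 z (hx' z ?_), rfl⟩
    apply hφ.inj
    rw [hφ.1, map_zero]
    exact hB.1 _ hxB _ hb
  exact (Submodule.finrank_mono this).trans (Submodule.finrank_map_le _ _)

lemma Max.le_ker {A : Submodule ℝ V} (hA : S.Max A) (y : V) :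
    finrank ℝ A ≤ finrank ℝ (LinearMap.ker (S.br y : V →ₗ[ℝ] V)) := by
  have hs : S.Ab (Submodule.span ℝ {y}) := by
    intro a ha b hb
    obtain ⟨r, rfl⟩ := Submodule.mem_span_singleton.1 ha
    obtain ⟨r', rfl⟩ := Submodule.mem_span_singleton.1 hb
    simp [S.self]
  obtain ⟨B, hB, hle⟩ := hs.exists_Max
  refine (hB.finrank_le hA).trans (Submodule.finrank_mono ?_)
  intro z hz
  exact hB.1 y (hle (Submodule.mem_span_singleton_self y)) z hz

variable (S)
/-- products of exponentials -/
noncomputable def pr (l : List V) (t : ℝ) : V →L[ℝ] V :=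
  (l.map (fun x => exp (t • S.br x))).prod

lemma isAut_pr (l : List V) (t : ℝ) : S.IsAut (S.pr l t) := by
  induction l with
  | nil => exact IsAut.one
  | cons x l ih =>
    have := (isAut_exp (S := S) (t • x)).mul ih
    simpa [pr] using this

lemma analytic_pr (l : List V) (t : ℝ) : AnalyticAt ℝ (S.pr l) t := by
  induction l with
  | nil => exact analyticAt_const
  | cons x l ih =>
    have h1 : AnalyticAt ℝ (fun s : ℝ => exp (s • S.br x)) t := by
      have h2 : AnalyticAt ℝ (fun s : ℝ => s • S.br x) t := analyticAt_id.smul analyticAt_const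
      exact AnalyticAt.fun_comp (f := fun s : ℝ => s • S.br x) (x := t)
        (NormedSpace.exp_analytic (𝕂 := ℝ) (t • S.br x)) h2
    have := h1.mul ih
    exact this

variable {S}
lemma Max.le_fix {C : Submodule ℝ V} (hC : S.Max C) (l : List V) :
    finrank ℝ C ≤ finrank ℝ (LinearMap.ker ((S.pr l 1 - 1 : V →L[ℝ] V) : V →ₗ[ℝ] V)) := by
  refine ker_analytic (fun t => S.pr l t - 1)
    (fun t => (S.analytic_pr l t).sub analyticAt_const) _ ?_ 1 (S.isAut_pr l 1).semisimple
  obtain ⟨ε, hε, h⟩ := log_der S.br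
  have hnh : (exp : (V →L[ℝ] V) → _) '' Metric.ball 0 ε ∈ nhds (1 : V →L[ℝ] V) := by
    have h1 : HasStrictFDerivAt exp
        ((ContinuousLinearEquiv.refl ℝ (V →L[ℝ] V)) : (V →L[ℝ] V) →L[ℝ] (V →L[ℝ] V)) 0 :=
      hasStrictFDerivAt_exp_zero (𝕂 := ℝ) (𝔸 := V →L[ℝ] V)
    have h2 := h1.map_nhds_eq_of_equiv
    rw [exp_zero] at h2
    rw [← h2]
    exact Filter.image_mem_map (Metric.ball_mem_nhds _ hε)
  have hz : S.pr l 0 = 1 := by simp [pr]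
  have hcont := (S.analytic_pr l 0).continuousAt
  rw [ContinuousAt, hz] at hcont
  filter_upwards [hcont hnh] with t ht
  obtain ⟨D, hD, hDe⟩ := ht
  have hDe : exp D = S.pr l t := hDe
  obtain ⟨z, hz⟩ := S.inn D (h D (by simpa using hD) (by rw [hDe]; exact (S.isAut_pr l t).1))
  refine (hC.le_ker z).trans (Submodule.finrank_mono ?_)
  intro v hv
  have hv : S.br z v = 0 := hv
  have := exp_apply_of_eq_zero D v (by rw [← hz]; exact hv)
  rw [hDe] at this
  simp [this]

/-- reflections in the Weyl group -/
lemma Max.refl {C : Submodule ℝ V} (hC : S.Max C) {v : V} (hv : v ∈ C) (hv0 : v ≠ 0) :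
    ∃ e : V, ∃ h ∈ C, inner ℝ h v ≠ 0 ∧
      ∀ c ∈ C, exp (S.br e) c = c - (2 * inner ℝ h c / inner ℝ h h) • h := by
  let T : C → V →ₗ[ℝ] V := fun c => (S.br c : V →ₗ[ℝ] V) ∘ₗ (S.br v : V →ₗ[ℝ] V)
  have hTs : ∀ c, (T c).IsSymmetric := by
    intro c x y
    have : S.br v (S.br c y) = S.br c (S.br v y) := S.comm_ad (hC.1 v hv c c.2) y
    simp [T, S.inv, this]
  have hTc : Pairwise (Function.onFun Commute T) := by
    intro c d _
    refine LinearMap.ext fun x => ?_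
    simp only [T, Module.End.mul_apply, LinearMap.comp_apply, ContinuousLinearMap.coe_coe]
    rw [S.comm_ad (hC.1 v hv d d.2), S.comm_ad (hC.1 c c.2 d d.2),
      S.comm_ad (hC.1 v hv c c.2)]
  have htop := LinearMap.IsSymmetric.iSup_iInf_eq_top_of_commute hTs hTc
  obtain ⟨χ, hχ⟩ : ∃ χ : C → ℝ, ¬ ((⨅ i, Module.End.eigenspace (T i) (χ i)) ≤
      LinearMap.ker (S.br v : V →ₗ[ℝ] V)) := by
    by_contra hcon
    push Not at hcon
    have := iSup_le hcon
    rw [htop] at this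
    refine hv0 (S.cent v ?_)
    ext x
    exact this (Submodule.mem_top (x := x))
  obtain ⟨e, he, hek⟩ := SetLike.not_le_iff_exists.1 hχ
  rw [Submodule.mem_iInf] at he
  obtain ⟨f, hf⟩ : ∃ f, f = S.br v e := ⟨_, rfl⟩
  have hf0 : f ≠ 0 := by rw [hf]; exact hek
  have he0 : e ≠ 0 := by rintro rfl; simp at hf; exact hf0 hf
  have hcf : ∀ c (hc : c ∈ C), S.br c f = χ ⟨c, hc⟩ • e := by
    intro c hc
    have := Module.End.mem_eigenspace_iff.1 (he ⟨c, hc⟩)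
    rw [hf]; exact this
  set χv := χ ⟨v, hv⟩ with hχv
  have hχv0 : χv ≠ 0 := by
    intro h0
    have h1 := hcf v hv
    rw [← hχv, h0, zero_smul, hf] at h1
    exact hek (S.sq_zero h1)
  have hce : ∀ c (hc : c ∈ C), S.br c e = (χ ⟨c, hc⟩ / χv) • f := by
    intro c hc
    have h1 : χv • S.br c e = χ ⟨c, hc⟩ • f := by
      rw [← map_smul, ← hcf v hv, S.comm_ad (hC.1 c hc v hv), hcf c hc, map_smul, hf]
    rw [div_eq_inv_mul, mul_smul, ← h1, smul_smul, inv_mul_cancel₀ hχv0, one_smul]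
  obtain ⟨h, hh⟩ : ∃ h, h = S.br e f := ⟨_, rfl⟩
  have hhC : h ∈ C := by
    refine hC.2 h fun c hc => ?_
    rw [hh, S.jac, hce c hc, hcf c hc]
    simp [S.self]
  -- inner products with h
  have hin : ∀ c (hc : c ∈ C), inner ℝ h c = - χ ⟨c, hc⟩ * inner ℝ e e := by
    intro c hc
    have h1 : inner ℝ h c = inner ℝ e (S.br f c) := by
      rw [hh, S.skew e f, inner_neg_left, S.inv, neg_neg]
    rw [h1, S.skew f c, hcf c hc, inner_neg_right, inner_smul_right]; ring
  have hee : 0 < inner ℝ e e := real_inner_self_pos.2 he0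
  have hhv : inner ℝ h v ≠ 0 := by
    rw [hin v hv]; exact mul_ne_zero (neg_ne_zero.2 hχv0) hee.ne'
  have hh0 : h ≠ 0 := by rintro rfl; simp at hhv
  have hhh : 0 < inner ℝ h h := real_inner_self_pos.2 hh0
  have hχn : χv < 0 := by
    have h1 : χv * inner ℝ e e = - inner ℝ f f := by
      have : inner ℝ (S.br v f) e = χv * inner ℝ e e := by
        rw [hcf v hv, inner_smul_left]; rfl
      rw [← this, S.inv, ← hf]
    have hff : 0 < inner ℝ f f := real_inner_self_pos.2 hf0
    by_contra hcon
    push Not at hcon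
    nlinarith
  have hχh : χ ⟨h, hhC⟩ < 0 := by
    have := hin h hhC
    by_contra hcon
    push Not at hcon
    nlinarith
  -- the rotation
  set q := χ ⟨h, hhC⟩ / χv with hq
  have hq0 : 0 < q := div_pos_of_neg_of_neg hχh hχn
  have hTT : S.br e (S.br e h) = -(Real.sqrt q ^ 2) • h := by
    rw [Real.sq_sqrt hq0.le, S.skew e h, hce h hhC, map_neg, map_smul, ← hh, neg_smul]
  have hrot := half_turn (S.br e) h (Real.sqrt q) (Real.sqrt_pos.2 hq0) hTT
  refine ⟨(Real.pi / Real.sqrt q) • e, h, hhC, hhv, fun c hc => ?_⟩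
  rw [map_smul]
  set k := inner ℝ h c / inner ℝ h h with hk
  have hdC : c - k • h ∈ C := C.sub_mem hc (C.smul_mem _ hhC)
  have hd0 : S.br e (c - k • h) = 0 := by
    have h1 : inner ℝ h (c - k • h) = 0 := by
      rw [inner_sub_right, inner_smul_right, hk, div_mul_cancel₀ _ hhh.ne', sub_self]
    rw [hin _ hdC] at h1
    have h2 : χ ⟨_, hdC⟩ = 0 := by simpa [hee.ne', he0] using h1
    rw [S.skew, hce _ hdC, h2]; simp
  have h3 := exp_apply_of_eq_zero ((Real.pi / Real.sqrt q) • S.br e) (c - k • h) (by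
    simp only [smul_apply, hd0, smul_zero])
  rw [map_sub, map_smul, hrot] at h3
  have h4 : exp ((Real.pi / Real.sqrt q) • S.br e) c = c - k • h + k • -h :=
    sub_eq_iff_eq_add.1 h3
  rw [h4, mul_div_assoc, ← hk, two_mul, add_smul, smul_neg]
  abel

/-- A Coxeter-like element. -/
lemma Max.coxeter {C : Submodule ℝ V} (hC : S.Max C) :
    ∃ l : List V, (∀ c ∈ C, S.pr l 1 c ∈ C) ∧ ∀ c ∈ C, S.pr l 1 c = c → c = 0 := by
  let F : List V → Submodule ℝ V := fun l =>
    C ⊓ LinearMap.ker ((S.pr l 1 - 1 : V →L[ℝ] V) : V →ₗ[ℝ] V)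
  have hF : ∀ l c, c ∈ F l ↔ c ∈ C ∧ S.pr l 1 c = c := by
    intro l c; simp [F, sub_eq_zero]
  let P : Set (Submodule ℝ V) := {M | ∃ l, (∀ c ∈ C, S.pr l 1 c ∈ C) ∧ F l = M}
  obtain ⟨M, ⟨l, hl, rfl⟩, hmin⟩ := (wellFounded_lt (α := Submodule ℝ V)).has_min P
    ⟨F [], [], by simp [pr], rfl⟩
  refine ⟨l, hl, fun v hv hfix => ?_⟩
  by_contra hv0
  obtain ⟨e, h, hhC, hhv, hr⟩ := hC.refl hv hv0
  have hpr : ∀ c, S.pr (e :: l) 1 c = exp (S.br e) (S.pr l 1 c) := by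
    intro c; simp [pr]
  have hh0 : inner ℝ h h ≠ 0 := by
    intro h0
    rw [inner_self_eq_zero.1 h0] at hhv
    simp at hhv
  have haut := S.isAut_pr l 1
  have hlt : ∀ c ∈ F (e :: l), c ∈ F l ∧ inner ℝ h c = 0 := by
    intro c hc
    rw [hF, hpr] at hc
    obtain ⟨hc, hc2⟩ := hc
    rw [hr _ (hl c hc)] at hc2
    set w := S.pr l 1 c with hw
    have h1 : inner ℝ (w - c) v = 0 := by
      rw [inner_sub_left, hw]
      have := haut.2 c v
      rw [hfix] at this
      rw [this, sub_self]
    have h2 : w - c = (2 * inner ℝ h w / inner ℝ h h) • h := by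
      rw [sub_eq_iff_eq_add, add_comm, ← sub_eq_iff_eq_add]; exact hc2
    rw [h2, inner_smul_left] at h1
    have h3 : 2 * inner ℝ h w / inner ℝ h h = 0 := by
      rcases mul_eq_zero.1 h1 with h1 | h1
      · exact h1
      · exact absurd h1 hhv
    rw [h3, zero_smul, sub_eq_zero] at h2
    refine ⟨(hF _ _).2 ⟨hc, h2⟩, ?_⟩
    rw [← h2]
    rcases div_eq_zero_iff.1 h3 with h3 | h3
    · linarith
    · exact absurd h3 hh0
  refine hmin (F (e :: l)) ⟨e :: l, fun c hc => ?_, rfl⟩ ?_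
  · rw [hpr, hr _ (hl c hc)]
    exact C.sub_mem (hl c hc) (C.smul_mem _ hhC)
  · refine lt_of_le_of_ne (fun c hc => (hlt c hc).1) fun heq => ?_
    have : v ∈ F (e :: l) := by rw [heq, hF]; exact ⟨hv, hfix⟩
    exact hhv (hlt v this).2

theorem main {C : Submodule ℝ V} (hC : S.Max C) :
    ∃ A, S.Max A ∧ ∀ c ∈ C, ∀ a ∈ A, inner ℝ c a = 0 := by
  obtain ⟨l, hl, hfix⟩ := hC.coxeter
  have haut := S.isAut_pr l 1
  set φ := S.pr l 1 with hφ
  let M : Submodule ℝ V := LinearMap.ker ((φ - 1 : V →L[ℝ] V) : V →ₗ[ℝ] V)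
  have hM : ∀ x, x ∈ M ↔ φ x = x := fun x => by simp [M, sub_eq_zero]
  have horth : ∀ c ∈ C, ∀ a ∈ M, inner ℝ c a = 0 := by
    intro c hc a ha
    let R : C →ₗ[ℝ] C := ((φ - 1 : V →L[ℝ] V) : V →ₗ[ℝ] V).restrict (p := C) (q := C)
      (fun x hx => C.sub_mem (hl x hx) hx)
    have hRi : Function.Injective R := by
      rw [← LinearMap.ker_eq_bot, LinearMap.ker_eq_bot']
      rintro ⟨x, hx⟩ h
      have h1 : φ x - x = 0 := congrArg Subtype.val h
      exact Subtype.ext (hfix x hx (sub_eq_zero.1 h1))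
    obtain ⟨⟨d, hd⟩, hdc⟩ := (LinearMap.injective_iff_surjective (f := R)).1 hRi ⟨c, hc⟩
    have h1 : φ d - d = c := congrArg Subtype.val hdc
    have h2 := haut.2 d a
    rw [(hM a).1 ha] at h2
    rw [← h1, inner_sub_left, h2, sub_self]
  obtain ⟨A, hA, -, hAM, hmax⟩ := Ab.exists_max (S := S) (T := ⊥) (M := M)
    (by intro x hx y hy; rw [(Submodule.mem_bot ℝ).1 hx]; simp) bot_le
  obtain ⟨m, hm, hgen⟩ := hA.generic
  have hφm : φ m = m := (hM m).1 (hAM hm)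
  have hcomm : ∀ x, S.br m (φ x) = φ (S.br m x) := fun x => by rw [haut.1, hφm]
  obtain ⟨c, hc, hpert⟩ := ker_perturb (φ - 1) haut.semisimple
  obtain ⟨ε, hε, hsm⟩ := exp_fix_small (V := V)
  -- choose a small scaling
  obtain ⟨s, hs, hs1, hs2⟩ : ∃ s : ℝ, 0 < s ∧ ‖s • S.br m‖ < ε ∧
      ‖φ * (exp (s • S.br m) - 1)‖ < c := by
    have hc1 : Filter.Tendsto (fun s : ℝ => ‖s • S.br m‖) (nhds 0) (nhds 0) := by
      have : Continuous (fun s : ℝ => ‖s • S.br m‖) := by fun_prop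
      simpa using this.tendsto 0
    have hc2 : Filter.Tendsto (fun s : ℝ => ‖φ * (exp (s • S.br m) - 1)‖) (nhds 0) (nhds 0) := by
      have hce : Continuous (exp : (V →L[ℝ] V) → (V →L[ℝ] V)) := by
        let _ : NormedAlgebra ℚ (V →L[ℝ] V) := NormedAlgebra.restrictScalars ℚ ℝ _
        exact exp_continuous
      have : Continuous (fun s : ℝ => ‖φ * (exp (s • S.br m) - 1)‖) := by fun_prop
      simpa using this.tendsto 0
    have h1 := (hc1.eventually_lt_const hε).and (hc2.eventually_lt_const hc)
    have h2 : ∀ᶠ s : ℝ in nhdsWithin 0 (Set.Ioi 0), 0 < s := self_mem_nhdsWithin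
    obtain ⟨s, hs, hs'⟩ := (h2.and (h1.filter_mono nhdsWithin_le_nhds)).exists
    exact ⟨s, hs, hs'⟩
  have hcard := hC.le_fix (l ++ [s • m])
  have hpr : ∀ v, S.pr (l ++ [s • m]) 1 v = φ (exp (s • S.br m) v) := by
    intro v; simp [pr, hφ]
  have hle : LinearMap.ker ((S.pr (l ++ [s • m]) 1 - 1 : V →L[ℝ] V) : V →ₗ[ℝ] V) ≤ A := by
    intro v hv
    have hv : φ (exp (s • S.br m) v) = v := by
      rw [← hpr]; simpa [sub_eq_zero] using hv
    have h1 : (φ - 1) v = 0 := by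
      refine hpert _ hs2 (fun x => ?_) v ?_
      · have e1 := exp_comm_apply (s • S.br m) φ (fun x => by simp [hcomm])
        simp [e1]
        abel
      · simp [hv]
    have hφv : φ v = v := by simpa [sub_eq_zero] using h1
    have h2 : exp (s • S.br m) v = v := haut.inj (by rw [hv, hφv])
    have h3 := hsm _ hs1 v h2
    have h4 : S.br m v = 0 := by
      have : s • S.br m v = 0 := h3
      exact (smul_eq_zero.1 this).resolve_left hs.ne'
    exact hmax v ((hM v).2 hφv) (hgen v h4)
  obtain ⟨Z, hZ, hAZ⟩ := hA.exists_Max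
  have : A = Z := Submodule.eq_of_le_of_finrank_le hAZ
    ((hC.finrank_le hZ).trans (hcard.trans (Submodule.finrank_mono hle)))
  subst this
  exact ⟨A, hZ, fun c hc a ha => horth c hc a (hAM ha)⟩

end CLie
end OrthCartan
namespace OrthCartan
open Module

theorem main' {V : Type*} [NormedAddCommGroup V] [InnerProductSpace ℝ V] [FiniteDimensional ℝ V]
    (br : V → V → V)
    (add_l : ∀ x y z, br (x + y) z = br x z + br y z)
    (smul_l : ∀ (r : ℝ) x z, br (r • x) z = r • br x z)
    (add_r : ∀ x y z, br x (y + z) = br x y + br x z)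
    (smul_r : ∀ (r : ℝ) x z, br x (r • z) = r • br x z)
    (self : ∀ x, br x x = 0)
    (jac : ∀ x y z, br x (br y z) = br (br x y) z + br y (br x z))
    (inv : ∀ x y z, inner ℝ (br x y) z = - inner ℝ y (br x z))
    (inn : ∀ D : V →ₗ[ℝ] V, (∀ x y, D (br x y) = br (D x) y + br x (D y)) →
      ∃ z, ∀ y, br z y = D y)
    (cent : ∀ x, (∀ y, br x y = 0) → x = 0)
    (C : Submodule ℝ V) (hC : ∀ x ∈ C, ∀ y ∈ C, br x y = 0)
    (hC' : ∀ z, (∀ a ∈ C, br a z = 0) → z ∈ C) :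
    ∃ A : Submodule ℝ V, (∀ x ∈ A, ∀ y ∈ A, br x y = 0) ∧
      (∀ z, (∀ a ∈ A, br a z = 0) → z ∈ A) ∧ ∀ c ∈ C, ∀ a ∈ A, inner ℝ c a = 0 := by
  let b : V →ₗ[ℝ] V →ₗ[ℝ] V := LinearMap.mk₂ ℝ br add_l smul_l add_r smul_r
  let S : CLie V :=
    { br := LinearMap.toContinuousLinearMap
        ((LinearMap.toContinuousLinearMap : (V →ₗ[ℝ] V) ≃ₗ[ℝ] (V →L[ℝ] V)).toLinearMap ∘ₗ b)
      self := self
      jac := jac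
      inv := inv
      inn := fun D hD => by
        obtain ⟨z, hz⟩ := inn (D : V →ₗ[ℝ] V) hD
        exact ⟨z, ContinuousLinearMap.ext hz⟩
      cent := fun x hx => cent x fun y => congrArg (fun T : V →L[ℝ] V => T y) hx }
  obtain ⟨A, hA, h⟩ := CLie.main (S := S) (C := C) ⟨hC, hC'⟩
  exact ⟨A, hA.1, hA.2, h⟩
end OrthCartan

/-- Existence of orthogonal Cartan subalgebras: given any Cartan subalgebra `C` of a compact
semisimple real Lie algebra, there is a Cartan subalgebra `C'` orthogonal to it w.r.t. the
Killing form. -/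
theorem exists_orthogonal_cartan (L : Type*) [LieRing L] [LieAlgebra ℝ L] [FiniteDimensional ℝ L]
    (hneg : ∀ x : L, x ≠ 0 → killingForm ℝ L x x < 0)
    (C : LieSubalgebra ℝ L) (hC : C.IsCartanSubalgebra) :
    ∃ C' : LieSubalgebra ℝ L, C'.IsCartanSubalgebra ∧
      ∀ c ∈ C, ∀ c' ∈ C', killingForm ℝ L c c' = 0 := by
  have hK : LieAlgebra.IsKilling ℝ L := by
    refine ⟨?_⟩
    rw [eq_bot_iff]
    intro x hx
    rw [LieSubmodule.mem_bot]
    by_contra hx0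
    have h1 := hneg x hx0
    rw [LieIdeal.mem_killingCompl] at hx
    have := hx x (LieSubmodule.mem_top x)
    linarith
  have hsymm : ∀ x y : L, killingForm ℝ L x y = killingForm ℝ L y x :=
    fun x y => LieModule.traceForm_comm ℝ L L x y
  have hinv : ∀ x y z : L, killingForm ℝ L ⁅x, y⁆ z = - killingForm ℝ L y ⁅x, z⁆ := by
    intro x y z
    have := LieModule.traceForm_apply_lie_apply ℝ L L y x z
    rw [← lie_skew x y, map_neg, LinearMap.neg_apply]
    exact congrArg Neg.neg this
  have hsq : ∀ x v : L, ⁅x, ⁅x, v⁆⁆ = 0 → ⁅x, v⁆ = 0 := by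
    intro x v h
    by_contra h0
    have h1 := hneg _ h0
    rw [hinv, h] at h1
    simp at h1
  have hCab : IsLieAbelian C := inferInstance
  have hC1 : ∀ x ∈ C.toSubmodule, ∀ y ∈ C.toSubmodule, ⁅x, y⁆ = 0 := by
    intro x hx y hy
    have := hCab.trivial ⟨x, hx⟩ ⟨y, hy⟩
    exact congrArg Subtype.val this
  have hC2 : ∀ z, (∀ a ∈ C.toSubmodule, ⁅a, z⁆ = 0) → z ∈ C.toSubmodule := by
    intro z hz
    have : z ∈ C.normalizer := by
      rw [LieSubalgebra.mem_normalizer_iff']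
      intro y hy
      rw [hz y hy]; exact C.zero_mem
    rwa [hC.self_normalizing] at this
  let core : InnerProductSpace.Core ℝ L :=
    { inner := fun x y => - killingForm ℝ L x y
      conj_inner_symm := fun x y => by simp [hsymm x y]
      re_inner_nonneg := fun x => by
        by_cases h : x = 0
        · simp [h]
        · simpa using (hneg x h).le
      add_left := fun x y z => by simp; ring
      smul_left := fun x y r => by simp
      definite := fun x hx => by
        by_contra h
        have := hneg x h
        linarith }
  obtain ⟨A, hA1, hA2, hA3⟩ : ∃ A : Submodule ℝ L, (∀ x ∈ A, ∀ y ∈ A, ⁅x, y⁆ = 0) ∧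
      (∀ z, (∀ a ∈ A, ⁅a, z⁆ = 0) → z ∈ A) ∧
      ∀ c ∈ C.toSubmodule, ∀ a ∈ A, - killingForm ℝ L c a = 0 := by
    refine @OrthCartan.main' L core.toNormedAddCommGroup (InnerProductSpace.ofCore core.toCore) ‹_›
      (fun x y => ⁅x, y⁆) add_lie smul_lie lie_add (fun r x z => lie_smul r x z) lie_self
      (fun x y z => leibniz_lie x y z) ?_ ?_ ?_ C.toSubmodule hC1 hC2
    · intro x y z
      exact congrArg Neg.neg (hinv x y z)
    · intro D hD
      let D' : LieDerivation ℝ L L :=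
        { toLinearMap := D
          leibniz' := fun x y => by
            have h : ⁅D x, y⁆ + ⁅x, D y⁆ = ⁅x, D y⁆ - ⁅y, D x⁆ := by
              rw [← lie_skew (D x) y]; abel
            exact (hD x y).trans h }
      obtain ⟨z, hz⟩ := LieDerivation.IsKilling.exists_eq_ad D'
      refine ⟨z, fun y => ?_⟩
      have := congrArg (fun E : LieDerivation ℝ L L => E y) hz
      have h2 : ⁅z, y⁆ = D' y := by simpa using this
      exact h2
    · intro x hx
      have h1 : x ∈ LieAlgebra.center ℝ L := by
        rw [LieModule.mem_maxTrivSubmodule]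
        intro y
        rw [← lie_skew, hx y, neg_zero]
      rwa [LieAlgebra.center_eq_bot, LieSubmodule.mem_bot] at h1
  let A' : LieSubalgebra ℝ L := { A with
    lie_mem' := fun {x y} hx hy => by rw [hA1 x hx y hy]; exact A.zero_mem }
  have hab : IsLieAbelian A' := ⟨fun x y => Subtype.ext (hA1 x x.2 y y.2)⟩
  refine ⟨A', ⟨inferInstance, ?_⟩, fun c hc a ha => by simpa using hA3 c hc a ha⟩
  refine le_antisymm (fun x hx => ?_) A'.le_normalizer
  rw [LieSubalgebra.mem_normalizer_iff'] at hx
  refine hA2 x fun a ha => hsq a x ?_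
  exact hA1 a ha _ (hx a ha)
end

section
/- Let L be a finite-dimensional real Lie algebra whose Killing form κ is negative definite, and let a be a regular element of L. Then there exists a regular element b of L such that L = ⁅a, L⁆ + ⁅b, L⁆ (every x ∈ L can be written x = ⁅a, u⁆ + ⁅b, v⁆ for some u, v ∈ L), κ(a, b) = 0, and in fact the centralizers Z(a) = {x : ⁅a,x⁆ = 0} and Z(b) = {x : ⁅b,x⁆ = 0} are orthogonal: κ(x, y) = 0 for all x ∈ Z(a), y ∈ Z(b). -/
open scoped RealInnerProductSpace
open Module

set_option linter.unusedSectionVars false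
set_option linter.unusedSimpArgs false

namespace CptLie

section Basic
variable {E : Type*} [NormedAddCommGroup E] [InnerProductSpace ℝ E] [FiniteDimensional ℝ E]

/-- Compact semisimple bracket on a Euclidean space. -/
structure IsCpt (β : E →L[ℝ] E →L[ℝ] E) : Prop where
  self : ∀ x, β x x = 0
  jac : ∀ x y z, β x (β y z) = β (β x y) z + β y (β x z)
  inv : ∀ x y z, ⟪β x y, z⟫ = -⟪y, β x z⟫
  center : ∀ x, (∀ y, β x y = 0) → x = 0
  der : ∀ D : E →L[ℝ] E, (∀ x y, D (β x y) = β (D x) y + β x (D y)) → ∃ y, D = β y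

/-- Isometric automorphisms. -/
def IsAut (β : E →L[ℝ] E →L[ℝ] E) (φ : E →L[ℝ] E) : Prop :=
  (∀ x y, φ (β x y) = β (φ x) (φ y)) ∧ ∀ x y, ⟪φ x, φ y⟫ = ⟪x, y⟫

theorem IsCpt.skew {β : E →L[ℝ] E →L[ℝ] E} (h : IsCpt β) (x y : E) : β x y = - β y x := by
  have := h.self (x + y)
  simp only [map_add, add_apply, h.self, zero_add, add_zero] at this
  exact eq_neg_of_add_eq_zero_right this

/-- The one parameter group. -/
noncomputable def ex (D : E →L[ℝ] E) (s : ℝ) : E →L[ℝ] E := NormedSpace.exp (s • D)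

theorem ex_zero (D : E →L[ℝ] E) : ex D 0 = 1 := by simp [ex]

theorem ex_deriv (D : E →L[ℝ] E) (s : ℝ) : HasDerivAt (ex D) (ex D s * D) s :=
  hasDerivAt_exp_smul_const D s

theorem ex_deriv' (D : E →L[ℝ] E) (s : ℝ) : HasDerivAt (ex D) (D * ex D s) s :=
  hasDerivAt_exp_smul_const' D s

theorem ex_neg_mul (D : E →L[ℝ] E) (s : ℝ) : ex D (-s) * ex D s = 1 := by
  unfold ex
  let _ : NormedAlgebra ℚ (E →L[ℝ] E) := NormedAlgebra.restrictScalars ℚ ℝ _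
  rw [← NormedSpace.exp_add_of_commute, neg_smul, neg_add_cancel, NormedSpace.exp_zero]
  exact ((Commute.refl D).smul_left _).smul_right _

theorem ex_mul_neg (D : E →L[ℝ] E) (s : ℝ) : ex D s * ex D (-s) = 1 := by
  have := ex_neg_mul D (-s); rwa [neg_neg] at this

theorem ex_analytic (D : E →L[ℝ] E) : AnalyticOnNhd ℝ (ex D) Set.univ := by
  intro s _
  have h1 : AnalyticAt ℝ (NormedSpace.exp : (E →L[ℝ] E) → (E →L[ℝ] E)) (s • D) :=
    NormedSpace.exp_analytic _
  have h2 : AnalyticAt ℝ (fun s : ℝ => s • D) s := by fun_prop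
  exact AnalyticAt.comp_of_eq (f := fun s : ℝ => s • D) (x := s) h1 h2 rfl

theorem ex_deriv_apply (D : E →L[ℝ] E) (s : ℝ) (x : E) :
    HasDerivAt (fun s => ex D s x) (ex D s (D x)) s := by
  simpa using (ex_deriv D s).clm_apply (hasDerivAt_const s x)

theorem ex_deriv_apply' (D : E →L[ℝ] E) (s : ℝ) (x : E) :
    HasDerivAt (fun s => ex D s x) (D (ex D s x)) s := by
  simpa using (ex_deriv' D s).clm_apply (hasDerivAt_const s x)

theorem ex_neg_deriv (D : E →L[ℝ] E) (s : ℝ) :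
    HasDerivAt (fun s => ex D (-s)) (-(ex D (-s) * D)) s := by
  have := (ex_deriv D (-s)).scomp s (hasDerivAt_neg s)
  simp only [neg_smul, one_smul] at this
  exact this

/-- Deviation from being a derivation. -/
theorem ex_conj_deriv (β : E →L[ℝ] E →L[ℝ] E) (D : E →L[ℝ] E) (x y : E) (s : ℝ) :
    HasDerivAt (fun s => ex D (-s) (β (ex D s x) (ex D s y)))
      (- ex D (-s) (D (β (ex D s x) (ex D s y)) - β (D (ex D s x)) (ex D s y)
        - β (ex D s x) (D (ex D s y)))) s := by
  have h1 := ex_deriv_apply' D s x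
  have h2 := ex_deriv_apply' D s y
  have h3 : HasDerivAt (fun s => β (ex D s x)) (β (D (ex D s x))) s :=
    β.hasFDerivAt.comp_hasDerivAt s h1
  have h4 := h3.clm_apply h2
  have h5 := (ex_neg_deriv D s).clm_apply h4
  refine h5.congr_deriv ?_
  simp only [neg_apply, ContinuousLinearMap.mul_apply', map_sub, map_add]
  simp
  abel

theorem ex_isAut {β : E →L[ℝ] E →L[ℝ] E} (h : IsCpt β) (u : E) (s : ℝ) :
    IsAut β (ex (β u) s) := by
  constructor
  · intro x y
    have hd : ∀ s, HasDerivAt (fun s => ex (β u) (-s) (β (ex (β u) s x) (ex (β u) s y))) 0 s := by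
      intro s
      refine (ex_conj_deriv β (β u) x y s).congr_deriv ?_
      rw [h.jac u]; simp
    have := is_const_of_deriv_eq_zero (fun s => (hd s).differentiableAt) (fun s => (hd s).deriv) s 0
    simp only [neg_zero, ex_zero, one_apply_eq_self] at this
    rw [← this, ← mul_apply_eq_comp, ex_mul_neg]; rfl
  · intro x y
    have hd : ∀ s, HasDerivAt (fun s => ⟪ex (β u) s x, ex (β u) s y⟫) 0 s := by
      intro s
      refine ((ex_deriv_apply' (β u) s x).inner ℝ (ex_deriv_apply' (β u) s y)).congr_deriv ?_
      rw [h.inv]; ring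
    have := is_const_of_deriv_eq_zero (fun s => (hd s).differentiableAt) (fun s => (hd s).deriv) s 0
    simpa [ex_zero] using this

theorem ex_near (ε : ℝ) (hε : 0 < ε) : ∃ δ > 0, ∀ D : E →L[ℝ] E, ∀ s : ℝ, ‖s • D‖ < δ →
    ‖ex D s - 1‖ < ε := by
  have h0 : ContinuousAt (NormedSpace.exp : (E →L[ℝ] E) → (E →L[ℝ] E)) 0 :=
    (hasStrictFDerivAt_exp_zero (𝕂 := ℝ)).continuousAt
  rw [Metric.continuousAt_iff] at h0
  obtain ⟨δ, hδ, H⟩ := h0 ε hε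
  refine ⟨δ, hδ, fun D s hs => ?_⟩
  have := H (x := s • D) (by simpa using hs)
  simpa [dist_eq_norm, ex] using this

/-- Automorphisms close to `1` are exponentials of derivations. -/
theorem near_one {β : E →L[ℝ] E →L[ℝ] E} (h : IsCpt β) :
    ∀ᶠ φ in nhds (1 : E →L[ℝ] E), IsAut β φ → ∃ y, φ = ex (β y) 1 := by
  obtain ⟨δ, hδ, H⟩ := ex_near (E := E) (1/10) (by norm_num)
  have hmap := (hasStrictFDerivAt_exp_zero (𝕂 := ℝ) (𝔸 := E →L[ℝ] E)).map_nhds_eq_of_equiv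
    (f' := ContinuousLinearEquiv.refl ℝ _)
  rw [NormedSpace.exp_zero] at hmap
  rw [← hmap, Filter.eventually_map]
  filter_upwards [Metric.ball_mem_nhds (0 : E →L[ℝ] E) hδ] with D hD hA
  have hD : ‖D‖ < δ := by simpa using hD
  have hex : ex D 1 = NormedSpace.exp D := by simp [ex]
  rw [← hex] at hA ⊢
  suffices hder : ∀ x y, D (β x y) = β (D x) y + β x (D y) by
    obtain ⟨y, hy⟩ := h.der D hder
    exact ⟨y, by rw [hy]⟩
  -- defect
  let d : E →L[ℝ] E →L[ℝ] E :=
    (ContinuousLinearMap.compL ℝ E E E D).comp β - β.comp D -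
      ((ContinuousLinearMap.compL ℝ E E E).flip D).comp β
  have hd : ∀ x y, d x y = D (β x y) - β (D x) y - β x (D y) := by
    intro x y; simp [d]
  have key : ‖d‖ ≤ 1/2 * ‖d‖ := by
    refine d.opNorm_le_bound₂ (by positivity) ?_
    intro x y
    have hb : ∀ s ∈ Set.Icc (0:ℝ) 1, ‖- ex D (-s) (d (ex D s x) (ex D s y)) + d x y‖
        ≤ 1/2 * ‖d‖ * ‖x‖ * ‖y‖ := by
      intro s hs
      have hP : ‖ex D (-s) - 1‖ < 1/10 := H D (-s) (by
        rw [norm_smul, norm_neg, Real.norm_of_nonneg hs.1]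
        nlinarith [norm_nonneg D, hs.2, hs.1])
      have hQ : ‖ex D s - 1‖ < 1/10 := H D s (by
        rw [norm_smul, Real.norm_of_nonneg hs.1]
        nlinarith [norm_nonneg D, hs.2, hs.1])
      set P := ex D (-s)
      set Q := ex D s
      have hdec : - P (d (Q x) (Q y)) + d x y =
          -((P - 1) (d (Q x) (Q y)) + d ((Q - 1) x) (Q y) + d x ((Q - 1) y)) := by
        simp only [sub_apply, one_apply_eq_self, map_sub]
        abel
      have hq : ∀ z, ‖(Q - 1) z‖ ≤ 1/10 * ‖z‖ := fun z =>
        ((Q-1).le_opNorm z).trans (by gcongr)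
      have hq' : ∀ z, ‖Q z‖ ≤ 11/10 * ‖z‖ := by
        intro z
        have : Q z = (Q - 1) z + z := by simp
        rw [this]
        refine (norm_add_le _ _).trans ?_
        linarith [hq z]
      have hp : ∀ z, ‖(P - 1) z‖ ≤ 1/10 * ‖z‖ := fun z =>
        ((P-1).le_opNorm z).trans (by gcongr)
      rw [hdec, norm_neg]
      have e1 : ‖(P - 1) (d (Q x) (Q y))‖ ≤ 1/10 * (‖d‖ * (11/10 * ‖x‖) * (11/10 * ‖y‖)) := by
        refine (hp _).trans ?_
        gcongr
        refine (d.le_opNorm₂ _ _).trans ?_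
        gcongr
        · exact hq' x
        · exact hq' y
      have e2 : ‖d ((Q - 1) x) (Q y)‖ ≤ ‖d‖ * (1/10 * ‖x‖) * (11/10 * ‖y‖) := by
        refine (d.le_opNorm₂ _ _).trans ?_
        gcongr
        · exact hq x
        · exact hq' y
      have e3 : ‖d x ((Q - 1) y)‖ ≤ ‖d‖ * ‖x‖ * (1/10 * ‖y‖) := by
        refine (d.le_opNorm₂ _ _).trans ?_
        gcongr
        exact hq y
      have hnn : 0 ≤ ‖d‖ * ‖x‖ * ‖y‖ := by positivity
      calc _ ≤ _ := norm_add₃_le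
        _ ≤ _ := by linarith
    have hder : ∀ s, HasDerivAt (fun s => ex D (-s) (β (ex D s x) (ex D s y)) + s • d x y)
        (- ex D (-s) (d (ex D s x) (ex D s y)) + d x y) s := by
      intro s
      have := (ex_conj_deriv β D x y s).add ((hasDerivAt_id s).smul_const (d x y))
      refine this.congr_deriv ?_
      simp [hd]
    have := (convex_Icc (0:ℝ) 1).norm_image_sub_le_of_norm_hasDerivWithin_le
      (fun s _ => (hder s).hasDerivWithinAt) hb (x := 0) (y := 1) (by simp) (by simp)
    have h1 : ex D (-1) (β (ex D 1 x) (ex D 1 y)) = β x y := by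
      rw [← hA.1, ← mul_apply_eq_comp, ex_neg_mul]; rfl
    simpa [ex_zero, h1] using this
  have hz : d = 0 := by
    have : ‖d‖ ≤ 0 := by linarith
    ext x y
    have h2 := d.le_opNorm₂ x y
    have h3 : ‖d x y‖ ≤ 0 := h2.trans (by
      rw [mul_assoc]; exact mul_nonpos_of_nonpos_of_nonneg this (by positivity))
    simpa using h3
  intro x y
  have := hd x y
  rw [hz] at this
  simp only [zero_apply] at this
  have h2 : D (β x y) - (β (D x) y + β x (D y)) = 0 := by rw [this]; abel
  exact sub_eq_zero.1 h2

theorem ex_fix {D : E →L[ℝ] E} {x : E} (hx : D x = 0) (s : ℝ) : ex D s x = x := by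
  have hd : ∀ s, HasDerivAt (fun s => ex D s x) 0 s := fun s => by
    simpa [hx] using ex_deriv_apply D s x
  have := is_const_of_deriv_eq_zero (fun s => (hd s).differentiableAt) (fun s => (hd s).deriv) s 0
  simpa [ex_zero] using this

theorem ex_fix_conv : ∃ δ > 0, ∀ D : E →L[ℝ] E, ∀ s : ℝ, 0 < s → ‖s • D‖ < δ →
    ∀ x, ex D s x = x → D x = 0 := by
  obtain ⟨δ, hδ, H⟩ := ex_near (E := E) (1/2) (by norm_num)
  refine ⟨δ, hδ, fun D s hs hsD x hx => ?_⟩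
  have hder : ∀ r, HasDerivAt (fun r => ex D r x - r • D x) (ex D r (D x) - D x) r := by
    intro r
    have := (ex_deriv_apply D r x).sub ((hasDerivAt_id r).smul_const (D x))
    simp only [one_smul] at this
    exact this
  have hb : ∀ r ∈ Set.Icc (0:ℝ) s, ‖ex D r (D x) - D x‖ ≤ 1/2 * ‖D x‖ := by
    intro r hr
    have : ‖ex D r - 1‖ < 1/2 := H D r (by
      rw [norm_smul, Real.norm_of_nonneg hr.1]
      rw [norm_smul, Real.norm_of_nonneg hs.le] at hsD
      exact (mul_le_mul_of_nonneg_right hr.2 (norm_nonneg _)).trans_lt hsD)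
    have h2 : ex D r (D x) - D x = (ex D r - 1) (D x) := by simp
    rw [h2]
    exact ((ex D r - 1).le_opNorm _).trans (by gcongr)
  have := (convex_Icc (0:ℝ) s).norm_image_sub_le_of_norm_hasDerivWithin_le
      (fun r _ => (hder r).hasDerivWithinAt) hb (x := 0) (y := s) (by simp [hs.le]) (by simp [hs.le])
  simp only [hx, ex_zero, zero_smul, one_apply_eq_self, sub_zero, sub_sub_cancel_left,
    norm_neg, norm_smul, Real.norm_of_nonneg hs.le] at this
  have h3 : s * ‖D x‖ ≤ 0 := by linarith
  have h4 : ‖D x‖ ≤ 0 := by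
    by_contra hc
    push Not at hc
    nlinarith
  exact norm_le_zero_iff.1 h4

theorem maxGen_eq_ker {V : Type*} [AddCommGroup V] [Module ℝ V] (T : End ℝ V)
    (hT : ∀ x, T (T x) = 0 → T x = 0) : End.maxGenEigenspace T 0 = LinearMap.ker T := by
  apply le_antisymm
  · intro x hx
    rw [End.mem_maxGenEigenspace] at hx
    obtain ⟨k, hk⟩ := hx
    rw [zero_smul, sub_zero] at hk
    rw [LinearMap.mem_ker]
    induction k with
    | zero => simp at hk; simp [hk]
    | succ k ih =>
      cases k with
      | zero => simpa using hk
      | succ m =>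
        apply ih
        rw [pow_succ', Module.End.mul_apply]
        apply hT
        rw [pow_succ', pow_succ', Module.End.mul_apply, Module.End.mul_apply] at hk
        exact hk
  · intro x hx
    rw [End.mem_maxGenEigenspace]
    exact ⟨1, by simpa using hx⟩

/-- Kernel of a continuous linear endomorphism. -/
def kr (T : E →L[ℝ] E) : Submodule ℝ E := LinearMap.ker (T : E →ₗ[ℝ] E)

theorem mem_kr {T : E →L[ℝ] E} {x : E} : x ∈ kr T ↔ T x = 0 := Iff.rfl

theorem perturb (T : E →L[ℝ] E) : ∃ ε > 0, ∀ T' : E →L[ℝ] E, ‖T' - T‖ < ε →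
    (∀ x ∈ kr T, T' x ∈ kr T) → (∀ x ∈ (kr T)ᗮ, T' x ∈ (kr T)ᗮ) → kr T' ≤ kr T := by
  let f : (kr T)ᗮ →ₗ[ℝ] E := (T : E →ₗ[ℝ] E).domRestrict (kr T)ᗮ
  have hf : LinearMap.ker f = ⊥ := by
    rw [LinearMap.ker_eq_bot']
    rintro ⟨x, hx⟩ h0
    have h1 : x ∈ kr T := h0
    have : x ∈ kr T ⊓ (kr T)ᗮ := ⟨h1, hx⟩
    rw [Submodule.inf_orthogonal_eq_bot] at this
    simpa using this
  obtain ⟨K, hK, hL⟩ := f.exists_antilipschitzWith hf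
  refine ⟨1 / K, by positivity, fun T' hT' h1 h2 x hx => ?_⟩
  obtain ⟨p, hp, q, hq, rfl⟩ := (kr T).exists_add_mem_mem_orthogonal x
  rw [mem_kr, map_add] at hx
  have hq0 : T' q = 0 := by
    have h3 : T' q ∈ kr T := by
      rw [eq_neg_of_add_eq_zero_right hx]
      exact (kr T).neg_mem (h1 p hp)
    have : T' q ∈ kr T ⊓ (kr T)ᗮ := ⟨h3, h2 q hq⟩
    rw [Submodule.inf_orthogonal_eq_bot] at this
    simpa using this
  have h4 : ‖q‖ ≤ K * ‖T q‖ := by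
    have := hL.le_mul_dist ⟨q, hq⟩ 0
    simpa [dist_eq_norm, f] using this
  have h5 : ‖T q‖ ≤ ‖T' - T‖ * ‖q‖ := by
    have := (T' - T).le_opNorm q
    simpa [hq0] using this
  have h6 : q = 0 := by
    by_contra hne
    have hqp : 0 < ‖q‖ := norm_pos_iff.2 hne
    have hKp : (0:ℝ) < K := by exact_mod_cast hK
    have : K * ‖T' - T‖ < 1 := by
      rwa [lt_div_iff₀ hKp, mul_comm] at hT'
    have h7 : K * ‖T q‖ ≤ (K * ‖T' - T‖) * ‖q‖ := by
      rw [mul_assoc]; gcongr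
    nlinarith
  rw [h6, add_zero]
  exact hp

theorem ab {β : E →L[ℝ] E →L[ℝ] E} (h : IsCpt β) (K M : Submodule ℝ E) (z : E) (hz : z ∈ K)
    (hmin : ∀ y ∈ K, finrank ℝ ↥(kr (β z) ⊓ M) ≤ finrank ℝ ↥(kr (β y) ⊓ M))
    (x y : E) (hx : x ∈ kr (β z) ⊓ K) (hy : y ∈ kr (β z) ⊓ M) : β x y = 0 := by
  obtain ⟨ε, hε, H⟩ := perturb (β z)
  set c : ℝ := ε / (‖β x‖ + 1) with hc
  have hcp : 0 < c := by positivity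
  have hx0 : β z x = 0 := hx.1
  have hle : kr (β (z + c • x)) ≤ kr (β z) := by
    have hker : ∀ p ∈ kr (β z), β (z + c • x) p ∈ kr (β z) := by
      intro p hp
      rw [mem_kr] at hp ⊢
      rw [map_add, add_apply, hp, zero_add, map_smul, smul_apply, map_smul,
        h.jac, hx0, hp]
      simp
    refine H _ ?_ hker ?_
    · rw [map_add, add_sub_cancel_left, map_smul, norm_smul, Real.norm_of_nonneg hcp.le, hc,
        div_mul_eq_mul_div, div_lt_iff₀ (by positivity)]
      nlinarith [norm_nonneg (β x)]
    · intro q hq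
      rw [Submodule.mem_orthogonal] at hq ⊢
      intro p hp
      have := h.inv (z + c • x) p q
      rw [hq _ (hker p hp)] at this
      linarith
  have hle2 : kr (β (z + c • x)) ⊓ M ≤ kr (β z) ⊓ M := inf_le_inf_right _ hle
  have heq := Submodule.eq_of_le_of_finrank_le hle2
    (hmin _ (K.add_mem hz (K.smul_mem c hx.2)))
  have hy2 : y ∈ kr (β (z + c • x)) ⊓ M := heq ▸ hy
  have h3 : β (z + c • x) y = 0 := hy2.1
  have h4 : β z y = 0 := hy.1
  rw [map_add, add_apply, h4, zero_add, map_smul, smul_apply] at h3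
  exact (smul_eq_zero.1 h3).resolve_left hcp.ne'

theorem exists_min {K : Submodule ℝ E} (f : E → ℕ) : ∃ z ∈ K, ∀ y ∈ K, f z ≤ f y := by
  obtain ⟨z, hz, hm⟩ := (measure f).wf.has_min (K : Set E) ⟨0, K.zero_mem⟩
  exact ⟨z, hz, fun y hy => not_lt.1 (hm y hy)⟩

/-- Automorphisms connected to the identity by an analytic path. -/
def InS (β : E →L[ℝ] E →L[ℝ] E) (φ : E →L[ℝ] E) : Prop :=
  ∃ c : ℝ → (E →L[ℝ] E), AnalyticOnNhd ℝ c Set.univ ∧ c 0 = 1 ∧ (∀ s, IsAut β (c s)) ∧ c 1 = φ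

theorem InS.isAut {β : E →L[ℝ] E →L[ℝ] E} {φ : E →L[ℝ] E} (h : InS β φ) : IsAut β φ := by
  obtain ⟨c, -, -, h, rfl⟩ := h
  exact h 1

theorem IsAut.one (β : E →L[ℝ] E →L[ℝ] E) : IsAut β 1 := ⟨fun _ _ => rfl, fun _ _ => rfl⟩

theorem IsAut.mul {β : E →L[ℝ] E →L[ℝ] E} {φ ψ : E →L[ℝ] E} (h : IsAut β φ) (h' : IsAut β ψ) :
    IsAut β (φ * ψ) :=
  ⟨fun x y => by simp [h'.1, h.1], fun x y => by simp [h'.2, h.2]⟩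

theorem InS.one (β : E →L[ℝ] E →L[ℝ] E) : InS β 1 :=
  ⟨fun _ => 1, fun _ _ => analyticAt_const, rfl, fun _ => IsAut.one β, rfl⟩

theorem InS.mul {β : E →L[ℝ] E →L[ℝ] E} {φ ψ : E →L[ℝ] E} (h : InS β φ) (h' : InS β ψ) :
    InS β (φ * ψ) := by
  obtain ⟨c, h1, h2, h3, rfl⟩ := h
  obtain ⟨d, k1, k2, k3, rfl⟩ := h'
  exact ⟨fun s => c s * d s, fun s hs => (h1 s hs).mul (k1 s hs), by simp [h2, k2],
    fun s => (h3 s).mul (k3 s), rfl⟩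

theorem InS.ex {β : E →L[ℝ] E →L[ℝ] E} (h : IsCpt β) (u : E) (s : ℝ) : InS β (ex (β u) s) := by
  refine ⟨fun r => CptLie.ex (β (s • u)) r, ex_analytic _, ex_zero _, fun r => ex_isAut h _ _, ?_⟩
  simp [CptLie.ex]

theorem IsAut.isom {β : E →L[ℝ] E →L[ℝ] E} {φ : E →L[ℝ] E} (h : IsAut β φ) (x : E)
    (hx : (φ - 1) ((φ - 1) x) = 0) : (φ - 1) x = 0 := by
  set v := (φ - 1) x with hv
  have h1 : φ v = v := sub_eq_zero.1 hx
  have h2 : v = φ x - x := hv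
  have h3 : ⟪v, v⟫ = 0 := by
    nth_rw 1 [h2]
    rw [inner_sub_left]
    nth_rw 1 [← h1]
    rw [h.2, sub_self]
  exact inner_self_eq_zero.1 h3

theorem natTrail (T : E →L[ℝ] E) :
    (T : E →ₗ[ℝ] E).charpoly.natTrailingDegree = finrank ℝ (End.maxGenEigenspace (T : End ℝ E) 0) :=
  ((T : E →ₗ[ℝ] E).finrank_maxGenEigenspace_zero_eq).symm

theorem nullity {β : E →L[ℝ] E →L[ℝ] E} (h : IsCpt β) {r : ℕ}
    (hr : ∀ y, r ≤ finrank ℝ (kr (β y))) {φ : E →L[ℝ] E} (hφ : InS β φ) :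
    r ≤ finrank ℝ (kr (φ - 1)) := by
  have haut := hφ.isAut
  obtain ⟨c, hc, c0, cA, rfl⟩ := hφ
  have hmg : End.maxGenEigenspace ((c 1 - 1 : E →L[ℝ] E) : End ℝ E) 0 = kr (c 1 - 1) :=
    maxGen_eq_ker _ haut.isom
  rw [← hmg, ← natTrail]
  apply Polynomial.le_natTrailingDegree (LinearMap.charpoly_monic _).ne_zero
  intro k hk
  let b := finBasis ℝ (E →L[ℝ] E)
  let ι : (E →L[ℝ] E) →ₗ[ℝ] End ℝ E := ContinuousLinearMap.coeLM ℝ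
  let p := (LinearMap.polyCharpoly ι b).coeff k
  let F : ℝ → ℝ := fun s => MvPolynomial.aeval (b.repr (c s - 1)) p
  have hF : ∀ s, F s = ((c s - 1 : E →L[ℝ] E) : E →ₗ[ℝ] E).charpoly.coeff k := by
    intro s
    exact LinearMap.polyCharpoly_coeff_eval ι b (c s - 1) k
  have hFa : AnalyticOnNhd ℝ F Set.univ := by
    apply AnalyticOnNhd.aeval_mvPolynomial
    intro i s _
    let g : (E →L[ℝ] E) →L[ℝ] ℝ := LinearMap.toContinuousLinearMap (b.coord i)
    have : AnalyticAt ℝ (fun s => c s - 1) s := (hc s trivial).sub analyticAt_const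
    exact (g.analyticAt _).comp this
  have hev : ∀ᶠ s in nhds (0:ℝ), F s = 0 := by
    have h1 : Filter.Tendsto c (nhds 0) (nhds 1) := by
      have := (hc 0 trivial).continuousAt
      rwa [ContinuousAt, c0] at this
    filter_upwards [h1.eventually (near_one h)] with s hs
    obtain ⟨y, hy⟩ := hs (cA s)
    rw [hF]
    apply Polynomial.coeff_eq_zero_of_lt_natTrailingDegree
    rw [natTrail]
    refine hk.trans_le ((hr y).trans ?_)
    apply Submodule.finrank_mono
    rw [maxGen_eq_ker _ (cA s).isom]
    intro x hx
    rw [LinearMap.mem_ker]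
    change (c s - 1) x = 0
    rw [hy, sub_apply, ex_fix hx]
    simp
  have := hFa.eqOn_zero_of_preconnected_of_eventuallyEq_zero isPreconnected_univ
    (Set.mem_univ 0) hev (Set.mem_univ 1)
  rw [← hF]
  exact this

theorem ex_rot {D : E →L[ℝ] E} {H w : E} {ω : ℝ} (h1 : D w = H) (h2 : D H = -(ω ^ 2) • w)
    (s : ℝ) : ex D s H = Real.cos (ω * s) • H - (ω * Real.sin (ω * s)) • w := by
  have hd : ∀ s, HasDerivAt (fun s => ex D (-s)
      (Real.cos (ω * s) • H - (ω * Real.sin (ω * s)) • w)) 0 s := by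
    intro s
    have e0 : HasDerivAt (fun s : ℝ => ω * s) ω s := by
      simpa using (hasDerivAt_id s).const_mul ω
    have e1 := (e0.cos.smul_const H).sub ((e0.sin.const_mul ω).smul_const w)
    refine ((ex_neg_deriv D s).clm_apply e1).congr_deriv ?_
    have e2 : -D (Real.cos (ω * s) • H - (ω * Real.sin (ω * s)) • w) +
        ((-Real.sin (ω * s) * ω) • H - (ω * (Real.cos (ω * s) * ω)) • w) = 0 := by
      simp only [map_sub, map_smul, h1, h2]
      module
    have e3 := congrArg (ex D (-s)) e2
    rw [map_add, map_neg, map_zero] at e3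
    exact e3
  have := is_const_of_deriv_eq_zero (fun s => (hd s).differentiableAt) (fun s => (hd s).deriv) s 0
  simp only [neg_zero, ex_zero, mul_zero, Real.cos_zero, Real.sin_zero, one_smul, zero_smul,
    sub_zero, one_apply_eq_self] at this
  conv_lhs => rw [← this]
  rw [← mul_apply_eq_comp, ex_mul_neg]; rfl

theorem refl_exists {β : E →L[ℝ] E →L[ℝ] E} (h : IsCpt β) {a : E}
    (hab : ∀ x y, x ∈ kr (β a) → y ∈ kr (β a) → β x y = 0) {k₀ : E} (hk₀ : k₀ ∈ kr (β a))
    (hne : k₀ ≠ 0) : ∃ H ∈ kr (β a), ⟪H, k₀⟫ ≠ 0 ∧ ∃ σ, InS β σ ∧ ∀ k ∈ kr (β a),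
      σ k = k - (2 * (⟪H, k⟫ / ⟪H, H⟫)) • H := by
  have haa : a ∈ kr (β a) := h.self a
  have hcomm : ∀ k l, k ∈ kr (β a) → l ∈ kr (β a) → ∀ x, β k (β l x) = β l (β k x) := by
    intro k l hk hl x
    rw [h.jac k l x, hab k l hk hl]; simp
  let T : kr (β a) → (E →ₗ[ℝ] E) := fun k => ((β k).comp (β a) : E →L[ℝ] E)
  have hTa : ∀ k x, T k x = β k (β a x) := fun k x => rfl
  have hsym : ∀ k, (T k).IsSymmetric := by
    intro k x y
    rw [hTa, hTa, h.inv, h.inv, neg_neg, hcomm _ _ haa k.2]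
  have hTc : Pairwise (Function.onFun Commute T) := by
    intro k l _
    change T k * T l = T l * T k
    ext x
    simp only [Module.End.mul_apply, hTa]
    rw [hcomm a l haa l.2, hcomm k l k.2 l.2, hcomm k a k.2 haa]
  have htop := LinearMap.IsSymmetric.iSup_iInf_eq_top_of_commute hsym hTc
  obtain ⟨χ, u, hu, hku⟩ : ∃ (χ : kr (β a) → ℝ) (u : E),
      (∀ k : kr (β a), β k (β a u) = χ k • u) ∧ β k₀ u ≠ 0 := by
    by_contra hcon
    push Not at hcon
    apply hne
    apply h.center
    have hle : (⊤ : Submodule ℝ E) ≤ kr (β k₀) := by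
      rw [← htop]
      refine iSup_le fun χ u hu => ?_
      rw [Submodule.mem_iInf] at hu
      exact hcon χ u fun k => Module.End.mem_eigenspace_iff.1 (hu k)
    exact fun y => hle (Submodule.mem_top (x := y))
  set w := β a u with hw
  have hwne : w ≠ 0 := by
    intro h0
    exact hku (hab k₀ u hk₀ h0)
  have hune : u ≠ 0 := by
    rintro rfl
    simp at hku
  have hww : 0 < ⟪w, w⟫ := real_inner_self_pos.2 hwne
  set χa := χ ⟨a, haa⟩ with hχa
  have hua : β a w = χa • u := hu ⟨a, haa⟩
  have hχne : χa ≠ 0 := by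
    intro h0
    rw [h0, zero_smul] at hua
    have := h.inv a u w
    rw [hua, inner_zero_right, neg_zero, ← hw] at this
    linarith
  have hku' : ∀ k : kr (β a), β k u = (χ k / χa) • w := by
    intro k
    have h1 : χa • β k u = χ k • w := by
      rw [← map_smul, ← hua, hw, hcomm k a k.2 haa, ← hw, hu k, map_smul]
    rw [div_eq_inv_mul, mul_smul, ← h1, inv_smul_smul₀ hχne]
  set H := β u w with hH
  have hHt : H ∈ kr (β a) := by
    rw [mem_kr, hH, h.jac, ← hw, hua, h.self, map_smul, h.self]; simp
  have hin : ∀ k : kr (β a), ⟪H, (k : E)⟫ = (χ k / χa) * ⟪w, w⟫ := by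
    intro k
    rw [hH, h.inv, h.skew u k, hku', inner_neg_right, neg_neg, inner_smul_right]
  have hH0 : ⟪H, k₀⟫ ≠ 0 := by
    rw [hin ⟨k₀, hk₀⟩]
    refine mul_ne_zero ?_ hww.ne'
    intro h0
    apply hku
    rw [hku' ⟨k₀, hk₀⟩, h0, zero_smul]
  have hHne : H ≠ 0 := by
    intro h0
    rw [h0, inner_zero_left] at hH0
    exact hH0 rfl
  have hHH : 0 < ⟪H, H⟫ := real_inner_self_pos.2 hHne
  set ω := ‖H‖ / ‖w‖ with hω
  have hωp : 0 < ω := div_pos (norm_pos_iff.2 hHne) (norm_pos_iff.2 hwne)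
  have hω2 : χ ⟨H, hHt⟩ / χa = ω ^ 2 := by
    have := hin ⟨H, hHt⟩
    simp only [real_inner_self_eq_norm_sq] at this
    rw [hω, div_pow, this, mul_div_cancel_right₀]
    exact pow_ne_zero 2 (norm_ne_zero_iff.2 hwne)
  have hDH : β u H = -(ω ^ 2) • w := by
    rw [h.skew u H, hku' ⟨H, hHt⟩, hω2, neg_smul]
  refine ⟨H, hHt, hH0, ex (β u) (Real.pi / ω), InS.ex h _ _, ?_⟩
  intro k hk
  set c := ⟪H, k⟫ / ⟪H, H⟫ with hc
  have hk' : k - c • H ∈ kr (β a) := Submodule.sub_mem _ hk (Submodule.smul_mem _ _ hHt)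
  have hperp : ⟪H, k - c • H⟫ = 0 := by
    rw [inner_sub_right, inner_smul_right, hc, div_mul_cancel₀ _ hHH.ne', sub_self]
  have hfix : β u (k - c • H) = 0 := by
    have h1 := hin ⟨_, hk'⟩
    simp only [hperp] at h1
    have h2 : χ ⟨_, hk'⟩ / χa = 0 := by
      rcases mul_eq_zero.1 h1.symm with h2 | h2
      · exact h2
      · exact absurd h2 hww.ne'
    rw [h.skew, hku' ⟨_, hk'⟩, h2, zero_smul, neg_zero]
  have hrot := ex_rot hH.symm hDH (Real.pi / ω)
  rw [mul_div_cancel₀ _ hωp.ne', Real.cos_pi, Real.sin_pi, mul_zero, zero_smul, sub_zero] at hrot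
  have hdec : k = (k - c • H) + c • H := by abel
  conv_lhs => rw [hdec, map_add, ex_fix hfix, map_smul, hrot]
  module

theorem exists_phi {β : E →L[ℝ] E →L[ℝ] E} (h : IsCpt β) {a : E}
    (hab : ∀ x y, x ∈ kr (β a) → y ∈ kr (β a) → β x y = 0) :
    ∃ φ, InS β φ ∧ (∀ k ∈ kr (β a), φ k ∈ kr (β a)) ∧ ∀ k ∈ kr (β a), φ k = k → k = 0 := by
  let S : Set (E →L[ℝ] E) := {φ | InS β φ ∧ ∀ k ∈ kr (β a), φ k ∈ kr (β a)}
  let f : (E →L[ℝ] E) → ℕ := fun φ => finrank ℝ ↥(kr (φ - 1) ⊓ kr (β a))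
  obtain ⟨φ, ⟨hφ, hφt⟩, hmin⟩ := (measure f).wf.has_min S ⟨1, InS.one β, fun k hk => hk⟩
  refine ⟨φ, hφ, hφt, fun k₀ hk₀ hfix => ?_⟩
  by_contra hne
  obtain ⟨H, hHt, hH0, σ, hσ, hσk⟩ := refl_exists h hab hk₀ hne
  refine hmin (φ * σ) ⟨hφ.mul hσ, ?_⟩ ?_
  · intro k hk
    rw [mul_apply_eq_comp]
    apply hφt
    rw [hσk k hk]
    exact Submodule.sub_mem _ hk (Submodule.smul_mem _ _ hHt)
  · have hHne : ⟪H, H⟫ ≠ 0 := by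
      intro h0
      rw [inner_self_eq_zero.1 h0, inner_zero_left] at hH0
      exact hH0 rfl
    have key : ∀ v ∈ kr (φ * σ - 1) ⊓ kr (β a), ⟪H, v⟫ = 0 := by
      rintro v ⟨hv, hvt⟩
      have hv1 : φ (σ v) = v := sub_eq_zero.1 hv
      have h1 : ⟪v, k₀⟫ = ⟪σ v, k₀⟫ := by
        rw [← hφ.isAut.2 (σ v) k₀, hv1, hfix]
      rw [hσk v hvt, inner_sub_left, inner_smul_left] at h1
      have h2 : (2 * (⟪H, v⟫ / ⟪H, H⟫)) * ⟪H, k₀⟫ = 0 := by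
        simp only [conj_trivial] at h1
        linarith
      rcases mul_eq_zero.1 h2 with h3 | h3
      · rcases mul_eq_zero.1 h3 with h4 | h4
        · norm_num at h4
        · exact (div_eq_zero_iff.1 h4).resolve_right hHne
      · exact absurd h3 hH0
    change finrank ℝ ↥(kr (φ * σ - 1) ⊓ kr (β a)) < finrank ℝ ↥(kr (φ - 1) ⊓ kr (β a))
    apply Submodule.finrank_lt_finrank_of_lt
    refine lt_of_le_of_ne ?_ ?_
    · intro v hv
      have hHv := key v hv
      have hv1 : φ (σ v) = v := sub_eq_zero.1 hv.1
      rw [hσk v hv.2, hHv] at hv1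
      simp only [zero_div, mul_zero, zero_smul, sub_zero] at hv1
      exact ⟨sub_eq_zero.2 hv1, hv.2⟩
    · intro heq
      have : k₀ ∈ kr (φ * σ - 1) ⊓ kr (β a) := by
        rw [heq]
        exact ⟨sub_eq_zero.2 hfix, hk₀⟩
      exact hH0 (key k₀ this)

theorem IsAut.inj {β : E →L[ℝ] E →L[ℝ] E} {φ : E →L[ℝ] E} (h : IsAut β φ) {x : E}
    (hx : φ x = 0) : x = 0 := by
  have := h.2 x x
  rw [hx, inner_zero_left] at this
  exact inner_self_eq_zero.1 this.symm

theorem IsAut.surj {β : E →L[ℝ] E →L[ℝ] E} {φ : E →L[ℝ] E} (h : IsAut β φ) :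
    Function.Surjective φ := by
  have hi : Function.Injective (φ : E →ₗ[ℝ] E) := by
    rw [← LinearMap.ker_eq_bot, LinearMap.ker_eq_bot']
    exact fun x hx => h.inj hx
  exact LinearMap.injective_iff_surjective.1 hi

theorem IsAut.orth_pres {β : E →L[ℝ] E →L[ℝ] E} {φ : E →L[ℝ] E} (h : IsAut β φ)
    {V : Submodule ℝ E} (hV : ∀ x ∈ V, φ x ∈ V) : ∀ q ∈ Vᗮ, φ q ∈ Vᗮ := by
  intro q hq
  rw [Submodule.mem_orthogonal] at hq ⊢
  intro p hp
  let g : V →ₗ[ℝ] V := (φ : E →ₗ[ℝ] E).restrict hV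
  have hi : Function.Injective g := by
    rw [← LinearMap.ker_eq_bot, LinearMap.ker_eq_bot']
    intro x hx
    have h1 : φ x = 0 := congrArg Subtype.val hx
    exact Subtype.ext (h.inj h1)
  obtain ⟨p', hp'⟩ := LinearMap.injective_iff_surjective.1 hi ⟨p, hp⟩
  have h2 : φ p' = p := congrArg Subtype.val hp'
  rw [← h2, h.2]
  exact hq _ p'.2

theorem isCompact_aut (β : E →L[ℝ] E →L[ℝ] E) : IsCompact {φ | IsAut β φ} := by
  have : ProperSpace (E →L[ℝ] E) := FiniteDimensional.proper ℝ _
  apply Metric.isCompact_of_isClosed_isBounded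
  · have : {φ | IsAut β φ} = (⋂ x, ⋂ y, {φ : E →L[ℝ] E | φ (β x y) = β (φ x) (φ y)}) ∩
        (⋂ x, ⋂ y, {φ : E →L[ℝ] E | ⟪φ x, φ y⟫ = ⟪x, y⟫}) := by
      ext φ; simp [IsAut]
    rw [this]
    refine IsClosed.inter ?_ ?_
    · refine isClosed_iInter fun x => isClosed_iInter fun y => isClosed_eq ?_ ?_ <;> fun_prop
    · refine isClosed_iInter fun x => isClosed_iInter fun y => isClosed_eq ?_ ?_ <;> fun_prop
  · rw [isBounded_iff_forall_norm_le]
    refine ⟨1, fun φ hφ => φ.opNorm_le_bound zero_le_one fun x => ?_⟩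
    have h1 : ‖φ x‖ ^ 2 = ‖x‖ ^ 2 := by
      rw [← real_inner_self_eq_norm_sq, ← real_inner_self_eq_norm_sq, hφ.2]
    rw [one_mul]
    exact (pow_le_pow_iff_left₀ (norm_nonneg _) (norm_nonneg _) two_ne_zero).1 h1.le

theorem exists_conj {β : E →L[ℝ] E →L[ℝ] E} (h : IsCpt β) (a b : E) :
    ∃ φ, IsAut β φ ∧ β (φ a) b = 0 := by
  obtain ⟨φ, hφ, hmin⟩ := (isCompact_aut β).exists_isMinOn ⟨1, IsAut.one β⟩
    (f := fun φ : E →L[ℝ] E => ⟪φ a, b⟫) (by fun_prop)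
  refine ⟨φ, hφ, ?_⟩
  have hz : ∀ u, ⟪β u (φ a), b⟫ = 0 := by
    intro u
    have hd : HasDerivAt (fun s => ⟪ex (β u) s (φ a), b⟫) ⟪β u (φ a), b⟫ 0 := by
      have := (ex_deriv_apply (β u) 0 (φ a)).inner ℝ (hasDerivAt_const (0:ℝ) b)
      simpa [ex_zero] using this
    have hm : IsLocalMin (fun s => ⟪ex (β u) s (φ a), b⟫) 0 := by
      refine Filter.Eventually.of_forall fun s => ?_
      have := hmin ((ex_isAut h u s).mul hφ)
      simpa [ex_zero] using this
    exact hm.hasDerivAt_eq_zero hd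
  have h1 := hz (β (φ a) b)
  rw [h.skew, inner_neg_left, h.inv, neg_neg] at h1
  exact inner_self_eq_zero.1 h1

theorem main_E {β : E →L[ℝ] E →L[ℝ] E} (h : IsCpt β) {r : ℕ}
    (hr : ∀ y, r ≤ finrank ℝ (kr (β y))) {a : E} (ha : finrank ℝ (kr (β a)) = r) :
    ∃ b, finrank ℝ (kr (β b)) = r ∧ ∀ x ∈ kr (β a), ∀ y ∈ kr (β b), ⟪x, y⟫ = 0 := by
  have hab : ∀ x y, x ∈ kr (β a) → y ∈ kr (β a) → β x y = 0 := by
    intro x y hx hy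
    refine ab h ⊤ ⊤ a trivial (fun y _ => ?_) x y ⟨hx, trivial⟩ ⟨hy, trivial⟩
    rw [inf_top_eq, inf_top_eq, ha]
    exact hr y
  obtain ⟨φ, hφ, hφt, hφf⟩ := exists_phi h hab
  set K := kr (φ - 1) with hK
  have memK : ∀ x, x ∈ K ↔ φ x = x := fun x => sub_eq_zero
  have hKt : ∀ x ∈ kr (β a), ∀ y ∈ K, ⟪x, y⟫ = 0 := by
    intro x hx y hy
    rw [memK] at hy
    obtain ⟨p, hp, q, hq, rfl⟩ := (kr (β a)).exists_add_mem_mem_orthogonal y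
    have hq' := hφ.isAut.orth_pres hφt q hq
    have h1 : φ p - p = q - φ q := by
      rw [map_add] at hy
      rw [sub_eq_sub_iff_add_eq_add, hy, add_comm]
    have h2 : φ p - p ∈ kr (β a) ⊓ (kr (β a))ᗮ :=
      ⟨Submodule.sub_mem _ (hφt p hp) hp, h1 ▸ Submodule.sub_mem _ hq hq'⟩
    rw [Submodule.inf_orthogonal_eq_bot] at h2
    have h3 : p = 0 := hφf p hp (sub_eq_zero.1 (by simpa using h2))
    rw [h3, zero_add]
    exact hq x hx
  obtain ⟨z, hz, hzmin⟩ := exists_min (K := K) (fun z => finrank ℝ ↥(kr (β z) ⊓ K))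
  set A := kr (β z) ⊓ K with hA
  have hAab : ∀ x y, x ∈ A → y ∈ A → β x y = 0 := fun x y hx hy =>
    ab h K K z hz hzmin x y hx hy
  have hAr : r ≤ finrank ℝ A := by
    obtain ⟨ε, hε, Hε⟩ := perturb (φ - 1)
    obtain ⟨δ₁, hδ₁, H1⟩ := ex_near (E := E) (ε / (‖φ‖ + 1)) (by positivity)
    obtain ⟨δ₂, hδ₂, H2⟩ := ex_fix_conv (E := E)
    set s : ℝ := min δ₁ δ₂ / (‖β z‖ + 1) with hs
    have hsp : 0 < s := by positivity
    have hsn : ‖s • β z‖ < min δ₁ δ₂ := by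
      have : 0 < min δ₁ δ₂ := by positivity
      rw [norm_smul, Real.norm_of_nonneg hsp.le, hs, div_mul_eq_mul_div,
        div_lt_iff₀ (by positivity)]
      nlinarith [norm_nonneg (β z)]
    set e := ex (β z) s with he
    have hce : Commute φ e := by
      have h1 : Commute φ (β z) := by
        ext x
        simp only [mul_apply_eq_comp]
        rw [hφ.isAut.1, (memK z).1 hz]
      exact (h1.smul_right s).exp_right
    have hψ : InS β (φ * e) := hφ.mul (InS.ex h z s)
    refine (nullity h hr hψ).trans (Submodule.finrank_mono ?_)
    have hcT : Commute (φ - 1) (φ * e) :=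
      (((Commute.refl φ).mul_right hce).sub_left (Commute.one_left _))
    have hψK : ∀ x ∈ K, (φ * e) x ∈ K := by
      intro x hx
      have h1 : (φ - 1) ((φ * e) x) = (φ * e) ((φ - 1) x) :=
        congrArg (fun T : E →L[ℝ] E => T x) hcT.eq
      have h2 : (φ - 1) x = 0 := hx
      rw [h2, map_zero] at h1
      exact h1
    have hle : kr (φ * e - 1) ≤ K := by
      refine Hε _ ?_ ?_ ?_
      · have : φ * e - 1 - (φ - 1) = φ * (e - 1) := by rw [mul_sub, mul_one]; abel
        rw [this]
        have h1 := H1 (β z) s (hsn.trans_le (min_le_left _ _))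
        rw [lt_div_iff₀ (by positivity)] at h1
        have h2 := norm_mul_le φ (e - 1)
        have h3 := norm_nonneg (e - 1)
        rw [← he] at h1
        nlinarith
      · intro x hx
        exact Submodule.sub_mem _ (hψK x hx) hx
      · intro q hq
        exact Submodule.sub_mem _ (hψ.isAut.orth_pres hψK q hq) hq
    intro x hx
    have hxK := hle hx
    refine ⟨?_, hxK⟩
    apply H2 (β z) s hsp (hsn.trans_le (min_le_right _ _))
    have h1 : φ (e x) = x := sub_eq_zero.1 hx
    have h2 : φ (e x) = e (φ x) := congrArg (fun T : E →L[ℝ] E => T x) hce.eq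
    rw [(memK x).1 hxK] at h2
    rw [← he, ← h2, h1]
  obtain ⟨b₀, hb₀, hbmin⟩ := exists_min (K := A) (fun z => finrank ℝ ↥(kr (β z) ⊓ ⊤))
  obtain ⟨θ, hθ, hθb⟩ := exists_conj h a b₀
  set b := θ a with hb
  have hle : A ≤ kr (β b) := by
    intro x hx
    have h1 : β x b = 0 := by
      refine ab h A ⊤ b₀ hb₀ hbmin x b ⟨hAab _ _ hb₀ hx, hx⟩ ⟨?_, trivial⟩
      change β b₀ b = 0
      rw [h.skew, hθb, neg_zero]
    rw [mem_kr, h.skew, h1, neg_zero]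
  have hbr : finrank ℝ (kr (β b)) ≤ r := by
    rw [← ha]
    have hmap : kr (β b) ≤ (kr (β a)).map (θ : E →ₗ[ℝ] E) := by
      intro x hx
      obtain ⟨y, rfl⟩ := hθ.surj x
      refine ⟨y, ?_, rfl⟩
      rw [mem_kr, hb, ← hθ.1] at hx
      exact hθ.inj hx
    exact (Submodule.finrank_mono hmap).trans (Submodule.finrank_map_le _ _)
  have heq : A = kr (β b) := Submodule.eq_of_le_of_finrank_le hle (hbr.trans hAr)
  refine ⟨b, le_antisymm hbr (hr b), fun x hx y hy => hKt x hx y ?_⟩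
  rw [← heq] at hy
  exact hy.2

theorem span_E {β : E →L[ℝ] E →L[ℝ] E} (h : IsCpt β) {a b : E}
    (hab : ∀ x ∈ kr (β a), ∀ y ∈ kr (β b), ⟪x, y⟫ = 0) (x : E) :
    ∃ u v, x = β a u + β b v := by
  let R : Submodule ℝ E := LinearMap.range (β a : E →ₗ[ℝ] E) ⊔ LinearMap.range (β b : E →ₗ[ℝ] E)
  have hR : R = ⊤ := by
    rw [← Submodule.orthogonal_eq_bot_iff, Submodule.eq_bot_iff]
    intro w hw
    rw [Submodule.mem_orthogonal] at hw
    have h1 : w ∈ kr (β a) := by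
      rw [mem_kr]
      have := hw (β a (β a w)) (Submodule.mem_sup_left ⟨_, rfl⟩)
      rw [h.inv, neg_eq_zero] at this
      exact inner_self_eq_zero.1 this
    have h2 : w ∈ kr (β b) := by
      rw [mem_kr]
      have := hw (β b (β b w)) (Submodule.mem_sup_right ⟨_, rfl⟩)
      rw [h.inv, neg_eq_zero] at this
      exact inner_self_eq_zero.1 this
    exact inner_self_eq_zero.1 (hab w h1 w h2)
  have hx : x ∈ R := hR ▸ Submodule.mem_top
  obtain ⟨_, ⟨u, rfl⟩, _, ⟨v, rfl⟩, rfl⟩ := Submodule.mem_sup.1 hx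
  exact ⟨u, v, rfl⟩

end Basic

theorem exists_model (V : Type*) [AddCommGroup V] [Module ℝ V] [FiniteDimensional ℝ V]
    (B : V →ₗ[ℝ] V →ₗ[ℝ] ℝ) (hs : ∀ x y, B x y = B y x) (hp : ∀ x, x ≠ 0 → 0 < B x x) :
    ∃ e : V ≃ₗ[ℝ] EuclideanSpace ℝ (Fin (finrank ℝ V)), ∀ x y, ⟪e x, e y⟫ = B x y := by
  let core : InnerProductSpace.Core ℝ V :=
    { inner := fun x y => B x y
      conj_inner_symm := fun x y => by simpa using hs y x
      re_inner_nonneg := fun x => by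
        by_cases h : x = 0
        · simp [h]
        · simpa using (hp x h).le
      add_left := fun x y z => by simp
      smul_left := fun x y r => by simp
      definite := fun x hx => by
        by_contra h
        exact (hp x h).ne' hx }
  let _ : NormedAddCommGroup V := core.toNormedAddCommGroup
  let _ : InnerProductSpace ℝ V := InnerProductSpace.ofCore core.toCore
  let b := stdOrthonormalBasis ℝ V
  exact ⟨b.repr.toLinearEquiv, fun x y => b.repr.inner_map_map x y⟩

end CptLie

open CptLie
/-- Given a regular element `a` of a compact semisimple real Lie algebra `L`, there is a regular
element `b` with `L = ⁅a, L⁆ + ⁅b, L⁆`, `κ(a, b) = 0`, and the centralizers of `a` and `b`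
orthogonal. -/
theorem exists_regular_complement (L : Type*) [LieRing L] [LieAlgebra ℝ L]
    [FiniteDimensional ℝ L]
    (hneg : ∀ x : L, x ≠ 0 → killingForm ℝ L x x < 0)
    (a : L) (ha : LieAlgebra.IsRegular ℝ a) :
    ∃ b : L, LieAlgebra.IsRegular ℝ b ∧
      (∀ x : L, ∃ u v : L, x = ⁅a, u⁆ + ⁅b, v⁆) ∧
      killingForm ℝ L a b = 0 ∧
      (∀ x y : L, ⁅a, x⁆ = 0 → ⁅b, y⁆ = 0 → killingForm ℝ L x y = 0) := by
  have hsymm : ∀ x y : L, killingForm ℝ L x y = killingForm ℝ L y x := fun x y =>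
    LieModule.traceForm_comm ℝ L L x y
  have hinv : ∀ x y z : L, killingForm ℝ L ⁅x, y⁆ z = - killingForm ℝ L y ⁅x, z⁆ := by
    intro x y z
    rw [← lie_skew, map_neg, LinearMap.neg_apply]
    congr 1
    exact LieModule.traceForm_apply_lie_apply ℝ L L y x z
  obtain ⟨e, he⟩ := exists_model L (-(killingForm ℝ L))
    (fun x y => by simp [hsymm x y]) (fun x hx => by simpa using hneg x hx)
  have he' : ∀ x y, ⟪e x, e y⟫ = - killingForm ℝ L x y := by
    intro x y; rw [he]; simp
  have : LieAlgebra.IsKilling ℝ L := by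
    constructor
    rw [LieSubmodule.eq_bot_iff]
    intro x hx
    by_contra hne
    have h1 := (hneg x hne).ne
    rw [LieIdeal.mem_killingCompl] at hx
    exact h1 (hx x trivial)
  let F := EuclideanSpace ℝ (Fin (finrank ℝ L))
  let β₀ : F →ₗ[ℝ] F →ₗ[ℝ] F := LinearMap.mk₂ ℝ (fun x y => e ⁅e.symm x, e.symm y⁆)
    (by intros; simp) (by intros; simp) (by intros; simp) (by intros; simp)
  let β : F →L[ℝ] F →L[ℝ] F := LinearMap.toContinuousLinearMap
    ((LinearMap.toContinuousLinearMap : (F →ₗ[ℝ] F) ≃ₗ[ℝ] (F →L[ℝ] F)).toLinearMap ∘ₗ β₀)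
  have hβ : ∀ x y, β x y = e ⁅e.symm x, e.symm y⁆ := fun x y => rfl
  have hcpt : IsCpt β := by
    refine ⟨fun x => by simp [hβ], fun x y z => by simp [hβ, ← map_add], ?_, ?_, ?_⟩
    · intro x y z
      obtain ⟨x, rfl⟩ := e.surjective x
      obtain ⟨y, rfl⟩ := e.surjective y
      obtain ⟨z, rfl⟩ := e.surjective z
      simp only [hβ, e.symm_apply_apply, he', hinv]
    · intro x hx
      obtain ⟨x, rfl⟩ := e.surjective x
      have h0 : ∀ y : L, ⁅x, y⁆ = 0 := by
        intro y
        have := hx (e y)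
        simpa [hβ] using this
      have had : LieAlgebra.ad ℝ L x = 0 := by
        ext y; simpa using h0 y
      have : x = 0 := by
        by_contra hne
        have := hneg x hne
        rw [killingForm_apply_apply, had] at this
        simp at this
      simp [this]
    · intro D hD
      let d : L →ₗ[ℝ] L := e.symm.toLinearMap ∘ₗ (D : F →ₗ[ℝ] F) ∘ₗ e.toLinearMap
      have hd : ∀ x, d x = e.symm (D (e x)) := fun x => rfl
      let Dl : LieDerivation ℝ L L :=
        { d with
          leibniz' := by
            intro x y
            have := hD (e x) (e y)
            simp only [hβ, e.symm_apply_apply] at this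
            change d ⁅x, y⁆ = ⁅x, d y⁆ - ⁅y, d x⁆
            simp only [hd, this, map_add, e.symm_apply_apply]
            rw [← lie_skew y, sub_neg_eq_add, add_comm] }
      obtain ⟨y, hy⟩ := LieDerivation.IsKilling.exists_eq_ad Dl
      refine ⟨e y, ?_⟩
      ext1 x
      obtain ⟨x, rfl⟩ := e.surjective x
      have h1 : ⁅y, x⁆ = e.symm (D (e x)) := by
        have := congrArg (fun D : LieDerivation ℝ L L => D x) hy
        simp only [LieDerivation.ad_apply_apply] at this
        exact this
      rw [hβ, e.symm_apply_apply, e.symm_apply_apply, h1, e.apply_symm_apply]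
  have hrank : ∀ x : L, finrank ℝ (kr (β (e x))) = finrank ℝ (LieSubalgebra.engel ℝ x) := by
    intro x
    have h1 : (LieSubalgebra.engel ℝ x).toSubmodule = LinearMap.ker (LieAlgebra.ad ℝ L x) := by
      apply maxGen_eq_ker
      intro y hy
      by_contra hne
      have h2 := hneg _ hne
      simp only [LieAlgebra.ad_apply] at hy h2
      rw [hinv, hy] at h2
      simp at h2
    change _ = finrank ℝ (LieSubalgebra.engel ℝ x).toSubmodule
    rw [h1]
    symm
    have h2 : kr (β (e x)) = (LinearMap.ker (LieAlgebra.ad ℝ L x)).map e.toLinearMap := by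
      ext y
      obtain ⟨y, rfl⟩ := e.surjective y
      rw [mem_kr, hβ]
      simp
    rw [h2]
    exact (LinearEquiv.finrank_map_eq e _).symm
  obtain ⟨b, hb, horth⟩ := main_E hcpt (r := LieAlgebra.rank ℝ L) (a := e a)
    (fun y => by
      obtain ⟨y, rfl⟩ := e.surjective y
      rw [hrank]
      exact LieAlgebra.rank_le_finrank_engel ℝ y)
    (by rw [hrank]; exact (LieAlgebra.isRegular_iff_finrank_engel_eq_rank ℝ a).1 ha)
  obtain ⟨b, rfl⟩ := e.surjective b
  have hort : ∀ x y : L, ⁅a, x⁆ = 0 → ⁅b, y⁆ = 0 → killingForm ℝ L x y = 0 := by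
    intro x y hx hy
    have := horth (e x) (by simp [mem_kr, hβ, hx]) (e y) (by simp [mem_kr, hβ, hy])
    rw [he'] at this
    linarith
  refine ⟨b, ?_, ?_, hort a b (lie_self a) (lie_self b), hort⟩
  · rw [hrank] at hb
    exact (LieAlgebra.isRegular_iff_finrank_engel_eq_rank ℝ b).2 hb
  · intro x
    obtain ⟨u, v, huv⟩ := span_E hcpt horth (e x)
    refine ⟨e.symm u, e.symm v, ?_⟩
    apply e.injective
    rw [huv, hβ, hβ]
    simp
end
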